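/- arXiv:2101.01458 — 2 statements merged into one kernel-verified Lean document; each statement's English description precedes it below -/
import Mathlib

section
/- Let $G$ be an infinite countable amenable group with identity element $e$, let $\{T_k\}_{k=1}^\infty$ be an increasing sequence of nonempty finite subsets of $G$ with $\bigcup_{k=1}^\infty T_k = G$, and let $\{\epsilon_k\}_{k=1}^\infty$ be a decreasing sequence of positive numbers converging to zero. Then there exists a primely congruent sequence $\{\mathcal{T}_k\}_{k=1}^\infty$ of syndetic finite tilings of $G$ such that, denoting by $\{S_{k,i} : 1 \le i \le m_k\}$ the set of all shapes of $\mathcal{T}_k$: (1) $e \in S_{1,1} \subset S_{2,1} \subset \cdots \subset S_{k,1} \subset \cdots$ and $\bigcup_{k=1}^\infty S_{k,1} = G$; and (2) for every $k$ and every $1 \le i \le m_k$, the shape $S_{k,i}$ is $(T_k, \epsilon_k)$-invariant. -/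
open Set Filter Topology
open scoped ENNReal NNReal symmDiff

/-- Right translate `S·c = {s * c : s ∈ S}` of a subset of a group. -/
def rightTranslate {G : Type*} [Group G] (S : Set G) (c : G) : Set G := (fun s => s * c) '' S

/-- The boundary set `B(F,T) = {g ∈ G : Tg ∩ F ≠ ∅ and Tg ∩ (G \ F) ≠ ∅}`. -/
def Bset {G : Type*} [Group G] (F T : Set G) : Set G :=
  {g : G | (rightTranslate T g ∩ F).Nonempty ∧ (rightTranslate T g ∩ Fᶜ).Nonempty}

/-- `F` is `(T,ε)`-invariant: `|B(F,T)| < ε * |F|`. -/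
def IsInvariantSet {G : Type*} [Group G] (F T : Set G) (ε : ℝ) : Prop :=
  ((Bset F T).ncard : ℝ) < ε * (F.ncard : ℝ)

/-- A Følner sequence of nonempty finite subsets of `G`. -/
def IsFolnerSeq {G : Type*} [Group G] (F : ℕ → Set G) : Prop :=
  (∀ n, (F n).Finite ∧ (F n).Nonempty) ∧
    ∀ g : G, Tendsto
      (fun n => ((symmDiff (F n) ((fun x => g * x) '' (F n))).ncard : ℝ) / ((F n).ncard : ℝ))
      atTop (nhds 0)

/-- A countable discrete group is amenable if it admits a Følner sequence. -/
def AmenableGroup (G : Type*) [Group G] : Prop := ∃ F : ℕ → Set G, IsFolnerSeq F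

/-- A tiling of `G`: pairwise disjoint nonempty finite subsets covering `G`. -/
def IsTilingOf {G : Type*} [Group G] (𝒯 : Set (Set G)) : Prop :=
  (∀ T ∈ 𝒯, T.Finite ∧ T.Nonempty) ∧
    (∀ T ∈ 𝒯, ∀ T' ∈ 𝒯, T ≠ T' → Disjoint T T') ∧ ⋃₀ 𝒯 = Set.univ

/-- `𝒮` is a (finite) set of shapes for the tiling `𝒯`. -/
def IsShapeSet {G : Type*} [Group G] (𝒯 𝒮 : Set (Set G)) : Prop :=
  𝒮.Finite ∧ (∀ S ∈ 𝒮, S.Finite ∧ S.Nonempty) ∧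
    ∀ T ∈ 𝒯, ∃ S ∈ 𝒮, ∃ c : G, T = rightTranslate S c

/-- The center of a shape `S` relative to a tiling `𝒯`. -/
def center {G : Type*} [Group G] (𝒯 : Set (Set G)) (S : Set G) : Set G :=
  {c : G | rightTranslate S c ∈ 𝒯}

/-- A syndetic subset: `G = F·A` for some finite `F`. -/
def SyndeticSet {G : Type*} [Group G] (A : Set G) : Prop :=
  ∃ F : Set G, F.Finite ∧ Set.image2 (· * ·) F A = Set.univ

/-- The translation `𝒯g = {Tg : T ∈ 𝒯}` of a tiling. -/
def tilingTranslate {G : Type*} [Group G] (𝒯 : Set (Set G)) (g : G) : Set (Set G) :=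
  (fun T => rightTranslate T g) '' 𝒯

/-- The restriction `𝒯|_F = {T ∩ F : T ∈ 𝒯}`. -/
def tilingRestrict {G : Type*} [Group G] (𝒯 : Set (Set G)) (F : Set G) : Set (Set G) :=
  (fun T => T ∩ F) '' 𝒯

/-- The full `G`-shift: `(σ_g x)_h = x_{hg}`. -/
def shift {G K : Type*} [Group G] (g : G) (x : G → K) : G → K := fun h => x (h * g)

/-- A subshift: a closed shift-invariant subset of `K^G`. -/
def IsSubshift {G : Type*} (K : Type*) [Group G] [TopologicalSpace K]
    (X : Set (G → K)) : Prop :=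
  IsClosed X ∧ ∀ g : G, ∀ x ∈ X, shift g x ∈ X

/-- A weight `α : G → (0,∞)` with `α e = 1` and `∑ α < ∞`, defining the product metric. -/
def IsGoodWeight {G : Type*} [Group G] (α : G → ℝ) : Prop :=
  α 1 = 1 ∧ (∀ g, 0 < α g) ∧ Summable α

/-- The metric `ρ(x,y) = ∑_g α_g d(x_g, y_g)` on `K^G`. -/
noncomputable def rhoMetric {G K : Type*} [Group G] [PseudoMetricSpace K] (α : G → ℝ)
    (x y : G → K) : ℝ :=
  ∑' g : G, α g * dist (x g) (y g)

/-- `ρ_F(x,y) = max_{g ∈ F} ρ(gx, gy)` for finite `F ⊆ G`. -/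
noncomputable def rhoMetricF {G K : Type*} [Group G] [PseudoMetricSpace K] (α : G → ℝ)
    (F : Set G) (x y : G → K) : ℝ :=
  sSup ((fun g => rhoMetric α (shift g x) (shift g y)) '' F)

/-- `d_F(x,y) = max_{g∈F} d(gx, gy)` for an action `φ`. -/
noncomputable def dynDist {G X : Type*} [Group G] [PseudoMetricSpace X]
    (φ : G → X → X) (F : Set G) (x y : X) : ℝ :=
  sSup ((fun g => dist (φ g x) (φ g y)) '' F)

/-- An `ε`-embedding w.r.t. `ρ`: continuous, and `f x = f y → ρ x y < ε`. -/
def IsEpsEmb {X Y : Type*} [TopologicalSpace X] [TopologicalSpace Y]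
    (ρ : X → X → ℝ) (ε : ℝ) (f : X → Y) : Prop :=
  Continuous f ∧ ∀ x y, f x = f y → ρ x y < ε

/-- `Widim_ε(X,ρ) ≤ n`: there is an `ε`-embedding of `X` into (the geometric realization of)
a finite simplicial complex all of whose faces have at most `n+1` vertices. -/
def WidimLE (X : Type*) [TopologicalSpace X] (ρ : X → X → ℝ) (ε : ℝ) (n : ℕ) : Prop :=
  ∃ (N : ℕ) (P : Geometry.SimplicialComplex ℝ (Fin N → ℝ)),
    P.faces.Finite ∧ (∀ s ∈ P.faces, s.card ≤ n + 1) ∧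
      ∃ f : X → P.space, IsEpsEmb ρ ε f

/-- `Widim_ε(X,ρ)`: the minimum dimension of a polyhedron admitting an `ε`-embedding of `X`. -/
noncomputable def widim (X : Type*) [TopologicalSpace X] (ρ : X → X → ℝ) (ε : ℝ) : ℕ∞ :=
  sInf {n : ℕ∞ | ∃ m : ℕ, n = (m : ℕ∞) ∧ WidimLE X ρ ε m}

/-- Covering dimension `≤ n`: every open cover admits an open refinement of multiplicity `≤ n+1`. -/
def DimLE (X : Type*) [TopologicalSpace X] (n : ℕ) : Prop :=
  ∀ 𝒰 : Set (Set X), (∀ U ∈ 𝒰, IsOpen U) → ⋃₀ 𝒰 = Set.univ →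
    ∃ 𝒱 : Set (Set X), (∀ V ∈ 𝒱, IsOpen V) ∧ ⋃₀ 𝒱 = Set.univ ∧
      (∀ V ∈ 𝒱, ∃ U ∈ 𝒰, V ⊆ U) ∧
      ∀ x : X, ({V ∈ 𝒱 | x ∈ V}).Finite ∧ ({V ∈ 𝒱 | x ∈ V}).ncard ≤ n + 1

/-- Topological (covering) dimension, valued in `ℕ∞`. -/
noncomputable def covDim (X : Type*) [TopologicalSpace X] : ℕ∞ :=
  sInf {n : ℕ∞ | ∃ m : ℕ, n = (m : ℕ∞) ∧ DimLE X m}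

/-- Mean dimension of the action `φ` computed along the Følner sequence `F`
(as `sup_{ε>0} limsup_n Widim_ε(X, d_{F_n}) / |F_n|`). -/
noncomputable def mdimAlong {G X : Type*} [Group G] [PseudoMetricSpace X]
    (φ : G → X → X) (F : ℕ → Set G) : ℝ≥0∞ :=
  ⨆ ε : {ε : ℝ // 0 < ε}, Filter.limsup
    (fun n => ((widim X (dynDist φ (F n)) ε.1 : ℕ∞) : ℝ≥0∞) / ((F n).ncard : ℝ≥0∞)) atTop

/-- Mean dimension of a subshift `X ⊆ K^G` computed along the Følner sequence `F`,
with the metric `ρ` induced by the weight `α`. -/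
noncomputable def mdimSubshift {G K : Type*} [Group G] [PseudoMetricSpace K] (α : G → ℝ)
    (X : Set (G → K)) (F : ℕ → Set G) : ℝ≥0∞ :=
  ⨆ ε : {ε : ℝ // 0 < ε}, Filter.limsup
    (fun n => ((widim X (fun x y : X => rhoMetricF α (F n) x.1 y.1) ε.1 : ℕ∞) : ℝ≥0∞) /
      ((F n).ncard : ℝ≥0∞)) atTop

/-- The canonical projection `π_F : K^G → K^F`. -/
def projTo {G K : Type*} (F : Set G) (x : G → K) : F → K := fun g => x g.1

/-- The tripod (cone over three points), realized as the subset of `ℝ³` of points with at most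
one nonzero coordinate, each coordinate lying in `[0,1]`; the ℓ¹-distance on this set is exactly
the graph distance in which each of the three edges has length one. -/
def TripodSet : Set (Fin 3 → ℝ) :=
  {x | (∀ i, x i ∈ Set.Icc (0 : ℝ) 1) ∧ ∀ i j : Fin 3, i ≠ j → x i = 0 ∨ x j = 0}

/-- The graph distance on the tripod (= the ℓ¹-distance of the ambient `ℝ³`). -/
noncomputable def tripodDist (x y : TripodSet) : ℝ := ∑ i, |x.1 i - y.1 i|

/-- The `l^∞`-distance on `P^n` for the tripod `P`. -/
noncomputable def tripodDistInf {n : ℕ} (x y : Fin n → TripodSet) : ℝ :=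
  sSup (Set.range fun i => tripodDist (x i) (y i))

/-!
Following Ornstein and Weiss, a Følner sequence provides quasi-tilings of `G` by finitely many
highly invariant sets, up to a small error which Hall's marriage theorem distributes among the
tiles. This gives exact tilings of arbitrary invariance. Grouping the tiles of one such tiling along
the tiles of a much more invariant one gives coarser tilings refined by the given one.

The tiles can moreover be taken without nontrivial right translational symmetry. Then each tile of a
coarse shape carries unambiguous coordinates, and copying into all tiles of that shape the pattern
seen in one of them turns the refinements into fixed subdivision rules, so that congruence holds.
The towers of tilings obeying these rules form a subshift. A point of a minimal subsystem has
syndetic centers, since each shape recurs with bounded gaps; and inside this subsystem, counting and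
compactness give a tower whose tiles containing `1` exhaust `G`.
-/

open scoped Pointwise RightActions Finset

section Boundary

variable {G : Type*} [Group G] [DecidableEq G] {E E' K K' : Finset G} {δ δ' ε θ : ℝ}

theorem mem_rightSMul_iff {c x : G} : x ∈ E <• c ↔ x * c⁻¹ ∈ E := by
  rw [← Finset.inv_smul_mem_iff, ← MulOpposite.op_inv, op_smul_eq_mul]

/-- The boundary `B(E, K) = {g : Kg ∩ E ≠ ∅ and Kg ∩ (G \ E) ≠ ∅}` of a finite set, as a
`Finset`; compare `Bset`. -/
def boundary (E K : Finset G) : Finset G :=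
  {g ∈ K⁻¹ * E | ∃ k ∈ K, k * g ∉ E}

theorem mem_boundary {g : G} :
    g ∈ boundary E K ↔ (∃ k ∈ K, k * g ∈ E) ∧ ∃ k ∈ K, k * g ∉ E := by
  rw [boundary, Finset.mem_filter, and_congr_left_iff]
  refine fun _ => ⟨fun h => ?_, fun ⟨k, hk, hg⟩ => ?_⟩
  · obtain ⟨l, hl, x, hx, rfl⟩ := Finset.mem_mul.1 h
    exact ⟨l⁻¹, Finset.mem_inv'.1 hl, by simpa using hx⟩
  · simpa using Finset.mul_mem_mul (Finset.inv_mem_inv hk) hg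

theorem boundary_mono (hK : K ⊆ K') : boundary E K ⊆ boundary E K' := fun g hg => by
  obtain ⟨⟨k, hk, hin⟩, k', hk', hout⟩ := mem_boundary.1 hg
  exact mem_boundary.2 ⟨⟨k, hK hk, hin⟩, k', hK hk', hout⟩

theorem boundary_rightSMul (E K : Finset G) (c : G) :
    boundary (E <• c) K = boundary E K <• c := by
  ext g
  simp only [mem_rightSMul_iff, mem_boundary, mul_assoc]

theorem boundary_subset_boundary_union (E E' K : Finset G) :
    boundary E' K ⊆ boundary E K ∪ K⁻¹ * (E ∆ E') := by
  intro g hg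
  obtain ⟨⟨k, hk, hin⟩, k', hk', hout⟩ := mem_boundary.1 hg
  by_contra hcon
  rw [Finset.mem_union, not_or] at hcon
  have agree : ∀ j ∈ K, (j * g ∈ E ↔ j * g ∈ E') := by
    intro j hj
    by_contra hne
    have hsd : j * g ∈ E ∆ E' := by rw [Finset.mem_symmDiff]; tauto
    exact hcon.2 (by simpa using Finset.mul_mem_mul (Finset.inv_mem_inv hj) hsd)
  exact hcon.1 (mem_boundary.2 ⟨⟨k, hk, (agree k hk).2 hin⟩, k', hk', mt (agree k' hk').1 hout⟩)

theorem boundary_biUnion_subset {ι : Type*} (s : Finset ι) (E : ι → Finset G) (K : Finset G) :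
    boundary (s.biUnion E) K ⊆ s.biUnion fun i => boundary (E i) K := by
  intro g hg
  obtain ⟨⟨k, hk, hin⟩, k', hk', hout⟩ := mem_boundary.1 hg
  obtain ⟨i, hi, hin⟩ := Finset.mem_biUnion.1 hin
  exact Finset.mem_biUnion.2 ⟨i, hi, mem_boundary.2
    ⟨⟨k, hk, hin⟩, k', hk', fun h => hout (Finset.mem_biUnion.2 ⟨i, hi, h⟩)⟩⟩

theorem card_boundary_le_sum (E K : Finset G) :
    #(boundary E K) ≤ ∑ p ∈ K ×ˢ K, #(E ∆ ((p.1 * p.2⁻¹) • E)) := by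
  have hsub : boundary E K ⊆
      (K ×ˢ K).biUnion fun p => p.1⁻¹ • (E ∆ ((p.1 * p.2⁻¹) • E)) := by
    intro g hg
    obtain ⟨⟨k, hk, hin⟩, k', hk', hout⟩ := mem_boundary.1 hg
    refine Finset.mem_biUnion.2 ⟨(k, k'), Finset.mk_mem_product hk hk', ?_⟩
    rw [Finset.mem_inv_smul_finset_iff, Finset.mem_symmDiff, smul_eq_mul]
    refine Or.inl ⟨hin, fun h => hout ?_⟩
    rwa [← Finset.inv_smul_mem_iff, smul_eq_mul, mul_inv_rev, inv_inv, mul_assoc,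
      inv_mul_cancel_left] at h
  calc #(boundary E K)
      ≤ ∑ p ∈ K ×ˢ K, #(p.1⁻¹ • (E ∆ ((p.1 * p.2⁻¹) • E))) :=
        (Finset.card_le_card hsub).trans Finset.card_biUnion_le
    _ = _ := by simp only [Finset.card_smul_finset]

/-- `E` is `(K, δ)`-invariant; the version of `IsInvariantSet` for `Finset`s. -/
def Invariant (E K : Finset G) (δ : ℝ) : Prop := #(boundary E K) < δ * #E

theorem coe_boundary (E K : Finset G) : (boundary E K : Set G) = Bset (E : Set G) K := by
  ext g
  simp only [Bset, rightTranslate, Set.inter_nonempty, Set.exists_mem_image, Finset.mem_coe,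
    mem_boundary, Set.mem_ofPred_eq, Set.mem_compl_iff]

theorem isInvariantSet_coe : IsInvariantSet (E : Set G) K δ ↔ Invariant E K δ := by
  rw [IsInvariantSet, Invariant, ← coe_boundary, Set.ncard_coe_finset, Set.ncard_coe_finset]

namespace Invariant

theorem card_pos (h : Invariant E K δ) : 0 < #E := by
  rw [Nat.pos_iff_ne_zero]
  intro h0
  rw [Invariant, h0, Nat.cast_zero, mul_zero] at h
  exact h.not_ge (Nat.cast_nonneg _)

theorem mono (h : Invariant E K' δ') (hK : K ⊆ K') (hδ : δ' ≤ δ) : Invariant E K δ :=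
  calc (#(boundary E K) : ℝ) ≤ #(boundary E K') := by gcongr; exact boundary_mono hK
    _ < δ' * #E := h
    _ ≤ δ * #E := by gcongr

theorem rightSMul (h : Invariant E K δ) (c : G) : Invariant (E <• c) K δ := by
  rwa [Invariant, boundary_rightSMul, Finset.card_smul_finset, Finset.card_smul_finset]

theorem of_card_symmDiff_le (h : Invariant E K δ) (hd : (#(E ∆ E') : ℝ) ≤ θ * #E)
    (hε : 0 < ε) (hle : δ + #K * θ ≤ ε * (1 - θ)) : Invariant E' K ε := by
  have hbdry : (#(boundary E' K) : ℝ) ≤ #(boundary E K) + #K * #(E ∆ E') := by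
    have hmul : #(K⁻¹ * (E ∆ E')) ≤ #K * #(E ∆ E') := by
      simpa only [Finset.card_inv] using Finset.card_mul_le (s := K⁻¹) (t := E ∆ E')
    exact_mod_cast (Finset.card_le_card (boundary_subset_boundary_union E E' K)).trans
      ((Finset.card_union_le _ _).trans (by gcongr))
  have hcard : (1 - θ) * #E ≤ #E' := by
    have hle : #E ≤ #(E ∆ E') + #E' := Finset.card_le_card_sdiff_add_card.trans
      (by gcongr; exact le_sup_left)
    have : (#E : ℝ) ≤ #(E ∆ E') + #E' := mod_cast hle
    linarith
  calc (#(boundary E' K) : ℝ) ≤ #(boundary E K) + #K * #(E ∆ E') := hbdry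
    _ < δ * #E + #K * (θ * #E) := add_lt_add_of_lt_of_le h (by gcongr)
    _ = (δ + #K * θ) * #E := by ring
    _ ≤ ε * (1 - θ) * #E := by gcongr
    _ = ε * ((1 - θ) * #E) := by ring
    _ ≤ ε * #E' := by gcongr

theorem biUnion {ι : Type*} {s : Finset ι} {E : ι → Finset G} (hs : s.Nonempty)
    (hd : (s : Set ι).PairwiseDisjoint E) (h : ∀ i ∈ s, Invariant (E i) K δ) :
    Invariant (s.biUnion E) K δ :=
  calc (#(boundary (s.biUnion E) K) : ℝ) ≤ ∑ i ∈ s, (#(boundary (E i) K) : ℝ) := mod_cast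
        (Finset.card_le_card (boundary_biUnion_subset s E K)).trans Finset.card_biUnion_le
    _ < ∑ i ∈ s, δ * #(E i) := Finset.sum_lt_sum_of_nonempty hs h
    _ = δ * #(s.biUnion E) := by rw [Finset.card_biUnion hd, Nat.cast_sum, Finset.mul_sum]

theorem exists_rightSMul_subset (h : Invariant E K δ) (hδ : δ ≤ 1) (h1 : 1 ∈ K) :
    ∃ x ∈ E, K <• x ⊆ E := by
  have hlt : (#(boundary E K) : ℝ) < #E :=
    h.trans_le (mul_le_of_le_one_left (Nat.cast_nonneg _) hδ)
  obtain ⟨x, hx, hx'⟩ := Finset.exists_mem_notMem_of_card_lt_card (Nat.cast_lt.1 hlt)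
  refine ⟨x, hx, fun y hy => ?_⟩
  by_contra hyE
  rw [mem_rightSMul_iff] at hy
  exact hx' (mem_boundary.2 ⟨⟨1, h1, by simpa using hx⟩, _, hy, by simpa using hyE⟩)

theorem card_le_card (h : Invariant E K δ) (hδ : δ ≤ 1) (h1 : 1 ∈ K) : #K ≤ #E := by
  obtain ⟨x, -, hx⟩ := h.exists_rightSMul_subset hδ h1
  simpa only [Finset.card_smul_finset] using Finset.card_le_card hx

end Invariant

end Boundary

section AvgLE

variable {G ι : Type*} [Group G] {l : Filter ι} {F : ι → Finset G} {f f' f'' u u' : G → ℝ}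

/-- Domination on average along `F`: asymptotically in `i`, the average of `f` over each right
translate of `F i` is at most that of `f'` plus an error that tends to zero uniformly in the
translate. For indicator functions of sets along a Følner net this compares upper and lower Banach
densities. -/
def AvgLE (l : Filter ι) (F : ι → Finset G) (f f' : G → ℝ) : Prop :=
  ∀ η > (0 : ℝ), ∀ᶠ i in l, ∀ g : G,
    ∑ w ∈ F i, f (w * g) ≤ ∑ w ∈ F i, f' (w * g) + η * #(F i)

namespace AvgLE

theorem of_le (h : f ≤ f') : AvgLE l F f f' := fun η hη => Eventually.of_forall fun i g => by
  have hsum := Finset.sum_le_sum (s := F i) fun w _ => h (w * g)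
  have : 0 ≤ η * #(F i) := by positivity
  linarith

theorem trans (h : AvgLE l F f f') (h' : AvgLE l F f' f'') : AvgLE l F f f'' := fun η hη => by
  filter_upwards [h (η / 2) (by positivity), h' (η / 2) (by positivity)] with i h₁ h₂ g
  linarith [h₁ g, h₂ g]

theorem mono (h : AvgLE l F f f') (hu : u ≤ f) (hu' : f' ≤ u') : AvgLE l F u u' :=
  (of_le hu).trans (h.trans (of_le hu'))

theorem add (h : AvgLE l F f f') (h' : AvgLE l F u u') : AvgLE l F (f + u) (f' + u') :=
  fun η hη => by
    filter_upwards [h (η / 2) (by positivity), h' (η / 2) (by positivity)] with i h₁ h₂ g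
    simp only [Pi.add_apply, Finset.sum_add_distrib]
    linarith [h₁ g, h₂ g]

theorem const_smul {c : ℝ} (hc : 0 ≤ c) (h : AvgLE l F f f') : AvgLE l F (c • f) (c • f') := by
  obtain rfl | hc := hc.eq_or_lt
  · exact of_le (by simp)
  intro η hη
  filter_upwards [h (η / c) (by positivity)] with i hi g
  simp only [Pi.smul_apply, smul_eq_mul, ← Finset.mul_sum]
  calc c * ∑ w ∈ F i, f (w * g) ≤ c * (∑ w ∈ F i, f' (w * g) + η / c * #(F i)) := by
        gcongr; exact hi g
    _ = _ := by field_simp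

theorem sum {κ : Type*} (s : Finset κ) {f f' : κ → G → ℝ}
    (h : ∀ j ∈ s, AvgLE l F (f j) (f' j)) : AvgLE l F (∑ j ∈ s, f j) (∑ j ∈ s, f' j) := by
  classical
  induction s using Finset.induction_on with
  | empty => exact of_le (by simp)
  | insert j s hj ih =>
    rw [Finset.sum_insert hj, Finset.sum_insert hj]
    exact (h j (Finset.mem_insert_self _ _)).add fun η hη =>
      ih (fun j' hj' => h j' (Finset.mem_insert_of_mem hj')) η hη

end AvgLE

end AvgLE

section Folner

variable {G ι : Type*} [DecidableEq G] {l : Filter ι} {F : ι → Finset G}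

theorem exists_uniform_kernel {κ : Type*} (X : κ → Finset G) {Y : κ → Finset G}
    (hY : Pairwise fun p q => Disjoint (Y p) (Y q)) :
    ∃ M : G → G → ℝ, (∀ x y, 0 ≤ M x y) ∧ (∀ x y, M x y ≤ 1) ∧
      (∀ p x, ∀ y ∈ Y p, M x y = if x ∈ X p then (#(Y p) : ℝ)⁻¹ else 0) ∧
      ∀ x y, (∀ p, y ∉ Y p) → M x y = 0 := by
  classical
  refine ⟨fun x y => if h : ∃ p, y ∈ Y p then if x ∈ X h.choose then (#(Y h.choose) : ℝ)⁻¹ else 0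
    else 0, fun x y => ?_, fun x y => ?_, fun p x y hy => ?_, fun x y hy => ?_⟩
  · beta_reduce
    split_ifs <;> positivity
  · beta_reduce
    split_ifs
    exacts [Nat.cast_inv_le_one _, zero_le_one, zero_le_one]
  · have h : ∃ p, y ∈ Y p := ⟨p, hy⟩
    have hp : h.choose = p := not_imp_comm.1 (fun hne => hY hne)
      (Finset.not_disjoint_iff.2 ⟨y, h.choose_spec, hy⟩)
    simp only [dif_pos h, hp]
  · exact dif_neg (not_exists.2 hy)

variable [Group G]

/-- A (left) Følner net of nonempty finite sets, indexed along a filter. -/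
structure IsFolner (l : Filter ι) (F : ι → Finset G) : Prop where
  nonempty : ∀ i, (F i).Nonempty
  tendsto : ∀ g : G, Tendsto (fun i => (#(F i ∆ (g • F i)) : ℝ) / #(F i)) l (𝓝 0)

theorem AmenableGroup.exists_isFolner (hG : AmenableGroup G) :
    ∃ F : ℕ → Finset G, IsFolner atTop F := by
  obtain ⟨F, hF, hlim⟩ := hG
  refine ⟨fun n => (hF n).1.toFinset, fun n => (hF n).1.toFinset_nonempty.2 (hF n).2, fun g => ?_⟩
  refine (hlim g).congr fun n => ?_
  simp only [← Set.ncard_coe_finset, Finset.coe_symmDiff, Finset.coe_smul_finset,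
    Set.Finite.coe_toFinset]
  rfl

namespace IsFolner

theorem eventually_invariant (hF : IsFolner l F) (K : Finset G) {δ : ℝ} (hδ : 0 < δ) :
    ∀ᶠ i in l, Invariant (F i) K δ := by
  have hlim : Tendsto (fun i => ∑ p ∈ K ×ˢ K,
      (#(F i ∆ ((p.1 * p.2⁻¹) • F i)) : ℝ) / #(F i)) l (𝓝 0) := by
    simpa using tendsto_finsetSum (K ×ˢ K) fun p _ => hF.tendsto (p.1 * p.2⁻¹)
  filter_upwards [hlim.eventually_lt_const hδ] with i hi
  have hpos : (0 : ℝ) < #(F i) := mod_cast (hF.nonempty i).card_pos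
  rw [← Finset.sum_div, div_lt_iff₀ hpos] at hi
  exact lt_of_le_of_lt (mod_cast card_boundary_le_sum (F i) K) hi

theorem avgLE_comp_mul_left (hF : IsFolner l F) {f : G → ℝ} {b : ℝ} (hb : ∀ x, |f x| ≤ b) (a : G) :
    AvgLE l F f fun x => f (a * x) := by
  intro η hη
  have hb0 : 0 ≤ b := (abs_nonneg _).trans (hb 1)
  filter_upwards [(hF.tendsto a).eventually_lt_const (show 0 < η / (b + 1) by positivity)]
    with i hi g
  have hpos : (0 : ℝ) < #(F i) := mod_cast (hF.nonempty i).card_pos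
  rw [div_lt_iff₀ hpos] at hi
  have htranslate : ∑ w ∈ F i, f (a * (w * g)) = ∑ w ∈ a • F i, f (w * g) := by
    rw [← Finset.image_smul, Finset.sum_image fun x _ y _ h => smul_left_cancel a h]
    simp only [smul_eq_mul, mul_assoc]
  have hdiff : ∑ w ∈ F i, f (w * g) - ∑ w ∈ a • F i, f (w * g) ≤ #(F i ∆ (a • F i)) * b := by
    rw [← Finset.sum_sdiff_sub_sum_sdiff, symmDiff_def, Finset.sup_eq_union,
      Finset.card_union_of_disjoint disjoint_sdiff_sdiff, Nat.cast_add, add_mul, sub_eq_add_neg,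
      ← Finset.sum_neg_distrib, ← nsmul_eq_mul, ← nsmul_eq_mul]
    exact add_le_add
      (Finset.sum_le_card_nsmul _ _ _ fun w _ => (abs_le.1 (hb _)).2)
      (Finset.sum_le_card_nsmul _ _ _ fun w _ => neg_le.1 (abs_le.1 (hb _)).1)
  have hsmall : #(F i ∆ (a • F i)) * b ≤ η * #(F i) :=
    calc #(F i ∆ (a • F i)) * b ≤ η / (b + 1) * #(F i) * (b + 1) := by gcongr; linarith
      _ = η * #(F i) := by field_simp
  rw [htranslate]
  linarith

-- Mass transport: `x` sends mass `M x y` to `y = s * x` for `s ∈ L`; the mass sent by each point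
-- is compared with the mass received by each point.
theorem avgLE_transport (hF : IsFolner l F) {M : G → G → ℝ} {b : ℝ} (hb : ∀ x y, |M x y| ≤ b)
    (L : Finset G) :
    AvgLE l F (fun x => ∑ s ∈ L, M x (s * x)) (fun y => ∑ s ∈ L, M (s⁻¹ * y) y) := by
  refine (AvgLE.sum (f := fun s x => M x (s * x)) (f' := fun s y => M (s⁻¹ * y) y) L
    fun s _ => ?_).mono (fun x => by simp) (fun x => by simp)
  simpa only [mul_inv_cancel_left] using
    hF.avgLE_comp_mul_left (fun x => hb x (s * x)) s⁻¹

theorem avgLE_of_le_card_translate (hF : IsFolner l F) {A B : Set G} {S : Finset G} {a : ℝ}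
    (h : ∀ x ∈ A, ∃ H ⊆ S, a ≤ #H ∧ ∀ s ∈ H, s * x ∈ B) :
    AvgLE l F (a • A.indicator 1) ((#S : ℝ) • B.indicator 1) := by
  classical
  set M : G → G → ℝ := fun x y => if x ∈ A ∧ y ∈ B then 1 else 0
  have hM0 : ∀ x y, 0 ≤ M x y := fun x y => by positivity
  have hM1 : ∀ x y, |M x y| ≤ 1 := fun x y => by simp only [M]; split_ifs <;> simp
  refine (hF.avgLE_transport hM1 S).mono (fun x => ?_) (fun y => ?_)
  · by_cases hx : x ∈ A
    · obtain ⟨H, hHS, haH, hHB⟩ := h x hx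
      calc (a • A.indicator 1) x = a := by simp [hx]
        _ ≤ ∑ s ∈ H, 1 := by simpa using haH
        _ = ∑ s ∈ H, M x (s * x) := Finset.sum_congr rfl fun s hs => (if_pos ⟨hx, hHB s hs⟩).symm
        _ ≤ ∑ s ∈ S, M x (s * x) := Finset.sum_le_sum_of_subset_of_nonneg hHS fun _ _ _ => hM0 _ _
    · simpa [hx] using Finset.sum_nonneg fun s _ => hM0 x (s * x)
  · by_cases hy : y ∈ B
    · calc ∑ s ∈ S, M (s⁻¹ * y) y ≤ ∑ s ∈ S, 1 :=
            Finset.sum_le_sum fun s _ => (le_abs_self _).trans (hM1 _ _)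
        _ = ((#S : ℝ) • B.indicator 1) y := by simp [hy]
    · simp [M, hy]

-- Every point of `⋃ X p` spreads a unit mass uniformly over some `Y p`.
theorem avgLE_iUnion_of_card_le (hF : IsFolner l F) {κ : Type*} {X Y : κ → Finset G}
    {L : Finset G} {C : ℝ} (hC : 0 ≤ C) (hYne : ∀ p, (Y p).Nonempty)
    (hYdisj : Pairwise fun p q => Disjoint (Y p) (Y q)) (hL : ∀ p, Y p * (X p)⁻¹ ⊆ L)
    (hcard : ∀ p, #(X p) ≤ C * #(Y p)) :
    AvgLE l F ((⋃ p, X p : Set G).indicator 1) (C • (⋃ p, Y p : Set G).indicator 1) := by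
  obtain ⟨M, hM0, hM1, hM, hMout⟩ := exists_uniform_kernel X hYdisj
  have hpos : ∀ p, (0 : ℝ) < #(Y p) := fun p => mod_cast (hYne p).card_pos
  refine (hF.avgLE_transport (fun x y => (abs_of_nonneg (hM0 x y)).trans_le (hM1 x y)) L).mono
    (fun x => ?_) (fun y => ?_)
  · by_cases hx : ∃ p, x ∈ X p
    · obtain ⟨p, hp⟩ := hx
      have hsub : Y p <• x⁻¹ ⊆ L := fun s hs => hL p <| by
        rw [mem_rightSMul_iff, inv_inv] at hs
        simpa using Finset.mul_mem_mul hs (Finset.inv_mem_inv hp)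
      calc (⋃ p, X p : Set G).indicator 1 x = 1 :=
            Set.indicator_of_mem (Set.mem_iUnion.2 ⟨p, hp⟩) _
        _ = ∑ _s ∈ Y p <• x⁻¹, (#(Y p) : ℝ)⁻¹ := by
            rw [Finset.sum_const, Finset.card_smul_finset, nsmul_eq_mul,
              mul_inv_cancel₀ (hpos p).ne']
        _ = ∑ s ∈ Y p <• x⁻¹, M x (s * x) := Finset.sum_congr rfl fun _ hs => by
            rw [mem_rightSMul_iff, inv_inv] at hs
            rw [hM p x _ hs, if_pos hp]
        _ ≤ ∑ s ∈ L, M x (s * x) :=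
            Finset.sum_le_sum_of_subset_of_nonneg hsub fun _ _ _ => hM0 _ _
    · rw [Set.indicator_of_notMem (by simpa using hx)]
      exact Finset.sum_nonneg fun _ _ => hM0 _ _
  · by_cases hy : ∃ p, y ∈ Y p
    · obtain ⟨p, hp⟩ := hy
      have hinj : #{s ∈ L | s⁻¹ * y ∈ X p} ≤ #(X p) :=
        Finset.card_le_card_of_injOn (fun s => s⁻¹ * y) (fun s hs => (Finset.mem_filter.1 hs).2)
          fun s _ t _ h => by simpa using h
      calc ∑ s ∈ L, M (s⁻¹ * y) y = #{s ∈ L | s⁻¹ * y ∈ X p} * (#(Y p) : ℝ)⁻¹ := by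
            rw [Finset.sum_congr rfl fun s _ => hM p (s⁻¹ * y) y hp, ← Finset.sum_filter,
              Finset.sum_const, nsmul_eq_mul]
        _ ≤ (C * #(Y p)) * (#(Y p) : ℝ)⁻¹ := by
            gcongr
            exact (Nat.cast_le.2 hinj).trans (hcard p)
        _ = (C • (⋃ p, Y p : Set G).indicator 1) y := by
            rw [Pi.smul_apply, Set.indicator_of_mem (Set.mem_iUnion.2 ⟨p, hp⟩), Pi.one_apply,
              smul_eq_mul, mul_one, mul_inv_cancel_right₀ (hpos p).ne']
    · calc ∑ s ∈ L, M (s⁻¹ * y) y = 0 :=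
            Finset.sum_eq_zero fun s _ => hMout _ _ (not_exists.1 hy)
        _ ≤ (C • (⋃ p, Y p : Set G).indicator 1) y :=
            mul_nonneg hC (Set.indicator_nonneg (fun _ _ => zero_le_one) _)

end IsFolner

end Folner

section QuasiTiling

variable {G : Type*} [Group G] [DecidableEq G] {ε δ δ' : ℝ} {D D' E K K' : Finset G}
  {P P' : Set (Finset G × Finset G)}

/-- An Ornstein–Weiss quasi-tiling. A pair `(E, A)` in `P` consists of a `(K, δ)`-invariant
quasi-tile `E` and the part `A ⊆ E` of proportion at least `1 - ε` that it keeps once overlaps have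
been removed; the kept parts are disjoint and cover every quasi-tile, and `D` bounds the
displacements inside quasi-tiles. -/
structure IsQuasiTiling (P : Set (Finset G × Finset G)) (ε : ℝ) (D K : Finset G) (δ : ℝ) :
    Prop where
  subset : ∀ p ∈ P, p.2 ⊆ p.1
  card_le : ∀ p ∈ P, (1 - ε) * #p.1 ≤ #p.2
  pairwiseDisjoint : P.PairwiseDisjoint Prod.snd
  exists_mem : ∀ p ∈ P, ∀ x ∈ p.1, ∃ q ∈ P, x ∈ q.2
  mul_inv_subset : ∀ p ∈ P, p.1 * p.1⁻¹ ⊆ D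
  invariant : ∀ p ∈ P, Invariant p.1 K δ

/-- The set covered by a family of pairs (quasi-tile, kept part), that is, the union of the kept
parts. -/
def covered (P : Set (Finset G × Finset G)) : Set G := ⋃ p : P, p.1.2

omit [Group G] [DecidableEq G] in
theorem mem_covered {x : G} : x ∈ covered P ↔ ∃ p ∈ P, x ∈ p.2 := by
  simp [covered]

omit [DecidableEq G] in
theorem indicator_compl_le_add (A : Set G) (hEK : E ⊆ K) :
    Aᶜ.indicator (1 : G → ℝ) ≤ {c | ∀ s ∈ E, s * c ∉ A}.indicator 1 +
      {x | x ∉ A ∧ ∃ k ∈ K, k * x ∈ A}.indicator 1 := by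
  intro x
  by_cases hx : x ∈ A
  · simp [hx, Set.indicator_nonneg]
  · by_cases hfree : ∀ s ∈ E, s * x ∉ A
    · rw [Pi.add_apply, Set.indicator_of_mem hx, Set.indicator_of_mem (by exact hfree)]
      exact le_add_of_nonneg_right (Set.indicator_nonneg (fun _ _ => zero_le_one) _)
    · push Not at hfree
      obtain ⟨s, hs, hsx⟩ := hfree
      rw [Pi.add_apply, Set.indicator_of_mem hx,
        Set.indicator_of_mem (s := {x | x ∉ A ∧ ∃ k ∈ K, k * x ∈ A}) ⟨hx, s, hEK hs, hsx⟩]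
      exact le_add_of_nonneg_left (Set.indicator_nonneg (fun _ _ => zero_le_one) _)

namespace IsQuasiTiling

theorem mono (h : IsQuasiTiling P ε D K' δ') (hD : D ⊆ D') (hK : K ⊆ K') (hδ : δ' ≤ δ) :
    IsQuasiTiling P ε D' K δ where
  __ := h
  mul_inv_subset p hp := (h.mul_inv_subset p hp).trans hD
  invariant p hp := (h.invariant p hp).mono hK hδ

theorem nonempty (h : IsQuasiTiling P ε D K δ) (hε : ε < 1) {p : Finset G × Finset G}
    (hp : p ∈ P) : p.2.Nonempty := by
  have hpos : (0 : ℝ) < #p.1 := mod_cast (h.invariant p hp).card_pos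
  exact Finset.card_pos.1 <| Nat.cast_pos.1 <|
    (mul_pos (sub_pos.2 hε) hpos).trans_le (h.card_le p hp)

theorem sUnion {c : Set (Set (Finset G × Finset G))} (hc : IsChain (· ⊆ ·) c)
    (h : ∀ P ∈ c, IsQuasiTiling P ε D K δ) : IsQuasiTiling (⋃₀ c) ε D K δ where
  subset := fun p ⟨P, hP, hp⟩ => (h P hP).subset p hp
  card_le := fun p ⟨P, hP, hp⟩ => (h P hP).card_le p hp
  pairwiseDisjoint := (Set.pairwise_sUnion hc.directedOn).2 fun P hP => (h P hP).pairwiseDisjoint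
  exists_mem := fun p ⟨P, hP, hp⟩ x hx =>
    let ⟨q, hq, hxq⟩ := (h P hP).exists_mem p hp x hx
    ⟨q, ⟨P, hP, hq⟩, hxq⟩
  mul_inv_subset := fun p ⟨P, hP, hp⟩ => (h P hP).mul_inv_subset p hp
  invariant := fun p ⟨P, hP, hp⟩ => (h P hP).invariant p hp

open Classical in
theorem insert_uncovered (h : IsQuasiTiling P ε D K δ) (hE : Invariant E K δ) (hD : E * E⁻¹ ⊆ D)
    (hcard : (1 - ε) * #E ≤ #{x ∈ E | x ∉ covered P}) :
    IsQuasiTiling (insert (E, {x ∈ E | x ∉ covered P}) P) ε D K δ where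
  subset := Set.forall_mem_insert.2 ⟨Finset.filter_subset _ _, h.subset⟩
  card_le := Set.forall_mem_insert.2 ⟨hcard, h.card_le⟩
  pairwiseDisjoint := h.pairwiseDisjoint.insert fun q hq _ => Finset.disjoint_left.2 fun _ hx hxq =>
    (Finset.mem_filter.1 hx).2 (mem_covered.2 ⟨q, hq, hxq⟩)
  exists_mem := by
    refine Set.forall_mem_insert.2 ⟨fun x hx => ?_, fun p hp x hx => ?_⟩
    · by_cases hxP : x ∈ covered P
      · exact (mem_covered.1 hxP).imp fun q hq => ⟨Set.mem_insert_of_mem _ hq.1, hq.2⟩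
      · exact ⟨_, Set.mem_insert _ _, Finset.mem_filter.2 ⟨hx, hxP⟩⟩
    · exact (h.exists_mem p hp x hx).imp fun q hq => ⟨Set.mem_insert_of_mem _ hq.1, hq.2⟩
  mul_inv_subset := Set.forall_mem_insert.2 ⟨hD, h.mul_inv_subset⟩
  invariant := Set.forall_mem_insert.2 ⟨hE, h.invariant⟩

theorem exists_superset (h : IsQuasiTiling P ε D K δ) (hε : ε < 1) (hE : Invariant E K δ) :
    ∃ D' P', P ⊆ P' ∧ IsQuasiTiling P' ε D' K δ ∧
      ∀ c : G, ∃ H ⊆ E, ε * #E ≤ #H ∧ ∀ s ∈ H, s * c ∈ covered P' := by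
  classical
  obtain ⟨P', hPP', hmax⟩ := zorn_subset_nonempty {P' | IsQuasiTiling P' ε (D ∪ E * E⁻¹) K δ}
    (fun c hc hchain _ => ⟨⋃₀ c, sUnion hchain hc, fun s => Set.subset_sUnion_of_mem⟩)
    P (h.mono Finset.subset_union_left subset_rfl le_rfl)
  refine ⟨_, P', hPP', hmax.prop, fun c => ⟨{s ∈ E | s * c ∈ covered P'}, Finset.filter_subset _ _,
    ?_, fun s hs => (Finset.mem_filter.1 hs).2⟩⟩
  by_contra! hlt
  set N : Finset G := {x ∈ E <• c | x ∉ covered P'}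
  have hNcard : #N = #{s ∈ E | s * c ∉ covered P'} := by
    simp only [N, ← Finset.image_smul, MulOpposite.smul_eq_mul_unop, MulOpposite.unop_op,
      Finset.filter_image, Finset.card_image_of_injective _ (mul_left_injective c)]
  have hN : (1 - ε) * #E ≤ #N := by
    have := Finset.card_filter_add_card_filter_not (s := E) fun s => s * c ∈ covered P'
    rw [← hNcard] at this
    have : (#{s ∈ E | s * c ∈ covered P'} : ℝ) + #N = #E := mod_cast this
    linarith
  have hmem : (E <• c, N) ∈ P' := hmax.le_of_ge (hmax.prop.insert_uncovered (hE.rightSMul c)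
    (by simp [Finset.op_smul_finset_mul_eq_mul_smul_finset, Finset.subset_union_right])
    (by rwa [Finset.card_smul_finset])) (Set.subset_insert _ _) (Set.mem_insert _ _)
  obtain ⟨x, hx⟩ := hmax.prop.nonempty hε hmem
  exact (Finset.mem_filter.1 hx).2 (mem_covered.2 ⟨_, hmem, hx⟩)

variable {ι : Type*} {l : Filter ι} {F : ι → Finset G}

theorem avgLE_boundary (h : IsQuasiTiling P ε D K δ) (hF : IsFolner l F) (hε : ε ≤ 1 / 2)
    (hδ : 0 ≤ δ) (h1 : 1 ∈ K) :
    AvgLE l F ({x | x ∉ covered P ∧ ∃ k ∈ K, k * x ∈ covered P}.indicator 1)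
      (fun _ => 2 * δ) := by
  refine (hF.avgLE_iUnion_of_card_le (κ := P) (X := fun p => boundary p.1.1 K)
    (Y := fun p => p.1.2) (L := D * K) (C := 2 * δ) (by positivity)
    (fun p => h.nonempty (by linarith) p.2)
    (fun p q hpq => h.pairwiseDisjoint p.2 q.2 (Subtype.coe_ne_coe.2 hpq))
    (fun p => ?_) (fun p => ?_)).mono ?_ fun x => ?_
  · calc p.1.2 * (boundary p.1.1 K)⁻¹ ⊆ p.1.1 * (K⁻¹ * p.1.1)⁻¹ :=
          Finset.mul_subset_mul (h.subset _ p.2) (Finset.inv_subset_inv (Finset.filter_subset _ _))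
      _ = p.1.1 * p.1.1⁻¹ * K := by rw [mul_inv_rev, inv_inv, mul_assoc]
      _ ⊆ D * K := Finset.mul_subset_mul_right (h.mul_inv_subset _ p.2)
  · have hinv : (#(boundary p.1.1 K) : ℝ) ≤ δ * #p.1.1 := (h.invariant _ p.2).le
    have hkept : (1 / 2 : ℝ) * #p.1.1 ≤ #p.1.2 :=
      le_trans (by gcongr; linarith) (h.card_le _ p.2)
    calc (#(boundary p.1.1 K) : ℝ) ≤ 2 * δ * (1 / 2 * #p.1.1) := by linarith
      _ ≤ 2 * δ * #p.1.2 := by gcongr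
  · refine Set.indicator_le_indicator_of_subset ?_ fun _ => zero_le_one
    rintro x ⟨hx, k, hk, hkx⟩
    obtain ⟨p, hp, hkx⟩ := mem_covered.1 hkx
    exact Set.mem_iUnion.2 ⟨⟨p, hp⟩, Finset.mem_coe.2 <| mem_boundary.2
      ⟨⟨k, hk, h.subset p hp hkx⟩, 1, h1, fun hx1 =>
        hx (mem_covered.2 (h.exists_mem p hp x (by simpa using hx1)))⟩⟩
  · exact mul_le_of_le_one_right (by positivity)
      (Set.indicator_le_self' (f := (1 : G → ℝ)) (fun _ _ => zero_le_one) x)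

-- A window `S` either meets `covered P` (this is rare away from `covered P`, by invariance of the
-- quasi-tiles), or is free, in which case `P'` covers an `ε`-proportion of it.
theorem exists_avgLE_superset (h : IsQuasiTiling P ε D (insert 1 (K ∪ E)) δ)
    (hF : IsFolner l F) (hε₀ : 0 < ε) (hε : ε ≤ 1 / 2) (hδ : 0 ≤ δ) (hδ' : δ ≤ δ')
    (hE : Invariant E K δ') {θ : ℝ} (hP : AvgLE l F ((covered P)ᶜ.indicator 1) fun _ => θ) :
    ∃ D' P', IsQuasiTiling P' ε D' K δ' ∧
      AvgLE l F ((covered P')ᶜ.indicator 1) fun _ => (1 - ε) * θ + ε * (2 * δ) := by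
  have hPK : IsQuasiTiling P ε D K δ' :=
    h.mono subset_rfl (Finset.subset_union_left.trans (Finset.subset_insert _ _)) hδ'
  obtain ⟨D', P', hPP', hP', hpos⟩ := hPK.exists_superset (by linarith) hE
  refine ⟨D', P', hP', ?_⟩
  set U : G → ℝ := (covered P)ᶜ.indicator 1
  set free : Set G := {c | ∀ s ∈ E, s * c ∉ covered P}
  set near : Set G := {x | x ∉ covered P ∧ ∃ k ∈ insert 1 (K ∪ E), k * x ∈ covered P}
  set new : G → ℝ := (covered P' \ covered P).indicator 1
  have hnew : AvgLE l F (ε • free.indicator 1) new := by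
    have hE0 : (#E : ℝ) ≠ 0 := mod_cast hE.card_pos.ne'
    have := (hF.avgLE_of_le_card_translate (A := free) (B := covered P' \ covered P) (S := E)
      (a := ε * #E) fun c hc => (hpos c).imp fun H hH =>
        ⟨hH.1, hH.2.1, fun s hs => ⟨hH.2.2 s hs, hc s (hH.1 hs)⟩⟩).const_smul
          (c := (#E : ℝ)⁻¹) (by positivity)
    rwa [smul_smul, smul_smul, inv_mul_cancel₀ hE0, one_smul, mul_comm, mul_inv_cancel_right₀ hE0]
      at this
  have hnear : AvgLE l F (near.indicator 1) fun _ => 2 * δ :=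
    h.avgLE_boundary hF hε hδ (Finset.mem_insert_self _ _)
  have hsplit : U ≤ free.indicator 1 + near.indicator 1 := indicator_compl_le_add (covered P)
    (Finset.subset_union_right.trans (Finset.subset_insert _ _))
  have hcov : (covered P')ᶜ.indicator 1 = U - new := by
    have hsub : covered P ⊆ covered P' := fun x hx => mem_covered.2 <|
      (mem_covered.1 hx).imp fun p hp => ⟨hPP' hp.1, hp.2⟩
    simp only [U, new, Set.indicator_compl, Set.indicator_sdiff hsub]
    abel
  refine (((hP.const_smul (c := 1 - ε) (by linarith)).add ((hnear.const_smul hε₀.le).add hnew)).add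
    (.of_le (le_refl (-new)))).mono (fun x => ?_) fun x => ?_
  · have := mul_le_mul_of_nonneg_left (hsplit x) hε₀.le
    rw [hcov]
    simp only [Pi.add_apply, Pi.sub_apply, Pi.smul_apply, Pi.neg_apply, smul_eq_mul] at this ⊢
    linarith
  · simp [add_assoc]

end IsQuasiTiling

theorem IsFolner.exists_isQuasiTiling {ι : Type*} {l : Filter ι} [l.NeBot] {F : ι → Finset G}
    (hF : IsFolner l F) (hε₀ : 0 < ε) (hε : ε ≤ 1 / 2) (n : ℕ) (K : Finset G) (hδ : 0 < δ) :
    ∃ D P, IsQuasiTiling P ε D K δ ∧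
      AvgLE l F ((covered P)ᶜ.indicator 1) fun _ => (1 - ε / 2) ^ n := by
  induction n generalizing K δ with
  | zero =>
    refine ⟨∅, ∅, ⟨by simp, by simp, by simp, by simp, by simp, by simp⟩, .of_le fun x => ?_⟩
    simpa using Set.indicator_le_self' (f := (1 : G → ℝ)) (fun _ _ => zero_le_one) x
  | succ n ih =>
    obtain ⟨i, hi⟩ := (hF.eventually_invariant K hδ).exists
    set θ : ℝ := (1 - ε / 2) ^ n
    have hθ : 0 < θ := pow_pos (by linarith) n
    obtain ⟨D, P, hP, hθP⟩ := ih (insert 1 (K ∪ F i)) (lt_min hδ (show 0 < θ / 4 by positivity))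
    obtain ⟨D', P', hP', hθP'⟩ := hP.exists_avgLE_superset hF hε₀ hε (by positivity)
      (min_le_left _ _) hi hθP
    refine ⟨D', P', hP', hθP'.mono le_rfl fun _ => ?_⟩
    calc (1 - ε) * θ + ε * (2 * min δ (θ / 4)) ≤ (1 - ε) * θ + ε * (2 * (θ / 4)) := by
          gcongr; exact min_le_right _ _
      _ = (1 - ε / 2) ^ (n + 1) := by rw [pow_succ]; ring

end QuasiTiling

section TileMap

variable {G : Type*} [Group G]

/-- A tiling with uniformly bounded tiles, encoded by the map `τ` sending a point to the tile that
contains it; `D` bounds the displacements inside tiles. -/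
structure IsTileMap (τ : G → Finset G) (D : Finset G) : Prop where
  mem_self : ∀ g, g ∈ τ g
  eq_of_mem : ∀ {g h}, h ∈ τ g → τ h = τ g
  mul_inv_mem : ∀ {g h}, h ∈ τ g → h * g⁻¹ ∈ D

theorem exists_isTileMap_of_fiber {α : Type*} (f : G → α) {D : Finset G}
    (h : ∀ x y, f x = f y → x * y⁻¹ ∈ D) :
    ∃ τ, IsTileMap τ D ∧ ∀ g x, x ∈ τ g ↔ f x = f g := by
  classical
  have key : ∀ g x, x ∈ ({x ∈ D <• g | f x = f g} : Finset G) ↔ f x = f g := fun g x => by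
    rw [Finset.mem_filter, mem_rightSMul_iff]
    exact and_iff_right_of_imp (h x g)
  exact ⟨fun g => {x ∈ D <• g | f x = f g}, ⟨fun g => (key g g).2 rfl,
    fun hx => by ext y; rw [key, key, (key _ _).1 hx], fun hx => h _ _ ((key _ _).1 hx)⟩, key⟩

end TileMap

section Hall

variable {G : Type*} [Group G]

theorem sum_card_filter_mul_mem [DecidableEq G] {W Y Γ : Finset G} (h : W⁻¹ * Y ⊆ Γ) :
    ∑ g ∈ Γ, #{w ∈ W | w * g ∈ Y} = #W * #Y := by
  have hcard : ∀ w ∈ W, #{g ∈ Γ | w * g ∈ Y} = #Y := fun w hw => by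
    refine Finset.card_bij (fun g _ => w * g) (fun g hg => (Finset.mem_filter.1 hg).2)
      (fun _ _ _ _ => mul_left_cancel) fun y hy => ⟨w⁻¹ * y, ?_, mul_inv_cancel_left w y⟩
    exact Finset.mem_filter.2
      ⟨h (Finset.mul_mem_mul (Finset.inv_mem_inv hw) hy), by rwa [mul_inv_cancel_left]⟩
  calc ∑ g ∈ Γ, #{w ∈ W | w * g ∈ Y} = ∑ w ∈ W, #{g ∈ Γ | w * g ∈ Y} :=
        Finset.sum_card_bipartiteAbove_eq_sum_card_bipartiteBelow fun g w => w * g ∈ Y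
    _ = #W * #Y := by rw [Finset.sum_congr rfl hcard, Finset.sum_const, smul_eq_mul]

open Classical in
theorem exists_injOn_of_card_filter_mul_mem_le {V R : Set G} {W : Finset G} (hW : W.Nonempty)
    (h : ∀ g, #{w ∈ W | w * g ∈ V} ≤ #{w ∈ W | w * g ∈ R}) :
    ∃ f : G → G, InjOn f V ∧ ∀ x ∈ V, f x ∈ R ∧ f x * x⁻¹ ∈ W * W⁻¹ := by
  set t : V → Finset G := fun x => {y ∈ (W * W⁻¹) <• x.1 | y ∈ R}
  have hall : ∀ s : Finset V, #s ≤ #(s.biUnion t) := by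
    intro s
    set X : Finset G := s.image (↑)
    set N : Finset G := s.biUnion t
    have hwindow : ∀ g, #{w ∈ W | w * g ∈ X} ≤ #{w ∈ W | w * g ∈ N} := fun g => by
      obtain hempty | ⟨w₀, hw₀⟩ := Finset.eq_empty_or_nonempty {w ∈ W | w * g ∈ X}
      · simp [hempty]
      obtain ⟨hw₀, hx₀⟩ := Finset.mem_filter.1 hw₀
      obtain ⟨x, hxs, hx⟩ := Finset.mem_image.1 hx₀
      have hRN : ∀ w ∈ W, w * g ∈ R → w * g ∈ N := fun w hw hwR => by
        refine Finset.mem_biUnion.2 ⟨x, hxs, Finset.mem_filter.2 ⟨?_, hwR⟩⟩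
        rw [mem_rightSMul_iff, hx, mul_inv_rev, mul_assoc, mul_inv_cancel_left]
        exact Finset.mul_mem_mul hw (Finset.inv_mem_inv hw₀)
      calc #{w ∈ W | w * g ∈ X} ≤ #{w ∈ W | w * g ∈ V} :=
            Finset.card_le_card <| Finset.monotone_filter_right _ fun w _ hw => by
              obtain ⟨y, -, hy⟩ := Finset.mem_image.1 hw
              exact hy ▸ y.2
        _ ≤ #{w ∈ W | w * g ∈ R} := h g
        _ ≤ #{w ∈ W | w * g ∈ N} := Finset.card_le_card <| Finset.monotone_filter_right _ hRN
    have hsum := Finset.sum_le_sum fun g (_ : g ∈ W⁻¹ * (X ∪ N)) => hwindow g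
    rw [sum_card_filter_mul_mem (Finset.mul_subset_mul_left Finset.subset_union_left),
      sum_card_filter_mul_mem (Finset.mul_subset_mul_left Finset.subset_union_right)] at hsum
    rw [← Finset.card_image_of_injective s Subtype.val_injective]
    exact Nat.le_of_mul_le_mul_left hsum hW.card_pos
  obtain ⟨f, hf, hft⟩ := (Finset.all_card_le_biUnion_card_iff_exists_injective t).1 hall
  refine ⟨fun x => if hx : x ∈ V then f ⟨x, hx⟩ else x, fun x hx y hy hxy => ?_, fun x hx => ?_⟩
  · simp only [dif_pos hx, dif_pos hy] at hxy
    exact congrArg Subtype.val (hf hxy)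
  · obtain ⟨hmem, hR⟩ := Finset.mem_filter.1 (hft ⟨x, hx⟩)
    simp only [dif_pos hx]
    exact ⟨hR, mem_rightSMul_iff.1 hmem⟩

theorem AvgLE.exists_injOn {ι : Type*} {l : Filter ι} [l.NeBot] {F : ι → Finset G}
    (hF : ∀ i, (F i).Nonempty) {V R : Set G} {c : ℝ} (hc : 0 < c)
    (h : AvgLE l F (V.indicator 1 + fun _ => c) (R.indicator 1)) :
    ∃ (L : Finset G) (f : G → G), InjOn f V ∧ ∀ x ∈ V, f x ∈ R ∧ f x * x⁻¹ ∈ L := by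
  classical
  obtain ⟨i, hi⟩ := (h c hc).exists
  have hcount : ∀ (S : Set G) (g : G),
      ∑ w ∈ F i, S.indicator (1 : G → ℝ) (w * g) = #{w ∈ F i | w * g ∈ S} := fun S g => by
    simp only [Set.indicator_apply, Pi.one_apply, Finset.sum_boole]
  refine ⟨_, exists_injOn_of_card_filter_mul_mem_le (hF i) fun g => ?_⟩
  have := hi g
  simp only [Pi.add_apply, Finset.sum_add_distrib, hcount, Finset.sum_const, nsmul_eq_mul] at this
  rw [← Nat.cast_le (α := ℝ)]
  linarith

end Hall

section ExactTiling

variable {G : Type*} [Group G] [DecidableEq G] {ε δ : ℝ} {D K : Finset G}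
  {P : Set (Finset G × Finset G)} {ι : Type*} {l : Filter ι} {F : ι → Finset G}

omit [Group G] [DecidableEq G] in
theorem exists_subset_card_between {s : Finset G} (hε : ε ≤ 1) (hs : 1 ≤ ε * #s) :
    ∃ t ⊆ s, ε * #s ≤ #t ∧ (#t : ℝ) ≤ 2 * ε * #s := by
  obtain ⟨t, ht, hcard⟩ := Finset.exists_subset_card_eq (s := s) (n := ⌈ε * #s⌉₊)
    (Nat.ceil_le.2 (mul_le_of_le_one_left (Nat.cast_nonneg _) hε))
  refine ⟨t, ht, hcard ▸ Nat.le_ceil _, ?_⟩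
  have := Nat.ceil_lt_add_one (zero_le_one.trans hs)
  rw [hcard]
  linarith

namespace IsQuasiTiling

theorem exists_injOn_reserve (h : IsQuasiTiling P ε D K δ) [l.NeBot] (hF : IsFolner l F)
    (hε₀ : 0 < ε) (hε : ε < 1) {θ : ℝ} (hθ : (1 + ε) * θ < ε)
    (hcov : AvgLE l F ((covered P)ᶜ.indicator 1) fun _ => θ) {R : P → Finset G}
    (hR : ∀ p, R p ⊆ p.1.2) (hcard : ∀ p, ε * #p.1.2 ≤ #(R p)) :
    ∃ (L : Finset G) (f : G → G), InjOn f (covered P)ᶜ ∧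
      ∀ x ∉ covered P, f x ∈ (⋃ p, R p : Set G) ∧ f x * x⁻¹ ∈ L := by
  have hpos : ∀ p : P, (0 : ℝ) < #p.1.2 := fun p => mod_cast (h.nonempty hε p.2).card_pos
  have hreserve : AvgLE l F ((covered P).indicator 1) (ε⁻¹ • (⋃ p, R p : Set G).indicator 1) :=
    hF.avgLE_iUnion_of_card_le (L := D) (inv_nonneg.2 hε₀.le)
      (fun p => Finset.card_pos.1 <| Nat.cast_pos.1 <| (mul_pos hε₀ (hpos p)).trans_le (hcard p))
      (fun p q hpq => (h.pairwiseDisjoint p.2 q.2 (Subtype.coe_ne_coe.2 hpq)).mono (hR p) (hR q))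
      (fun p => (Finset.mul_subset_mul ((hR p).trans (h.subset _ p.2))
        (Finset.inv_subset_inv (h.subset _ p.2))).trans (h.mul_inv_subset _ p.2))
      fun p => (le_inv_mul_iff₀ hε₀).2 (hcard p)
  refine AvgLE.exists_injOn hF.nonempty (sub_pos.2 hθ)
    ((((hcov.const_smul (c := 1 + ε) (by linarith)).add (hreserve.const_smul hε₀.le)).add
      (.of_le (le_refl fun _ => -((1 + ε) * θ)))).mono (fun x => ?_) fun x => ?_)
  · by_cases hx : x ∈ covered P
    · simp [hx]
    · simpa [hx] using (by ring : 1 + (ε - (1 + ε) * θ) + (1 + ε) * θ = 1 + ε).le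
  · simp [hε₀.ne']

theorem eq_of_mem_of_mem (h : IsQuasiTiling P ε D K δ) {p q : P} {x : G} (hp : x ∈ p.1.2)
    (hq : x ∈ q.1.2) : p = q :=
  Subtype.ext (h.pairwiseDisjoint.elim_finset p.2 q.2 x hp hq)

-- Uncovered points join the kept part that contains their image under `f`.
theorem exists_assignment (h : IsQuasiTiling P ε D K δ) {L : Finset G} {f : G → G}
    (hf : ∀ x ∉ covered P, f x ∈ covered P ∧ f x * x⁻¹ ∈ L) :
    ∃ q : G → P, (∀ x ∈ covered P, x ∈ (q x).1.2) ∧ (∀ x ∉ covered P, f x ∈ (q x).1.2) ∧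
      ∀ x y, q x = q y → x * y⁻¹ ∈ (insert 1 L)⁻¹ * D * insert 1 L := by
  classical
  set r : G → G := fun x => if x ∈ covered P then x else f x
  have hr : ∀ x, ∃ p : P, r x ∈ p.1.2 := fun x => by
    have hrx : r x ∈ covered P := by by_cases hx : x ∈ covered P <;> simp [r, hx, hf]
    obtain ⟨p, hp, hxp⟩ := mem_covered.1 hrx
    exact ⟨⟨p, hp⟩, hxp⟩
  have hrL : ∀ x, r x * x⁻¹ ∈ insert 1 L := fun x => by
    by_cases hx : x ∈ covered P <;> simp [r, hx, hf]
  choose q hq using hr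
  refine ⟨q, fun x hx => by simpa [r, hx] using hq x, fun x hx => by simpa [r, hx] using hq x,
    fun x y hxy => ?_⟩
  have hmid : r x * (r y)⁻¹ ∈ D := h.mul_inv_subset _ (q y).2 <| Finset.mul_mem_mul
    (h.subset _ (q y).2 (hxy ▸ hq x)) (Finset.inv_mem_inv (h.subset _ (q y).2 (hq y)))
  simpa [mul_assoc] using Finset.mul_mem_mul
    (Finset.mul_mem_mul (Finset.inv_mem_inv (hrL x)) hmid) (hrL y)

theorem exists_isTileMap_of_injOn (h : IsQuasiTiling P ε D K δ) {R : P → Finset G}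
    (hR : ∀ p, R p ⊆ p.1.2) {L : Finset G} {f : G → G} (hinj : InjOn f (covered P)ᶜ)
    (hf : ∀ x ∉ covered P, f x ∈ (⋃ p, R p : Set G) ∧ f x * x⁻¹ ∈ L) :
    ∃ D' τ, IsTileMap τ D' ∧ ∀ g, ∃ p : P, #(p.1.1 ∆ τ g) ≤ #(p.1.1 \ p.1.2) + #(R p) := by
  classical
  have hsubR : (⋃ p, R p : Set G) ⊆ covered P := Set.iUnion_mono fun p => Finset.coe_subset.2 (hR p)
  obtain ⟨q, hcovered, hq, hD⟩ := h.exists_assignment fun x hx => (hf x hx).imp_left (hsubR ·)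
  obtain ⟨τ, hτ, hmem⟩ := exists_isTileMap_of_fiber q hD
  refine ⟨_, τ, hτ, fun g => ⟨q g, ?_⟩⟩
  have hsub : (q g).1.1 ∆ τ g ⊆ ((q g).1.1 \ (q g).1.2) ∪ {x ∈ τ g | x ∉ covered P} := by
    intro x hx
    rw [Finset.mem_union, Finset.mem_sdiff, Finset.mem_filter]
    obtain ⟨hxg, hxτ⟩ | ⟨hxτ, hxg⟩ := Finset.mem_symmDiff.1 hx
    · refine Or.inl ⟨hxg, fun hx => hxτ ((hmem g x).2 ?_)⟩
      exact h.eq_of_mem_of_mem (hcovered x (mem_covered.2 ⟨_, (q g).2, hx⟩)) hx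
    · refine Or.inr ⟨hxτ, fun hx => hxg (h.subset _ (q g).2 ?_)⟩
      exact (hmem g x).1 hxτ ▸ hcovered x hx
  have hjoin : #{x ∈ τ g | x ∉ covered P} ≤ #(R (q g)) := by
    refine Finset.card_le_card_of_injOn f (fun x hx => ?_)
      (hinj.mono fun x hx => (Finset.mem_filter.1 hx).2)
    obtain ⟨hxτ, hx⟩ := Finset.mem_filter.1 hx
    obtain ⟨p, hp⟩ := Set.mem_iUnion.1 (hf x hx).1
    have hqp : q x = p := h.eq_of_mem_of_mem (hq x hx) (hR p hp)
    rwa [← (hmem g x).1 hxτ, hqp]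
  exact (Finset.card_le_card hsub).trans ((Finset.card_union_le _ _).trans (by gcongr))

end IsQuasiTiling

namespace IsFolner

theorem exists_isTileMap_invariant [Infinite G] [l.NeBot] (hF : IsFolner l F) (K : Finset G)
    (hε : 0 < ε) : ∃ D τ, IsTileMap τ D ∧ ∀ g, Invariant (τ g) K ε := by
  wlog hε1 : ε ≤ 1 generalizing ε
  · obtain ⟨D, τ, hτ, hinv⟩ := this zero_lt_one le_rfl
    exact ⟨D, τ, hτ, fun g => (hinv g).mono subset_rfl (not_le.1 hε1).le⟩
  set e : ℝ := ε / (20 * (#K + 1))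
  have he₀ : 0 < e := by positivity
  have hKe : #K * e + e = ε / 20 := by simp only [e]; field_simp
  have he : e ≤ 1 / 20 := by linarith [show 0 ≤ #K * e by positivity]
  obtain ⟨B, hB⟩ := Infinite.exists_subset_card_eq G ⌈2 / e⌉₊
  obtain ⟨n, hn⟩ := exists_pow_lt_of_lt_one (show 0 < e / 4 by positivity)
    (show 1 - e / 2 < 1 by linarith)
  obtain ⟨D, P, hP, hcov⟩ := hF.exists_isQuasiTiling he₀ (by linarith) n (insert 1 (K ∪ B))
    (show 0 < ε / 4 by positivity)
  have hlarge : ∀ p : P, 1 ≤ e * #p.1.2 := fun p => by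
    have hBp : #B ≤ #p.1.1 :=
      (Finset.card_le_card (Finset.subset_union_right.trans (Finset.subset_insert _ _))).trans
        ((hP.invariant p p.2).card_le_card (by linarith) (Finset.mem_insert_self _ _))
    have hp : 2 ≤ e * #p.1.1 := (div_le_iff₀' he₀).1 <|
      (Nat.le_ceil _).trans (by rw [← hB]; exact_mod_cast hBp)
    nlinarith [hP.card_le p p.2]
  choose R hR hRlow hRup using fun p => exists_subset_card_between (by linarith) (hlarge p)
  obtain ⟨L, f, hinj, hf⟩ := hP.exists_injOn_reserve hF he₀ (by linarith) (by nlinarith) hcov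
    hR hRlow
  obtain ⟨D', τ, hτ, hsymm⟩ := hP.exists_isTileMap_of_injOn hR hinj hf
  refine ⟨D', τ, hτ, fun g => ?_⟩
  obtain ⟨p, hp⟩ := hsymm g
  have hinv : Invariant p.1.1 K (ε / 4) := (hP.invariant p p.2).mono
    (Finset.subset_union_left.trans (Finset.subset_insert _ _)) le_rfl
  refine hinv.of_card_symmDiff_le (θ := 3 * e) ?_ hε (by nlinarith)
  have hsdiff : (#(p.1.1 \ p.1.2) : ℝ) + #p.1.2 = #p.1.1 :=
    mod_cast Finset.card_sdiff_add_card_eq_card (hP.subset p p.2)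
  calc (#(p.1.1 ∆ τ g) : ℝ) ≤ #(p.1.1 \ p.1.2) + #(R p) := mod_cast hp
    _ ≤ e * #p.1.1 + 2 * e * #p.1.2 := add_le_add (by linarith [hP.card_le p p.2]) (hRup p)
    _ ≤ e * #p.1.1 + 2 * e * #p.1.1 := by gcongr; exact hP.subset p p.2
    _ = 3 * e * #p.1.1 := by ring

-- Replace each tile of an exact, very invariant tiling by the union of the `τ₀`-tiles whose
-- representative it contains; only its boundary is affected.
theorem exists_isTileMap_coarser [Infinite G] [l.NeBot] (hF : IsFolner l F) {τ₀ : G → Finset G}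
    {D₀ : Finset G} (h₀ : IsTileMap τ₀ D₀) (K : Finset G) (hε : 0 < ε) :
    ∃ D τ, IsTileMap τ D ∧ (∀ g, τ₀ g ⊆ τ g) ∧ ∀ g, Invariant (τ g) K ε := by
  obtain ⟨rep, hrep⟩ : ∃ rep : Finset G → G, ∀ s, s.Nonempty → rep s ∈ s := by
    choose! rep hrep using fun (s : Finset G) (hs : s.Nonempty) => hs
    exact ⟨rep, hrep⟩
  have hmem : ∀ x, rep (τ₀ x) ∈ τ₀ x := fun x => hrep _ ⟨x, h₀.mem_self x⟩
  have hdisp : ∀ x, rep (τ₀ x) * x⁻¹ ∈ D₀ := fun x => h₀.mul_inv_mem (hmem x)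
  obtain ⟨D₁, τ₁, h₁, hinv⟩ := hF.exists_isTileMap_invariant (K ∪ insert 1 D₀)
    (show 0 < ε / (1 + #K + ε) by positivity)
  obtain ⟨τ, hτ, hτmem⟩ := exists_isTileMap_of_fiber (fun x => τ₁ (rep (τ₀ x)))
    (D := D₀⁻¹ * D₁ * D₀) fun x y hxy => by
      have hmid : rep (τ₀ x) * (rep (τ₀ y))⁻¹ ∈ D₁ := h₁.mul_inv_mem (hxy ▸ h₁.mem_self _)
      simpa [mul_assoc] using Finset.mul_mem_mul
        (Finset.mul_mem_mul (Finset.inv_mem_inv (hdisp x)) hmid) (hdisp y)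
  refine ⟨_, τ, hτ, fun g x hx => (hτmem g x).2 (by rw [h₀.eq_of_mem hx]), fun g => ?_⟩
  set T := τ₁ (rep (τ₀ g))
  have hτT : ∀ x, x ∈ τ g ↔ rep (τ₀ x) ∈ T := fun x =>
    (hτmem g x).trans ⟨fun h => by rw [← show _ = T from h]; exact h₁.mem_self _, h₁.eq_of_mem⟩
  have hsub : T ∆ τ g ⊆ boundary T (K ∪ insert 1 D₀) := by
    intro x hx
    have hD : rep (τ₀ x) * x⁻¹ ∈ K ∪ insert 1 D₀ := by simp [hdisp x]
    obtain ⟨hxT, hxτ⟩ | ⟨hxτ, hxT⟩ := Finset.mem_symmDiff.1 hx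
    · exact mem_boundary.2 ⟨⟨1, by simp, by simpa using hxT⟩, _, hD, by simpa [hτT] using hxτ⟩
    · exact mem_boundary.2 ⟨⟨_, hD, by simpa [hτT] using hxτ⟩, 1, by simp, by simpa using hxT⟩
  refine ((hinv (rep (τ₀ g))).mono Finset.subset_union_left le_rfl).of_card_symmDiff_le
    (θ := ε / (1 + #K + ε)) ?_ hε (le_of_eq ?_)
  · exact (Nat.cast_le.2 (Finset.card_le_card hsub)).trans (hinv _).le
  · field_simp
    ring

end IsFolner

end ExactTiling

section BinaryCounting

variable {ι : Type*}

theorem card_le_two_pow_of_wellFounded {r : ι → ι → Prop} (hr : WellFounded r)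
    {𝒥 : Finset (Finset ι)} {I : Finset ι}
    (h : ∀ j ∉ I, (∃ i, r i j ∧ ∀ J ∈ 𝒥, (i ∈ J ↔ j ∈ J)) ∨
      ∀ J ∈ 𝒥, ∀ J' ∈ 𝒥, (j ∈ J ↔ j ∈ J')) :
    #𝒥 ≤ 2 ^ #I := by
  classical
  rw [← Finset.card_powerset]
  refine Finset.card_le_card_of_injOn (· ∩ I)
    (fun J _ => Finset.mem_powerset.2 Finset.inter_subset_right) fun J hJ J' hJ' hJJ' => ?_
  ext j
  induction j using hr.induction with
  | _ j ih =>
    by_cases hj : j ∈ I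
    · simpa [hj] using Finset.ext_iff.1 hJJ' j
    · obtain ⟨i, hij, hi⟩ | hconst := h j hj
      · rw [← hi J hJ, ← hi J' hJ', ih i hij]
      · exact hconst J hJ J' hJ'

-- For a linear order on `ι`, every coordinate is determined by those equivalent to a larger one,
-- and also by those which are not.
theorem card_mul_self_le_two_pow [Fintype ι] {𝒥 : Finset (Finset ι)}
    (h : ∀ j, (∃ i ≠ j, ∀ J ∈ 𝒥, (i ∈ J ↔ j ∈ J)) ∨ ∀ J ∈ 𝒥, ∀ J' ∈ 𝒥, (j ∈ J ↔ j ∈ J')) :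
    #𝒥 * #𝒥 ≤ 2 ^ Fintype.card ι := by
  classical
  let := IsWellOrder.linearOrder (WellOrderingRel : ι → ι → Prop)
  let I : Finset ι := {j | ∃ i > j, ∀ J ∈ 𝒥, (i ∈ J ↔ j ∈ J)}
  have hI : #𝒥 ≤ 2 ^ #I := by
    refine card_le_two_pow_of_wellFounded (wellFounded_lt (α := ι)) fun j hj => ?_
    refine (h j).imp_left fun ⟨i, hij, hi⟩ => ⟨i, ?_, hi⟩
    exact hij.lt_or_gt.resolve_right fun hlt =>
      hj (Finset.mem_filter.2 ⟨Finset.mem_univ j, i, hlt, hi⟩)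
  have hIc : #𝒥 ≤ 2 ^ #Iᶜ :=
    card_le_two_pow_of_wellFounded (wellFounded_gt (α := ι)) fun j hj =>
      Or.inl (Finset.mem_filter.1 (not_not.1 fun hjI => hj (Finset.mem_compl.2 hjI))).2
  calc #𝒥 * #𝒥 ≤ 2 ^ #I * 2 ^ #Iᶜ := Nat.mul_le_mul hI hIc
    _ = 2 ^ Fintype.card ι := by rw [← pow_add, Finset.card_add_card_compl]

end BinaryCounting

section Asymmetric

open scoped Function

variable {G : Type*} [Group G] [DecidableEq G] {E : Finset G}

/-- A finite set is asymmetric if it has trivial stabiliser under right translation; then a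
translate `E·c` determines `c`. -/
def IsAsymmetric (E : Finset G) : Prop := ∀ h : G, E <• h = E → h = 1

namespace IsAsymmetric

theorem singleton (g : G) : IsAsymmetric {g} := fun h hh => by
  simpa using hh

theorem rightSMul_injective (hE : IsAsymmetric E) : Function.Injective (E <• · : G → Finset G) :=
  fun a b hab => mul_inv_eq_one.1 <| hE _ <| by
    rw [MulOpposite.op_mul, mul_smul, MulOpposite.op_inv, inv_smul_eq_iff]
    exact hab

theorem exists_mul_notMem (hE : IsAsymmetric E) {h : G} (hh : h ≠ 1) : ∃ x ∈ E, x * h ∉ E := by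
  by_contra! hcon
  refine hh (hE h (Finset.eq_of_subset_of_card_le (fun y hy => ?_) (by simp)))
  simpa using hcon _ (mem_rightSMul_iff.1 hy)

end IsAsymmetric

variable {ι : Type*} [Fintype ι] {B : ι → Finset G} {R : Finset G}

theorem mem_union_biUnion_iff_mem {ι : Type*} {α : Type*} [DecidableEq α] {B : ι → Finset α}
    (hB : Pairwise (Disjoint on B)) {R : Finset α} (hR : ∀ i, Disjoint R (B i)) {J : Finset ι}
    {i : ι} {x : α} (hx : x ∈ B i) : x ∈ R ∪ J.biUnion B ↔ i ∈ J := by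
  rw [Finset.mem_union, Finset.mem_biUnion,
    or_iff_right fun hxR => Finset.disjoint_left.1 (hR i) hxR hx]
  refine ⟨fun ⟨j, hj, hxj⟩ => ?_, fun hi => ⟨i, hi, hx⟩⟩
  rwa [hB.eq (Finset.not_disjoint_iff.2 ⟨x, hx, hxj⟩)]

open Classical in
theorem card_filter_rightSMul_eq_mul_self_le (hB : Pairwise (Disjoint on B))
    (hBa : ∀ i, IsAsymmetric (B i)) (hR : ∀ i, Disjoint R (B i)) {h : G} (hh : h ≠ 1) :
    #{J : Finset ι | (R ∪ J.biUnion B) <• h = R ∪ J.biUnion B} *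
      #{J : Finset ι | (R ∪ J.biUnion B) <• h = R ∪ J.biUnion B} ≤ 2 ^ Fintype.card ι := by
  choose b hb hbh using fun i => (hBa i).exists_mul_notMem hh
  have hmem : ∀ J ∈ ({J | (R ∪ J.biUnion B) <• h = R ∪ J.biUnion B} : Finset (Finset ι)),
      ∀ j, b j * h ∈ R ∪ J.biUnion B ↔ j ∈ J := fun J hJ j => by
    rw [← mem_union_biUnion_iff_mem hB hR (hb j), ← (Finset.mem_filter.1 hJ).2,
      mem_rightSMul_iff, mul_inv_cancel_right, (Finset.mem_filter.1 hJ).2]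
  refine card_mul_self_le_two_pow fun j => ?_
  by_cases hj : ∃ i, b j * h ∈ B i
  · obtain ⟨i, hi⟩ := hj
    refine Or.inl ⟨i, fun hij => hbh j (hij ▸ hi), fun J hJ => ?_⟩
    rw [← hmem J hJ j, mem_union_biUnion_iff_mem hB hR hi]
  · have hjR : ∀ J : Finset ι, b j * h ∈ R ∪ J.biUnion B ↔ b j * h ∈ R := fun J => by
      rw [Finset.mem_union, Finset.mem_biUnion]
      exact or_iff_left fun ⟨i, _, hi⟩ => hj ⟨i, hi⟩
    exact Or.inr fun J hJ J' hJ' => by rw [← hmem J hJ, ← hmem J' hJ', hjR, hjR]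

open Classical in
theorem card_filter_not_isAsymmetric_le {Q : Finset G} {p : ℕ} (hp : Fintype.card ι = p + p)
    (hB : Pairwise (Disjoint on B)) (hBa : ∀ i, IsAsymmetric (B i))
    (hR : ∀ i, Disjoint R (B i)) (hRne : R.Nonempty) (hQ : R ∪ Finset.univ.biUnion B ⊆ Q) :
    #{J : Finset ι | ¬ IsAsymmetric (R ∪ J.biUnion B)} ≤ #Q * 2 ^ p := by
  obtain ⟨r, hr⟩ := hRne
  have hsub : ({J | ¬ IsAsymmetric (R ∪ J.biUnion B)} : Finset (Finset ι)) ⊆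
      ((r⁻¹ • Q).erase 1).biUnion fun h => {J | (R ∪ J.biUnion B) <• h = R ∪ J.biUnion B} := by
    intro J hJ
    obtain ⟨h, heq, hh⟩ : ∃ h : G, (R ∪ J.biUnion B) <• h = R ∪ J.biUnion B ∧ h ≠ 1 := by
      simpa [IsAsymmetric] using hJ
    have hrh : r * h ∈ R ∪ J.biUnion B := by
      rw [← heq, mem_rightSMul_iff, mul_inv_cancel_right]
      exact Finset.mem_union_left _ hr
    have hJQ : R ∪ J.biUnion B ⊆ Q :=
      (Finset.union_subset_union_right (Finset.biUnion_subset_biUnion_of_subset_left B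
        (Finset.subset_univ J))).trans hQ
    refine Finset.mem_biUnion.2 ⟨h, Finset.mem_erase.2 ⟨hh, ?_⟩, by simpa using heq⟩
    rw [Finset.mem_inv_smul_finset_iff]
    exact hJQ hrh
  calc #{J : Finset ι | ¬ IsAsymmetric (R ∪ J.biUnion B)}
      ≤ #((r⁻¹ • Q).erase 1) * 2 ^ p :=
        (Finset.card_le_card hsub).trans <| Finset.card_biUnion_le_card_mul _ _ _ fun h hh =>
          Nat.mul_self_le_mul_self_iff.1 <| by
            rw [← pow_add, ← hp]
            exact card_filter_rightSMul_eq_mul_self_le hB hBa hR (Finset.ne_of_mem_erase hh)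
    _ ≤ #Q * 2 ^ p := Nat.mul_le_mul_right _ <|
        (Finset.card_le_card (Finset.erase_subset _ _)).trans_eq (Finset.card_smul_finset _ _)

theorem sdiff_biUnion_eq_union_biUnion_compl {α : Type*} [DecidableEq α] [DecidableEq ι]
    {B : ι → Finset α} (hB : Pairwise (Disjoint on B)) {A : Finset α}
    (hBA : Finset.univ.biUnion B ⊆ A) (J : Finset ι) :
    A \ J.biUnion B = (A \ Finset.univ.biUnion B) ∪ Jᶜ.biUnion B := by
  ext x
  by_cases hx : ∃ i, x ∈ B i
  · obtain ⟨i, hi⟩ := hx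
    have hxA : x ∈ A := hBA (Finset.mem_biUnion.2 ⟨i, Finset.mem_univ i, hi⟩)
    have hxB : ∀ J : Finset ι, x ∈ J.biUnion B ↔ i ∈ J := fun J => by
      simpa using mem_union_biUnion_iff_mem hB (R := ∅) (fun _ => Finset.disjoint_empty_left _)
        (J := J) hi
    simp [hxA, hxB]
  · push Not at hx
    simp [hx]

theorem exists_isAsymmetric_sdiff_union {A₁ A₂ : Finset G} {p : ℕ}
    (hp : Fintype.card ι = p + p) (hB : Pairwise (Disjoint on B)) (hBa : ∀ i, IsAsymmetric (B i))
    (hBA : Finset.univ.biUnion B ⊂ A₁) (hd : Disjoint A₁ A₂) (hA₂ : A₂.Nonempty)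
    (hcard : 2 * #(A₁ ∪ A₂) < 2 ^ p) :
    ∃ J : Finset ι, IsAsymmetric (A₁ \ J.biUnion B) ∧ IsAsymmetric (A₂ ∪ J.biUnion B) := by
  classical
  have hBU : ∀ i, B i ⊆ Finset.univ.biUnion B := fun i =>
    Finset.subset_biUnion_of_mem B (Finset.mem_univ i)
  have hbad₁ := card_filter_not_isAsymmetric_le (R := A₁ \ Finset.univ.biUnion B) (Q := A₁ ∪ A₂)
    hp hB hBa (fun i => Finset.sdiff_disjoint.mono_right (hBU i))
    (Finset.sdiff_nonempty.2 hBA.not_subset)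
    (by rw [Finset.sdiff_union_of_subset hBA.subset]; exact Finset.subset_union_left)
  have hbad₂ := card_filter_not_isAsymmetric_le (R := A₂) (Q := A₁ ∪ A₂)
    hp hB hBa (fun i => hd.symm.mono_right ((hBU i).trans hBA.subset)) hA₂
    (by rw [Finset.union_comm]; exact Finset.union_subset_union_left hBA.subset)
  by_contra! hcon
  have hcover : (Finset.univ : Finset (Finset ι)) ⊆
      ({J | ¬ IsAsymmetric (A₁ \ Finset.univ.biUnion B ∪ J.biUnion B)} :
          Finset (Finset ι)).image compl ∪
        ({J | ¬ IsAsymmetric (A₂ ∪ J.biUnion B)} : Finset (Finset ι)) := by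
    intro J _
    by_cases hJ : IsAsymmetric (A₁ \ J.biUnion B)
    · exact Finset.mem_union_right _ (by simpa using hcon J hJ)
    · rw [sdiff_biUnion_eq_union_biUnion_compl hB hBA.subset] at hJ
      exact Finset.mem_union_left _ (Finset.mem_image.2 ⟨Jᶜ, by simpa using hJ, compl_compl J⟩)
  have hle : 2 ^ p * 2 ^ p ≤ #(A₁ ∪ A₂) * 2 ^ p + #(A₁ ∪ A₂) * 2 ^ p :=
    calc 2 ^ p * 2 ^ p = #(Finset.univ : Finset (Finset ι)) := by
          rw [Finset.card_univ, Fintype.card_finset, hp, pow_add]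
      _ ≤ _ := (Finset.card_le_card hcover).trans (Finset.card_union_le _ _)
      _ ≤ _ := add_le_add (Finset.card_image_le.trans hbad₁) hbad₂
  rw [← add_mul, ← two_mul] at hle
  exact hcard.not_ge (Nat.le_of_mul_le_mul_right hle (by positivity))

end Asymmetric

section Saturated

variable {G : Type*} [Group G] {τ τ' τ₀ : G → Finset G} {D D₀ : Finset G} {A A₁ A₂ B Q : Finset G}

/-- `A` is a union of tiles of the tiling encoded by `τ`. -/
def Saturated (τ : G → Finset G) (A : Finset G) : Prop := ∀ x ∈ A, τ x ⊆ A

omit [Group G] in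
theorem Saturated.of_subset (h : ∀ g, τ₀ g ⊆ τ g) (hA : Saturated τ A) : Saturated τ₀ A :=
  fun x hx => (h x).trans (hA x hx)

omit [Group G] in
theorem Saturated.union [DecidableEq G] (hA : Saturated τ A) (hB : Saturated τ B) :
    Saturated τ (A ∪ B) := fun x hx => (Finset.mem_union.1 hx).elim
  (fun h => (hA x h).trans Finset.subset_union_left)
  (fun h => (hB x h).trans Finset.subset_union_right)

namespace IsTileMap

theorem mem_iff (h : IsTileMap τ D) {g x : G} : x ∈ τ g ↔ τ x = τ g :=
  ⟨h.eq_of_mem, fun hx => hx ▸ h.mem_self x⟩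

theorem saturated (h : IsTileMap τ D) (g : G) : Saturated τ (τ g) :=
  fun _ hx => (h.eq_of_mem hx).subset

theorem saturated_sdiff [DecidableEq G] (h : IsTileMap τ D) (hA : Saturated τ A)
    (hB : Saturated τ B) : Saturated τ (A \ B) := fun x hx y hy => by
  rw [Finset.mem_sdiff] at hx ⊢
  exact ⟨hA x hx.1 hy, fun hyB => hx.2 (hB y hyB (h.mem_iff.2 (h.eq_of_mem hy).symm))⟩

theorem card_le (h : IsTileMap τ D) (g : G) : #(τ g) ≤ #D := by
  classical
  rw [← Finset.card_smul_finset (MulOpposite.op g) D]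
  exact Finset.card_le_card fun x hx => mem_rightSMul_iff.2 (h.mul_inv_mem hx)

theorem pairwiseDisjoint_range (h : IsTileMap τ D) : (range τ).PairwiseDisjoint id := by
  rintro _ ⟨g, rfl⟩ _ ⟨g', rfl⟩ hne
  refine Finset.disjoint_left.2 fun x hx hx' => hne ?_
  rw [← h.eq_of_mem hx, ← h.eq_of_mem hx']

variable [DecidableEq G]

theorem biUnion_image (h : IsTileMap τ D) (hA : Saturated τ A) : (A.image τ).biUnion id = A := by
  rw [Finset.image_biUnion]
  exact (Finset.biUnion_subset.2 hA).antisymm fun x hx =>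
    Finset.mem_biUnion.2 ⟨x, hx, h.mem_self x⟩

theorem saturated_biUnion (h : IsTileMap τ D) {ι : Type*} {s : Finset ι} {B : ι → Finset G}
    (hs : ∀ i ∈ s, B i ∈ range τ) : Saturated τ (s.biUnion B) := fun x hx => by
  obtain ⟨i, hi, hxi⟩ := Finset.mem_biUnion.1 hx
  obtain ⟨g, hg⟩ := hs i hi
  rw [← hg] at hxi
  exact (h.saturated g x hxi).trans (hg ▸ Finset.subset_biUnion_of_mem B hi)

theorem invariant_of_saturated (h : IsTileMap τ D) {K : Finset G} {δ : ℝ}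
    (hinv : ∀ g, Invariant (τ g) K δ) (hA : Saturated τ A) (hne : A.Nonempty) :
    Invariant A K δ := by
  rw [← h.biUnion_image hA]
  refine .biUnion (hne.image τ) (h.pairwiseDisjoint_range.subset ?_) ?_
  · simp
  · simpa using fun g _ => hinv g

theorem card_le_card_image_mul (h : IsTileMap τ D) (A : Finset G) : #A ≤ #(A.image τ) * #D := by
  calc #A ≤ #((A.image τ).biUnion id) := Finset.card_le_card fun x hx =>
        Finset.mem_biUnion.2 ⟨τ x, Finset.mem_image_of_mem τ hx, h.mem_self x⟩
    _ ≤ #(A.image τ) * #D :=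
        Finset.card_biUnion_le_card_mul _ _ _ (by simpa using fun g _ => h.card_le g)

end IsTileMap

theorem exists_subset_sum_between {α : Type*} {s : Finset α} {w : α → ℕ} {a M : ℕ}
    (hw : ∀ x ∈ s, w x ≤ M) (ha : a ≤ ∑ x ∈ s, w x) :
    ∃ t ⊆ s, a ≤ ∑ x ∈ t, w x ∧ ∑ x ∈ t, w x ≤ a + M := by
  classical
  induction s using Finset.induction_on with
  | empty => exact ⟨∅, subset_rfl, ha, by simp⟩
  | insert x s hx ih =>
    by_cases h : a ≤ ∑ x ∈ s, w x
    · obtain ⟨t, ht, hsum⟩ := ih (fun y hy => hw y (Finset.mem_insert_of_mem hy)) h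
      exact ⟨t, ht.trans (Finset.subset_insert x s), hsum⟩
    · refine ⟨insert x s, subset_rfl, ha, ?_⟩
      rw [Finset.sum_insert hx]
      have := hw x (Finset.mem_insert_self x s)
      lia

variable [DecidableEq G]

theorem IsTileMap.exists_saturated_half (h : IsTileMap τ D) (hQ : Saturated τ Q)
    (hcard : 4 * #D + 2 ≤ #Q) :
    ∃ A ⊆ Q, Saturated τ A ∧ #Q ≤ 4 * #A ∧ #Q ≤ 4 * #(Q \ A) := by
  have hrange : (Q.image τ : Set (Finset G)) ⊆ range τ := by
    simp
  have hsum : ∀ t ⊆ Q.image τ, #(t.biUnion id) = ∑ E ∈ t, #E := fun t ht =>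
    Finset.card_biUnion (h.pairwiseDisjoint_range.subset ((Finset.coe_subset.2 ht).trans hrange))
  have hQsum : #Q = ∑ E ∈ Q.image τ, #E := by rw [← hsum _ subset_rfl, h.biUnion_image hQ]
  obtain ⟨t, ht, hle, hge⟩ := exists_subset_sum_between (s := Q.image τ) (w := Finset.card)
    (a := (#Q + 1) / 2) (M := #D) (by simpa using fun g _ => h.card_le g) (by lia)
  rw [← hsum t ht] at hle hge
  have htQ : t.biUnion id ⊆ Q :=
    (Finset.biUnion_subset_biUnion_of_subset_left id ht).trans_eq (h.biUnion_image hQ)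
  refine ⟨t.biUnion id, htQ, h.saturated_biUnion fun E hE => hrange (ht hE), ?_, ?_⟩
  · lia
  · rw [Finset.card_sdiff_of_subset htQ]
    lia

theorem IsTileMap.exists_saturated_isAsymmetric (h : IsTileMap τ D)
    (ha : ∀ g, IsAsymmetric (τ g)) {p : ℕ} (hd : Disjoint A₁ A₂) (hA₁ : Saturated τ A₁)
    (hA₂ : A₂.Nonempty) (hcard : 2 * p * #D < #A₁) (hp : 2 * #(A₁ ∪ A₂) < 2 ^ p) :
    ∃ V ⊆ A₁, Saturated τ V ∧ #V ≤ 2 * p * #D ∧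
      IsAsymmetric (A₁ \ V) ∧ IsAsymmetric (A₂ ∪ V) := by
  obtain ⟨s, hs, hsc⟩ : ∃ s ⊆ A₁.image τ, #s = p + p := by
    refine Finset.exists_subset_card_eq (le_of_lt ?_)
    rw [← two_mul]
    exact lt_of_mul_lt_mul_right' (hcard.trans_le (h.card_le_card_image_mul A₁))
  have hrange : (s : Set (Finset G)) ⊆ range τ :=
    (Finset.coe_subset.2 hs).trans (by simp)
  have hsA : s.biUnion id ⊆ A₁ :=
    (Finset.biUnion_subset_biUnion_of_subset_left id hs).trans_eq (h.biUnion_image hA₁)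
  have hscard : #(s.biUnion id) ≤ 2 * p * #D := by
    rw [two_mul, ← hsc]
    refine Finset.card_biUnion_le_card_mul _ _ _ fun E hE => ?_
    obtain ⟨g, rfl⟩ := hrange hE
    exact h.card_le g
  let B : s → Finset G := Subtype.val
  have hB : Pairwise (Function.onFun Disjoint B) := fun E E' hne =>
    h.pairwiseDisjoint_range (hrange E.2) (hrange E'.2) (Subtype.coe_injective.ne hne)
  have hsub : ∀ J : Finset s, J.biUnion B ⊆ s.biUnion id := fun J =>
    Finset.biUnion_subset.2 fun E _ => Finset.subset_biUnion_of_mem id E.2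
  have hcardJ : ∀ J : Finset s, #(J.biUnion B) ≤ 2 * p * #D := fun J =>
    (Finset.card_le_card (hsub J)).trans hscard
  obtain ⟨J, hJ₁, hJ₂⟩ := exists_isAsymmetric_sdiff_union (by simpa using hsc) hB
    (fun E => (hrange E.2).elim fun g hg => show IsAsymmetric E.1 from hg ▸ ha g)
    (((hsub _).trans hsA).ssubset_of_ne fun heq => (hcardJ Finset.univ).not_gt (heq ▸ hcard))
    hd hA₂ hp
  exact ⟨J.biUnion B, (hsub J).trans hsA, h.saturated_biUnion fun E _ => hrange E.2, hcardJ J,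
    hJ₁, hJ₂⟩

theorem IsTileMap.exists_split (h : IsTileMap τ D) {p : Finset G → Prop}
    (hp : ∀ g, ∃ P ⊆ τ g, p P ∧ p (τ g \ P)) :
    ∃ τ', IsTileMap τ' D ∧ ∀ g, p (τ' g) := by
  have hp' : ∀ Q ∈ range τ, ∃ P ⊆ Q, p P ∧ p (Q \ P) := forall_mem_range.2 hp
  choose! P hPQ hP hP' using hp'
  obtain ⟨τ', hτ', hmem⟩ := exists_isTileMap_of_fiber (fun x => (τ x, x ∈ P (τ x)))
    fun x y hxy => h.mul_inv_mem (h.mem_iff.2 (congrArg Prod.fst hxy))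
  refine ⟨τ', hτ', fun g => ?_⟩
  have hmem_iff : ∀ x, x ∈ τ' g ↔ x ∈ τ g ∧ (x ∈ P (τ g) ↔ g ∈ P (τ g)) := fun x => by
    rw [hmem, Prod.mk_inj, h.mem_iff]
    exact and_congr_right fun hx => by rw [hx, eq_iff_iff]
  by_cases hg : g ∈ P (τ g)
  · convert hP (τ g) ⟨g, rfl⟩ using 1
    ext x
    simpa [hmem_iff, hg] using fun hx => hPQ _ ⟨g, rfl⟩ hx
  · convert hP' (τ g) ⟨g, rfl⟩ using 1
    ext x
    simp [hmem_iff, hg]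

end Saturated

section AsymmetricTiling

theorem eventually_mul_lt_two_pow_div {C : ℕ} (hC : C ≠ 0) (a : ℕ) :
    ∀ᶠ N : ℕ in atTop, a * N < 2 ^ (N / C) := by
  have hpow : ∀ᶠ p : ℕ in atTop, (p : ℝ) ^ 1 / 2 ^ p < 1 / (2 * (a * C) + 1) :=
    (tendsto_pow_const_div_const_pow_of_one_lt 1 one_lt_two).eventually_lt_const (by positivity)
  filter_upwards [(Nat.tendsto_div_const_atTop hC).eventually hpow,
    (Nat.tendsto_div_const_atTop hC).eventually_ge_atTop 1] with N hN hN1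
  rw [pow_one, div_lt_div_iff₀ (by positivity) (by positivity), one_mul] at hN
  have hlt : N / C * (2 * (a * C) + 1) < 2 ^ (N / C) := mod_cast hN
  calc a * N ≤ a * (C * (N / C + 1)) := by
        gcongr
        exact (Nat.lt_mul_div_succ N (Nat.pos_of_ne_zero hC)).le
    _ = a * C * (N / C) + a * C := by ring
    _ ≤ a * C * (N / C) + a * C * (N / C) + N / C := by
        have := Nat.mul_le_mul_left (a * C) hN1
        lia
    _ = N / C * (2 * (a * C) + 1) := by ring
    _ < 2 ^ (N / C) := hlt

variable {G : Type*} [Group G] [DecidableEq G] {τ₀ : G → Finset G} {D₀ : Finset G}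

theorem IsTileMap.eventually_exists_isAsymmetric (h₀ : IsTileMap τ₀ D₀)
    (ha : ∀ g, IsAsymmetric (τ₀ g)) {θ : ℝ} (hθ : 0 < θ) (hθ1 : θ < 1) :
    ∀ᶠ N : ℕ in atTop, ∀ A₁ A₂ : Finset G, Disjoint A₁ A₂ → Saturated τ₀ A₁ → N ≤ 4 * #A₁ →
      N ≤ 4 * #A₂ → #(A₁ ∪ A₂) = N → ∃ V ⊆ A₁, Saturated τ₀ V ∧ (#V : ℝ) ≤ θ * #A₁ ∧
        (#V : ℝ) ≤ θ * #A₂ ∧ IsAsymmetric (A₁ \ V) ∧ IsAsymmetric (A₂ ∪ V) := by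
  obtain ⟨C, hC⟩ := exists_nat_gt (8 * #D₀ / θ)
  rw [div_lt_iff₀ hθ] at hC
  have hC0 : C ≠ 0 := by
    rintro rfl
    rw [Nat.cast_zero, zero_mul] at hC
    exact hC.not_ge (by positivity)
  filter_upwards [eventually_mul_lt_two_pow_div hC0 2, eventually_gt_atTop 0] with N hN hN0
    A₁ A₂ hd hA₁ hcard₁ hcard₂ hNcard
  have hsmall : ∀ A : Finset G, N ≤ 4 * #A → ((2 * (N / C) * #D₀ : ℕ) : ℝ) ≤ θ * #A := by
    intro A hA
    have hdiv : ((N / C : ℕ) : ℝ) * C ≤ N := mod_cast Nat.div_mul_le_self N C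
    calc ((2 * (N / C) * #D₀ : ℕ) : ℝ) = (N / C : ℕ) * (8 * #D₀) / 4 := by push_cast; ring
      _ ≤ (N / C : ℕ) * (C * θ) / 4 := by gcongr
      _ = ((N / C : ℕ) * C) * θ / 4 := by ring
      _ ≤ (4 * #A) * θ / 4 := by
          gcongr ?_ * _ / _
          exact hdiv.trans (mod_cast hA)
      _ = θ * #A := by ring
  have hlt : 2 * (N / C) * #D₀ < #A₁ := by
    have hpos : (0 : ℝ) < #A₁ := by norm_cast; lia
    exact_mod_cast (hsmall A₁ hcard₁).trans_lt (mul_lt_of_lt_one_left hpos hθ1)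
  obtain ⟨V, hV, hVsat, hVcard, hV₁, hV₂⟩ := h₀.exists_saturated_isAsymmetric ha hd hA₁
    (Finset.card_pos.1 (by lia)) hlt (hNcard ▸ hN)
  exact ⟨V, hV, hVsat, (Nat.cast_le.2 hVcard).trans (hsmall A₁ hcard₁),
    (Nat.cast_le.2 hVcard).trans (hsmall A₂ hcard₂), hV₁, hV₂⟩

theorem IsTileMap.eventually_exists_split {τ : G → Finset G} {D : Finset G} (h : IsTileMap τ D)
    (h₀ : IsTileMap τ₀ D₀) (hle : ∀ g, τ₀ g ⊆ τ g) (ha : ∀ g, IsAsymmetric (τ₀ g)) {K : Finset G}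
    {ε : ℝ} (hε : 0 < ε) (hinv : ∀ g, Invariant (τ g) K (ε / (1 + #K + ε))) :
    ∀ᶠ N : ℕ in atTop, ∀ Q : Finset G, #Q = N → Saturated τ Q →
      ∃ P ⊆ Q, (Saturated τ₀ P ∧ Invariant P K ε ∧ IsAsymmetric P) ∧
        (Saturated τ₀ (Q \ P) ∧ Invariant (Q \ P) K ε ∧ IsAsymmetric (Q \ P)) := by
  set θ := ε / (1 + #K + ε) with hθ
  have hθ0 : 0 < θ := by positivity
  have hθ1 : θ < 1 := by
    rw [hθ, div_lt_one (by positivity)]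
    linarith [show (0 : ℝ) ≤ #K from Nat.cast_nonneg _]
  have hθε : θ + #K * θ ≤ ε * (1 - θ) := by
    rw [hθ]
    field_simp
    linarith
  filter_upwards [h₀.eventually_exists_isAsymmetric ha hθ0 hθ1,
    eventually_ge_atTop (4 * #D + 2)] with N hN hNcard Q hQN hQ
  obtain ⟨A, hAQ, hA, hcard₁, hcard₂⟩ := h.exists_saturated_half hQ (hQN ▸ hNcard)
  have hA' : Saturated τ (Q \ A) := h.saturated_sdiff hQ hA
  obtain ⟨V, hVA, hV, hVcard₁, hVcard₂, hV₁, hV₂⟩ := hN A (Q \ A) Finset.disjoint_sdiff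
    (hA.of_subset hle) (hQN ▸ hcard₁) (hQN ▸ hcard₂)
    (by rw [Finset.union_sdiff_of_subset hAQ, hQN])
  have hcompl : Q \ (A \ V) = Q \ A ∪ V := by
    rw [sdiff_sdiff_eq_sdiff_sup (hVA.trans hAQ)]
    rfl
  have hinvA : Invariant A K θ := h.invariant_of_saturated hinv hA (Finset.card_pos.1 (by lia))
  have hinvA' : Invariant (Q \ A) K θ :=
    h.invariant_of_saturated hinv hA' (Finset.card_pos.1 (by lia))
  refine ⟨A \ V, Finset.sdiff_subset.trans hAQ, ⟨?_, ?_, hV₁⟩, ?_⟩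
  · exact h₀.saturated_sdiff (hA.of_subset hle) hV
  · refine hinvA.of_card_symmDiff_le ?_ hε hθε
    rwa [symmDiff_of_ge (show A \ V ≤ A from Finset.sdiff_subset),
      Finset.sdiff_sdiff_eq_self hVA]
  · rw [hcompl]
    refine ⟨(hA'.of_subset hle).union hV, hinvA'.of_card_symmDiff_le ?_ hε hθε, hV₂⟩
    rw [symmDiff_of_le (show Q \ A ≤ Q \ A ∪ V from Finset.subset_union_left)]
    refine (Nat.cast_le.2 (Finset.card_le_card ?_)).trans hVcard₂
    simp

variable {ι : Type*} {l : Filter ι} {F : ι → Finset G}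

theorem IsFolner.exists_isTileMap_asymmetric [Infinite G] [l.NeBot] (hF : IsFolner l F)
    (h₀ : IsTileMap τ₀ D₀) (ha : ∀ g, IsAsymmetric (τ₀ g)) (K : Finset G) {ε : ℝ} (hε : 0 < ε) :
    ∃ D τ, IsTileMap τ D ∧ (∀ g, τ₀ g ⊆ τ g) ∧ ∀ g, Invariant (τ g) K ε ∧ IsAsymmetric (τ g) := by
  obtain ⟨D₁, τ₁, h₁, hle₁, hinv₁⟩ := hF.exists_isTileMap_coarser h₀ K
    (show 0 < ε / (1 + #K + ε) by positivity)
  obtain ⟨N, hN⟩ := eventually_atTop.1 (h₁.eventually_exists_split h₀ hle₁ ha hε hinv₁)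
  obtain ⟨L, hL⟩ := Infinite.exists_subset_card_eq G N
  obtain ⟨D, τ₂, h₂, hle₂, hinv₂⟩ := hF.exists_isTileMap_coarser h₁ (insert 1 L) one_pos
  have hcard : ∀ g, N ≤ #(τ₂ g) := fun g =>
    (hL ▸ Finset.card_le_card (Finset.subset_insert 1 L)).trans
      ((hinv₂ g).card_le_card le_rfl (Finset.mem_insert_self 1 L))
  obtain ⟨τ, hτ, hgood⟩ := h₂.exists_split fun g =>
    hN _ (hcard g) (τ₂ g) rfl ((h₂.saturated g).of_subset hle₂)
  exact ⟨D, τ, hτ, fun g => (hgood g).1 g (hτ.mem_self g), fun g => (hgood g).2⟩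

theorem IsFolner.exists_seq_isTileMap_asymmetric [Infinite G] [l.NeBot] (hF : IsFolner l F)
    (K : ℕ → Finset G) {ε : ℕ → ℝ} (hε : ∀ k, 0 < ε k) :
    ∃ (D : ℕ → Finset G) (τ : ℕ → G → Finset G), (∀ k, IsTileMap (τ k) (D k)) ∧
      (∀ k g, IsAsymmetric (τ k g)) ∧ (∀ k g, Invariant (τ k g) (K k) (ε k)) ∧
      ∀ k g, τ k g ⊆ τ (k + 1) g := by
  let X := {q : Finset G × (G → Finset G) // IsTileMap q.2 q.1 ∧ ∀ g, IsAsymmetric (q.2 g)}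
  have hstep : ∀ (k : ℕ) (q : X), ∃ q' : X, (∀ g, Invariant (q'.1.2 g) (K k) (ε k)) ∧
      ∀ g, q.1.2 g ⊆ q'.1.2 g := fun k ⟨⟨D, τ⟩, hτ, ha⟩ => by
    obtain ⟨D', τ', hτ', hle, hgood⟩ := hF.exists_isTileMap_asymmetric hτ ha (K k) (hε k)
    exact ⟨⟨(D', τ'), hτ', fun g => (hgood g).2⟩, fun g => (hgood g).1, hle⟩
  choose next hinv hle using hstep
  let q₀ : X := ⟨({1}, fun g => {g}), ⟨by simp, by simp, by simp⟩, .singleton⟩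
  let q : ℕ → X := fun k => Nat.rec q₀ next k
  exact ⟨fun k => (q (k + 1)).1.1, fun k => (q (k + 1)).1.2, fun k => (q (k + 1)).2.1,
    fun k => (q (k + 1)).2.2, fun k => hinv k (q k), fun k => hle (k + 1) (q (k + 1))⟩

end AsymmetricTiling

section Pointed

variable {G : Type*} [Group G] [DecidableEq G] {τ τ' : G → Finset G} {D D' : Finset G}
  {𝒮 𝒮' : Set (Finset G)} {π : Finset G → Finset G} {y : G → Finset G}

/-- The pointed shapes of the tiling encoded by `τ`: its tiles, each translated so that one of its
points moves to `1`. -/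
def pointedShapes (τ : G → Finset G) : Set (Finset G) := range fun g => τ g <• g⁻¹

/-- A map `π` subdividing each shape `S ∈ 𝒮'`, pointed at `1`, in an equivariant way: `π S ∈ 𝒮` is
the piece of `S` containing `1`, and `π (S <• d⁻¹) <• d` is the piece containing `d ∈ S`. -/
structure IsSubdivision (𝒮 𝒮' : Set (Finset G)) (π : Finset G → Finset G) : Prop where
  mem : ∀ S ∈ 𝒮', π S ∈ 𝒮
  one_mem : ∀ S ∈ 𝒮', 1 ∈ π S
  subset : ∀ S ∈ 𝒮', π S ⊆ S
  rightSMul : ∀ S ∈ 𝒮', ∀ d ∈ π S, π (S <• d⁻¹) = π S <• d⁻¹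

/-- A tiling with pointed shapes in `𝒮`, encoded by the map `y` sending `g` to the tile of `g`
translated so that `g` moves to `1`. In this encoding the group acts on tilings by `shift`. -/
structure IsPointedTiling (𝒮 : Set (Finset G)) (y : G → Finset G) : Prop where
  mem : ∀ g, y g ∈ 𝒮
  one_mem : ∀ g, 1 ∈ y g
  rightSMul : ∀ g, ∀ d ∈ y g, y (d * g) = y g <• d⁻¹

theorem rightSMul_rightSMul (E : Finset G) (a b : G) : (E <• a) <• b = E <• (a * b) := by
  rw [smul_smul, ← MulOpposite.op_mul]

theorem rightSMul_inv_rightSMul (E : Finset G) (a : G) : (E <• a⁻¹) <• a = E := by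
  rw [rightSMul_rightSMul, inv_mul_cancel, MulOpposite.op_one, one_smul]

theorem IsTileMap.isPointedTiling (h : IsTileMap τ D) :
    IsPointedTiling (pointedShapes τ) fun g => τ g <• g⁻¹ where
  mem := mem_range_self
  one_mem g := mem_rightSMul_iff.2 (by simpa using h.mem_self g)
  rightSMul g d hd := by
    rw [mem_rightSMul_iff, inv_inv] at hd
    rw [h.eq_of_mem hd, rightSMul_rightSMul, mul_inv_rev]

theorem IsTileMap.one_mem_of_mem_pointedShapes (h : IsTileMap τ D) {S : Finset G}
    (hS : S ∈ pointedShapes τ) : 1 ∈ S :=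
  hS.elim fun g hg => hg ▸ h.isPointedTiling.one_mem g

theorem IsTileMap.finite_pointedShapes (h : IsTileMap τ D) : (pointedShapes τ).Finite := by
  refine D.powerset.finite_toSet.subset (range_subset_iff.2 fun g => ?_)
  refine Finset.mem_coe.2 (Finset.mem_powerset.2 fun x hx => ?_)
  rw [mem_rightSMul_iff, inv_inv] at hx
  simpa using h.mul_inv_mem hx

theorem IsPointedTiling.isTileMap (h : IsPointedTiling 𝒮 y) (hfin : 𝒮.Finite) :
    ∃ D, IsTileMap (fun g => y g <• g) D := by
  refine ⟨hfin.toFinset.biUnion id, fun g => mem_rightSMul_iff.2 (by simpa using h.one_mem g),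
    fun {g x} hx => ?_, fun {g x} hx => Finset.mem_biUnion.2
      ⟨y g, hfin.mem_toFinset.2 (h.mem g), mem_rightSMul_iff.1 hx⟩⟩
  have hmove := h.rightSMul g _ (mem_rightSMul_iff.1 hx)
  rw [inv_mul_cancel_right] at hmove
  rw [hmove, rightSMul_rightSMul]
  group

theorem IsPointedTiling.shift (h : IsPointedTiling 𝒮 y) (g : G) :
    IsPointedTiling 𝒮 (shift g y) where
  mem _ := h.mem _
  one_mem _ := h.one_mem _
  rightSMul x d hd := by simpa only [_root_.shift, mul_assoc] using h.rightSMul (x * g) d hd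

theorem IsSubdivision.isPointedTiling (hπ : IsSubdivision 𝒮 𝒮' π) (h : IsPointedTiling 𝒮' y) :
    IsPointedTiling 𝒮 fun g => π (y g) where
  mem g := hπ.mem _ (h.mem g)
  one_mem g := hπ.one_mem _ (h.mem g)
  rightSMul g d hd := by
    rw [h.rightSMul g d (hπ.subset _ (h.mem g) hd), hπ.rightSMul _ (h.mem g) d hd]

/- Each translation class of tiles of `τ'` is subdivided by copying what `τ` does on one chosen
representative; asymmetry makes the translation onto the representative unique, whence
equivariance. -/
theorem IsTileMap.exists_isSubdivision (h : IsTileMap τ D) (h' : IsTileMap τ' D')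
    (ha : ∀ g, IsAsymmetric (τ' g)) (hle : ∀ g, τ g ⊆ τ' g) :
    ∃ π, IsSubdivision (pointedShapes τ) (pointedShapes τ') π := by
  choose! r hr using fun (O : Set (Finset G)) (hO : ∃ g, τ' g ∈ O) => hO
  have hc : ∀ S ∈ pointedShapes τ', ∃ c : G, S = τ' (r (MulAction.orbit Gᵐᵒᵖ S)) <• c⁻¹ := by
    rintro _ ⟨g, rfl⟩
    obtain ⟨c, hc⟩ := hr (MulAction.orbit Gᵐᵒᵖ (τ' g <• g⁻¹))
      ⟨g, MulOpposite.op g, rightSMul_inv_rightSMul (τ' g) g⟩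
    refine ⟨c.unop, ?_⟩
    rw [← hc]
    simp
  choose! c hc using hc
  have hsubset : ∀ S ∈ pointedShapes τ', τ (c S) <• (c S)⁻¹ ⊆ S := fun S hS => by
    have hcS : c S ∈ τ' (r (MulAction.orbit Gᵐᵒᵖ S)) := by
      have h1 := h'.one_mem_of_mem_pointedShapes hS
      rw [hc S hS, mem_rightSMul_iff, inv_inv, one_mul] at h1
      exact h1
    conv_rhs => rw [hc S hS, ← h'.eq_of_mem hcS]
    exact Finset.smul_finset_subset_smul_finset (hle _)
  refine ⟨fun S => τ (c S) <• (c S)⁻¹, fun S _ => ⟨c S, rfl⟩,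
    fun S _ => h.isPointedTiling.one_mem (c S), hsubset, fun S hS d hd => ?_⟩
  have hS' : S <• d⁻¹ ∈ pointedShapes τ' := by
    have hdS := hsubset S hS hd
    obtain ⟨g, rfl⟩ := hS
    exact ⟨d * g, h'.isPointedTiling.rightSMul g d hdS⟩
  have hcd : c (S <• d⁻¹) = d * c S := by
    have hmove := hc _ hS'
    rw [MulAction.orbit_smul] at hmove
    conv_lhs at hmove => rw [hc S hS, rightSMul_rightSMul]
    rw [← inv_inj, ← (ha _).rightSMul_injective hmove, mul_inv_rev]
  have := h.isPointedTiling.rightSMul (c S) d hd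
  rwa [← hcd] at this

end Pointed

section Subshift

variable {G K : Type*} [Group G] [TopologicalSpace K] {X Y : Set (G → K)}

theorem continuous_shift (g : G) : Continuous (shift g : (G → K) → G → K) :=
  continuous_pi fun h => continuous_apply (h * g)

omit [TopologicalSpace K] in
theorem one_shift (x : G → K) : shift 1 x = x := funext fun a => congrArg x (mul_one a)

omit [TopologicalSpace K] in
theorem shift_shift (g h : G) (x : G → K) : shift g (shift h x) = shift (g * h) x :=
  funext fun a => congrArg x (mul_assoc a g h)

theorem IsSubshift.exists_minimal (hX : IsSubshift K X) (hc : IsCompact X) (hne : X.Nonempty) :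
    ∃ Y, Minimal (fun Y => IsSubshift K Y ∧ Y.Nonempty ∧ Y ⊆ X) Y := by
  refine zorn_superset {Y | IsSubshift K Y ∧ Y.Nonempty ∧ Y ⊆ X} fun c hcX hchain => ?_
  rcases c.eq_empty_or_nonempty with rfl | hcne
  · exact ⟨X, ⟨hX, hne, subset_rfl⟩, by simp⟩
  have : Nonempty c := hcne.to_subtype
  refine ⟨⋂₀ c, ⟨⟨isClosed_sInter fun Y hY => (hcX hY).1.1, fun g x hx Y hY =>
    (hcX hY).1.2 g x (hx Y hY)⟩, ?_, (sInter_subset_of_mem hcne.some_mem).trans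
      (hcX hcne.some_mem).2.2⟩, fun Y hY => sInter_subset_of_mem hY⟩
  exact IsCompact.nonempty_sInter_of_directed_nonempty_isCompact_isClosed
    (show IsChain (· ⊇ ·) c from hchain.symm).directedOn (fun Y hY => (hcX hY).2.1)
    (fun Y hY => hc.of_isClosed_subset (hcX hY).1.1 (hcX hY).2.2) fun Y hY => (hcX hY).1.1

theorem syndeticSet_of_minimal (hY : Minimal (fun Y => IsSubshift K Y ∧ Y.Nonempty ∧ Y ⊆ X) Y)
    (hc : IsCompact Y) {x : G → K} (hx : x ∈ Y) {U : Set (G → K)} (hU : IsOpen U)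
    (hYU : (Y ∩ U).Nonempty) : SyndeticSet {g | shift g x ∈ U} := by
  obtain ⟨⟨hclosed, hshift⟩, -, hYX⟩ := hY.prop
  have hcover : Y ⊆ ⋃ g, shift g ⁻¹' U := by
    by_contra hcon
    obtain ⟨z, hz, hzU⟩ := not_subset.1 hcon
    have hsub : IsSubshift K (Y ∩ ⋂ g, (shift g ⁻¹' U)ᶜ) := by
      refine ⟨hclosed.inter (isClosed_iInter fun g =>
        (hU.preimage (continuous_shift g)).isClosed_compl), fun g y hy => ⟨hshift g y hy.1, ?_⟩⟩
      refine mem_iInter.2 fun h => ?_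
      rw [mem_compl_iff, mem_preimage, shift_shift]
      exact mem_iInter.1 hy.2 (h * g)
    rw [← mem_compl_iff, compl_iUnion] at hzU
    obtain ⟨y, hy, hyU⟩ := hYU
    have hle := hY.le_of_le ⟨hsub, ⟨z, hz, hzU⟩, inter_subset_left.trans hYX⟩ inter_subset_left
    exact mem_iInter.1 (hle hy).2 1 (by rwa [mem_preimage, one_shift])
  obtain ⟨F, hF⟩ := hc.elim_finite_subcover _
    (fun g => hU.preimage (continuous_shift g)) hcover
  refine ⟨(F : Set G)⁻¹, F.finite_toSet.inv, eq_univ_of_forall fun g => ?_⟩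
  obtain ⟨f, hf, hfU⟩ := mem_iUnion₂.1 (hF (hshift g x hx))
  rw [mem_preimage, shift_shift] at hfU
  exact ⟨f⁻¹, inv_mem_inv.2 hf, f * g, hfU, inv_mul_cancel_left f g⟩

end Subshift

section Tower

variable {G : Type*} [Group G] [DecidableEq G] {𝒮 : ℕ → Set (Finset G)}
  {π : ℕ → Finset G → Finset G} {x : G → ℕ → Finset G} {K : ℕ → Finset G} {ε : ℕ → ℝ}

/-- A sequence of pointed tilings `g ↦ x g k` with shapes in `𝒮 k`, each one the subdivision of the
next one by `π k`. -/
structure IsTower (𝒮 : ℕ → Set (Finset G)) (π : ℕ → Finset G → Finset G) (x : G → ℕ → Finset G) :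
    Prop where
  isPointedTiling : ∀ k, IsPointedTiling (𝒮 k) fun g => x g k
  link : ∀ k g, x g k = π k (x g (k + 1))

theorem IsTower.subset_succ (hx : IsTower 𝒮 π x)
    (hπ : ∀ k, IsSubdivision (𝒮 k) (𝒮 (k + 1)) (π k)) (k : ℕ) (g : G) : x g k ⊆ x g (k + 1) := by
  rw [hx.link k g]
  exact (hπ k).subset _ ((hx.isPointedTiling (k + 1)).mem g)

theorem exists_isPointedTiling_linked_below (n : ℕ)
    (hπ : ∀ k, IsSubdivision (𝒮 k) (𝒮 (k + 1)) (π k)) (h : ∀ k, ∃ y, IsPointedTiling (𝒮 k) y) :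
    ∃ x : G → ℕ → Finset G, (∀ k, IsPointedTiling (𝒮 k) fun g => x g k) ∧
      ∀ k < n, ∀ g, x g k = π k (x g (k + 1)) := by
  induction n generalizing 𝒮 π with
  | zero =>
    choose y hy using h
    exact ⟨fun g k => y k g, hy, by simp⟩
  | succ n ih =>
    obtain ⟨x, hx, hlink⟩ := ih (fun k => hπ (k + 1)) fun k => h (k + 1)
    refine ⟨fun g k => k.casesOn (π 0 (x g 0)) (x g), ?_, ?_⟩
    · rintro (_ | k)
      exacts [(hπ 0).isPointedTiling (hx 0), hx k]
    · rintro (_ | k) hk g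
      exacts [rfl, hlink k (Nat.lt_of_succ_lt_succ hk) g]

theorem setOf_isTower (𝒮 : ℕ → Set (Finset G)) (π : ℕ → Finset G → Finset G) :
    {x | IsTower 𝒮 π x} = {x | ∀ k, IsPointedTiling (𝒮 k) fun g => x g k} ∩
      ⋂ k, {x | ∀ g, x g k = π k (x g (k + 1))} := by
  ext x
  simp only [mem_inter_iff, mem_iInter, mem_ofPred_eq]
  exact ⟨fun h => ⟨h.isPointedTiling, h.link⟩, fun h => ⟨h.1, h.2⟩⟩

section Topology

variable [TopologicalSpace (Finset G)] [DiscreteTopology (Finset G)]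

omit [Group G] [DecidableEq G] in
theorem isClosed_setOf_apply (p : Finset G → Finset G → Prop) (g h : G) (k l : ℕ) :
    IsClosed {x : G → ℕ → Finset G | p (x g k) (x h l)} :=
  (isClosed_discrete {q : Finset G × Finset G | p q.1 q.2}).preimage
    (f := fun x : G → ℕ → Finset G => (x g k, x h l)) (by fun_prop)

theorem isClosed_setOf_isPointedTiling (𝒮 : ℕ → Set (Finset G)) :
    IsClosed {x : G → ℕ → Finset G | ∀ k, IsPointedTiling (𝒮 k) fun g => x g k} := by
  have heq : {x : G → ℕ → Finset G | ∀ k, IsPointedTiling (𝒮 k) fun g => x g k} =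
      ⋂ k, ⋂ g, {x | x g k ∈ 𝒮 k ∧ 1 ∈ x g k} ∩
        ⋂ d, {x | d ∈ x g k → x (d * g) k = x g k <• d⁻¹} := by
    ext x
    simp only [mem_iInter, mem_inter_iff, mem_ofPred_eq]
    exact ⟨fun h k g => ⟨⟨(h k).mem g, (h k).one_mem g⟩, (h k).rightSMul g⟩, fun h k =>
      ⟨fun g => (h k g).1.1, fun g => (h k g).1.2, fun g => (h k g).2⟩⟩
  rw [heq]
  refine isClosed_iInter fun k => isClosed_iInter fun g =>
    .inter ?_ (isClosed_iInter fun d => ?_)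
  · exact isClosed_setOf_apply (fun E _ => E ∈ 𝒮 k ∧ 1 ∈ E) g g k k
  · exact isClosed_setOf_apply (fun E E' => d ∈ E → E' = E <• d⁻¹) g (d * g) k k

omit [Group G] [DecidableEq G] in
theorem isClosed_setOf_link (π : ℕ → Finset G → Finset G) (k : ℕ) :
    IsClosed {x : G → ℕ → Finset G | ∀ g, x g k = π k (x g (k + 1))} := by
  rw [ofPred_forall]
  exact isClosed_iInter fun g => isClosed_setOf_apply (fun E E' => E = π k E') g g k (k + 1)

theorem isCompact_setOf_isPointedTiling (h𝒮 : ∀ k, (𝒮 k).Finite) :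
    IsCompact {x : G → ℕ → Finset G | ∀ k, IsPointedTiling (𝒮 k) fun g => x g k} :=
  (isCompact_univ_pi fun _ : G => isCompact_univ_pi fun k => (h𝒮 k).isCompact).of_isClosed_subset
    (isClosed_setOf_isPointedTiling 𝒮) fun _ hx g _ k _ => (hx k).mem g

theorem isSubshift_setOf_isTower (𝒮 : ℕ → Set (Finset G)) (π : ℕ → Finset G → Finset G) :
    IsSubshift (ℕ → Finset G) {x | IsTower 𝒮 π x} := by
  refine ⟨?_, fun g x hx => ⟨fun k => (hx.isPointedTiling k).shift g, fun k h => hx.link k _⟩⟩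
  rw [setOf_isTower]
  exact (isClosed_setOf_isPointedTiling 𝒮).inter (isClosed_iInter (isClosed_setOf_link π))

theorem isCompact_setOf_isTower (h𝒮 : ∀ k, (𝒮 k).Finite) (π : ℕ → Finset G → Finset G) :
    IsCompact {x | IsTower 𝒮 π x} :=
  (isCompact_setOf_isPointedTiling h𝒮).of_isClosed_subset (isSubshift_setOf_isTower 𝒮 π).1
    fun _ hx => hx.isPointedTiling

theorem nonempty_setOf_isTower (h𝒮 : ∀ k, (𝒮 k).Finite)
    (hπ : ∀ k, IsSubdivision (𝒮 k) (𝒮 (k + 1)) (π k)) (h : ∀ k, ∃ y, IsPointedTiling (𝒮 k) y) :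
    {x | IsTower 𝒮 π x}.Nonempty := by
  rw [setOf_isTower]
  refine (isCompact_setOf_isPointedTiling h𝒮).inter_iInter_nonempty _ (isClosed_setOf_link π)
    fun u => ?_
  obtain ⟨x, hx, hlink⟩ := exists_isPointedTiling_linked_below (u.sup id).succ hπ h
  exact ⟨x, hx, mem_iInter₂.2 fun k hk => hlink k (Nat.lt_succ_of_le (Finset.le_sup (f := id) hk))⟩

end Topology

theorem IsTileMap.card_filter_not_rightSMul_subset_le {τ : G → Finset G} {D A K : Finset G}
    {δ : ℝ} (h : IsTileMap τ D) (h1 : 1 ∈ K) (hinv : ∀ g, Invariant (τ g) K δ)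
    (hA : Saturated τ A) : (#{a ∈ A | ¬ K <• a ⊆ τ a} : ℝ) ≤ δ * #A := by
  have hsub : {a ∈ A | ¬ K <• a ⊆ τ a} ⊆ (A.image τ).biUnion (boundary · K) := fun a ha => by
    obtain ⟨haA, hKa⟩ := Finset.mem_filter.1 ha
    obtain ⟨b, hb, hbτ⟩ := Finset.not_subset.1 hKa
    rw [mem_rightSMul_iff] at hb
    refine Finset.mem_biUnion.2 ⟨τ a, Finset.mem_image_of_mem τ haA, mem_boundary.2
      ⟨⟨1, h1, ?_⟩, b * a⁻¹, hb, ?_⟩⟩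
    · simpa using h.mem_self a
    · simpa using hbτ
  have hcard : ∑ E ∈ A.image τ, #E = #A := by
    conv_rhs => rw [← h.biUnion_image hA]
    exact (Finset.card_biUnion (h.pairwiseDisjoint_range.subset (by simp))).symm
  calc (#{a ∈ A | ¬ K <• a ⊆ τ a} : ℝ) ≤ ∑ E ∈ A.image τ, (#(boundary E K) : ℝ) :=
        mod_cast (Finset.card_le_card hsub).trans Finset.card_biUnion_le
    _ ≤ ∑ E ∈ A.image τ, δ * #E :=
        Finset.sum_le_sum (Finset.forall_mem_image.2 fun g _ => (hinv g).le)
    _ = δ * #A := by rw [← Finset.mul_sum, ← Nat.cast_sum, hcard]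

theorem exists_forall_rightSMul_subset {ι : Type*} {s : Finset ι} {τ : ι → G → Finset G}
    {D K : ι → Finset G} {ε : ι → ℝ} {A : Finset G} (h : ∀ i, IsTileMap (τ i) (D i))
    (h1 : ∀ i, 1 ∈ K i) (hinv : ∀ i g, Invariant (τ i g) (K i) (ε i)) (hε : ∑ i ∈ s, ε i < 1)
    (hA : ∀ i ∈ s, Saturated (τ i) A) (hne : A.Nonempty) :
    ∃ a ∈ A, ∀ i ∈ s, K i <• a ⊆ τ i a := by
  by_contra! hcon
  have hsub : A ⊆ s.biUnion fun i => {a ∈ A | ¬ K i <• a ⊆ τ i a} := fun a ha => by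
    obtain ⟨i, hi, hia⟩ := hcon a ha
    exact Finset.mem_biUnion.2 ⟨i, hi, Finset.mem_filter.2 ⟨ha, hia⟩⟩
  have hle : (#A : ℝ) ≤ (∑ i ∈ s, ε i) * #A := by
    calc (#A : ℝ) ≤ ∑ i ∈ s, (#{a ∈ A | ¬ K i <• a ⊆ τ i a} : ℝ) :=
          mod_cast (Finset.card_le_card hsub).trans Finset.card_biUnion_le
      _ ≤ ∑ i ∈ s, ε i * #A := Finset.sum_le_sum fun i hi =>
          (h i).card_filter_not_rightSMul_subset_le (h1 i) (hinv i) (hA i hi)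
      _ = (∑ i ∈ s, ε i) * #A := (Finset.sum_mul ..).symm
  have hpos : (0 : ℝ) < #A := mod_cast hne.card_pos
  exact hle.not_gt (mul_lt_of_lt_one_left hpos hε)

theorem IsTower.exists_forall_subset (hx : IsTower 𝒮 π x) (h𝒮 : ∀ k, (𝒮 k).Finite)
    (hπ : ∀ k, IsSubdivision (𝒮 k) (𝒮 (k + 1)) (π k)) (h1 : ∀ k, 1 ∈ K k)
    (hinv : ∀ k, ∀ S ∈ 𝒮 k, Invariant S (K k) (ε k)) {s : Finset ℕ} (hε : ∑ k ∈ s, ε k < 1) :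
    ∃ a, ∀ k ∈ s, K k ⊆ x a k := by
  choose D hτ using fun k => (hx.isPointedTiling k).isTileMap (h𝒮 k)
  have hsat : ∀ k ∈ s, Saturated (fun g => x g k <• g) (x 1 (s.sup id) <• (1 : G)) := fun k hk =>
    ((hτ (s.sup id)).saturated 1).of_subset fun g => Finset.smul_finset_subset_smul_finset
      (monotone_nat_of_le_succ (fun k => hx.subset_succ hπ k g) (Finset.le_sup (f := id) hk))
  obtain ⟨a, -, ha⟩ := exists_forall_rightSMul_subset hτ h1
    (fun k g => (hinv k _ ((hx.isPointedTiling k).mem g)).rightSMul g) hε hsat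
    ⟨1, (hτ (s.sup id)).mem_self 1⟩
  exact ⟨a, fun k hk => Finset.smul_finset_subset_smul_finset_iff.1 (ha k hk)⟩

/- Averaging gives, for any finite set of levels, a point of a given tower deep inside its tiles of
these levels; compactness of the shift orbit closure handles all levels at once. -/
theorem exists_isTower_syndetic (h𝒮 : ∀ k, (𝒮 k).Finite)
    (hπ : ∀ k, IsSubdivision (𝒮 k) (𝒮 (k + 1)) (π k)) (h : ∀ k, ∃ y, IsPointedTiling (𝒮 k) y)
    (h1 : ∀ k, 1 ∈ K k) (hinv : ∀ k, ∀ S ∈ 𝒮 k, Invariant S (K k) (ε k))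
    (hε : ∀ s : Finset ℕ, ∑ k ∈ s, ε k < 1) :
    ∃ x, IsTower 𝒮 π x ∧ (∀ k g, SyndeticSet {c | x c k = x g k}) ∧ ∀ k, K k ⊆ x 1 k := by
  let _ : TopologicalSpace (Finset G) := ⊥
  have : DiscreteTopology (Finset G) := ⟨rfl⟩
  obtain ⟨Y, hY⟩ := (isSubshift_setOf_isTower 𝒮 π).exists_minimal (isCompact_setOf_isTower h𝒮 π)
    (nonempty_setOf_isTower h𝒮 hπ h)
  obtain ⟨⟨hclosed, hshift⟩, ⟨y, hy⟩, hYX⟩ := hY.prop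
  have hYc := (isCompact_setOf_isTower h𝒮 π).of_isClosed_subset hclosed hYX
  obtain ⟨x, hx, hxK⟩ := hYc.inter_iInter_nonempty (fun k => {x | K k ⊆ x 1 k})
    (fun k => isClosed_setOf_apply (fun E _ => K k ⊆ E) 1 1 k k) fun s => by
      obtain ⟨a, ha⟩ := (hYX hy).exists_forall_subset h𝒮 hπ h1 hinv (hε s)
      exact ⟨shift a y, hshift a y hy, mem_iInter₂.2 fun k hk => by simpa [shift] using ha k hk⟩
  refine ⟨x, hYX hx, fun k g => ?_, mem_iInter.1 hxK⟩
  have hU : IsOpen {z : G → ℕ → Finset G | z 1 k = x g k} :=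
    (isOpen_discrete {x g k}).preimage (f := fun z : G → ℕ → Finset G => z 1 k) (by fun_prop)
  simpa [shift] using syndeticSet_of_minimal hY hYc hx hU
    ⟨shift g x, hshift g x hx, by simp [shift]⟩

end Tower

section TileMapTilings

variable {G : Type*} [Group G] {τ τ' : G → Finset G} {D D' : Finset G}

theorem IsTileMap.isTilingOf (h : IsTileMap τ D) : IsTilingOf (range fun g => (τ g : Set G)) := by
  refine ⟨forall_mem_range.2 fun g => ⟨(τ g).finite_toSet, g, h.mem_self g⟩, ?_,
    eq_univ_of_forall fun g => ⟨_, ⟨g, rfl⟩, h.mem_self g⟩⟩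
  rintro _ ⟨g, rfl⟩ _ ⟨g', rfl⟩ hne
  refine disjoint_left.2 fun z hz hz' => hne ?_
  change (τ g : Set G) = τ g'
  rw [← h.eq_of_mem hz, h.eq_of_mem hz']

theorem IsTileMap.subset_of_mem (h' : IsTileMap τ' D') (hle : ∀ g, τ g ⊆ τ' g) {c z : G}
    (hz : z ∈ τ' c) : τ z ⊆ τ' c :=
  h'.eq_of_mem hz ▸ hle z

theorem IsTileMap.eq_sUnion_range (h : IsTileMap τ D) (h' : IsTileMap τ' D')
    (hle : ∀ g, τ g ⊆ τ' g) (c : G) :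
    (τ' c : Set G) = ⋃₀ {T ∈ range fun g => (τ g : Set G) | T ⊆ τ' c} :=
  Subset.antisymm
    (fun z hz => ⟨_, ⟨⟨z, rfl⟩, Finset.coe_subset.2 (h'.subset_of_mem hle hz)⟩, h.mem_self z⟩)
    (sUnion_subset fun _ hT => hT.2)

/- A tile of `τ` outside `τ' c` restricts to `∅`; it exists because `G` is infinite. -/
theorem IsTileMap.tilingRestrict_range [Infinite G] (h : IsTileMap τ D) (h' : IsTileMap τ' D')
    (hle : ∀ g, τ g ⊆ τ' g) (c : G) :
    tilingRestrict (range fun g => (τ g : Set G)) (τ' c) =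
      insert ∅ ((fun g => (τ g : Set G)) '' τ' c) := by
  have hinter : ∀ b z, z ∈ τ b → z ∈ τ' c → (τ b ∩ τ' c : Set G) = τ z := fun b z hb hc => by
    rw [← h.eq_of_mem hb]
    exact inter_eq_left.2 (Finset.coe_subset.2 (h'.subset_of_mem hle hc))
  rw [tilingRestrict, ← range_comp]
  refine Subset.antisymm (range_subset_iff.2 fun b => ?_) (insert_subset ?_ ?_)
  · obtain he | ⟨z, hb, hc⟩ := (τ b ∩ τ' c : Set G).eq_empty_or_nonempty
    · exact Or.inl he
    · exact Or.inr ⟨z, hc, (hinter b z hb hc).symm⟩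
  · obtain ⟨b, hb⟩ := Infinite.exists_notMem_finset (τ' c)
    refine ⟨b, eq_empty_of_forall_notMem fun z ⟨hz, hz'⟩ => hb ?_⟩
    exact h'.subset_of_mem hle hz' (h.eq_of_mem hz ▸ h.mem_self b)
  · exact image_subset_iff.2 fun z hz => ⟨z, hinter z z (h.mem_self z) hz⟩

end TileMapTilings

section Tiles

variable {G : Type*} [Group G] [DecidableEq G] {𝒮 : Set (Finset G)} {y : G → Finset G}
  {S : Finset G}

/-- The tiling with pointed tiles `y`, that is, the inverse of the encoding of `IsPointedTiling`. -/
def tiles (y : G → Finset G) : Set (Set G) := range fun g => ((y g <• g : Finset G) : Set G)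

theorem rightTranslate_coe (E : Finset G) (c : G) :
    rightTranslate (E : Set G) c = ((E <• c : Finset G) : Set G) := by
  rw [rightTranslate, Finset.coe_smul_finset]
  rfl

omit [DecidableEq G] in
theorem rightTranslate_rightTranslate (A : Set G) (a b : G) :
    rightTranslate (rightTranslate A a) b = rightTranslate A (a * b) := by
  simp only [rightTranslate, image_image, mul_assoc]

theorem IsPointedTiling.isShapeSet (h : IsPointedTiling 𝒮 y) (hfin : 𝒮.Finite) :
    IsShapeSet (tiles y) (range fun g => (y g : Set G)) := by
  refine ⟨(hfin.image _).subset (range_subset_iff.2 fun g => mem_image_of_mem _ (h.mem g)),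
    forall_mem_range.2 fun g => ⟨(y g).finite_toSet, 1, h.one_mem g⟩,
    forall_mem_range.2 fun g => ⟨_, ⟨g, rfl⟩, g, (rightTranslate_coe _ _).symm⟩⟩

theorem IsPointedTiling.center_tiles (h : IsPointedTiling 𝒮 y) (h1 : 1 ∈ S) :
    center (tiles y) S = {c | y c = S} := by
  ext c
  simp only [_root_.center, tiles, rightTranslate_coe, mem_ofPred_eq, mem_range, Finset.coe_inj]
  refine ⟨fun ⟨g, hg⟩ => ?_, fun hc => ⟨c, by rw [hc]⟩⟩
  have hc : c * g⁻¹ ∈ y g := by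
    rw [← mem_rightSMul_iff, hg, mem_rightSMul_iff, mul_inv_cancel]
    exact h1
  have hmove := h.rightSMul g _ hc
  rwa [inv_mul_cancel_right, mul_inv_rev, inv_inv, ← rightSMul_rightSMul, hg,
    rightSMul_rightSMul, mul_inv_cancel, MulOpposite.op_one, one_smul] at hmove

end Tiles

section CongruentTilings

variable {G : Type*} [Group G] [DecidableEq G] {𝒮 : ℕ → Set (Finset G)}
  {π : ℕ → Finset G → Finset G} {x : G → ℕ → Finset G}

theorem IsTower.rightSMul_subset_succ (hx : IsTower 𝒮 π x)
    (hπ : ∀ k, IsSubdivision (𝒮 k) (𝒮 (k + 1)) (π k)) (k : ℕ) (g : G) :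
    x g k <• g ⊆ x g (k + 1) <• g :=
  Finset.smul_finset_subset_smul_finset (hx.subset_succ hπ k g)

theorem IsTower.eq_sUnion_tiles (hx : IsTower 𝒮 π x) (h𝒮 : ∀ k, (𝒮 k).Finite)
    (hπ : ∀ k, IsSubdivision (𝒮 k) (𝒮 (k + 1)) (π k)) (k : ℕ) :
    ∀ T' ∈ tiles fun g => x g (k + 1), T' = ⋃₀ {T ∈ tiles fun g => x g k | T ⊆ T'} := by
  obtain ⟨D, hτ⟩ := (hx.isPointedTiling k).isTileMap (h𝒮 k)
  obtain ⟨D', hτ'⟩ := (hx.isPointedTiling (k + 1)).isTileMap (h𝒮 (k + 1))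
  exact forall_mem_range.2 (hτ.eq_sUnion_range hτ' (hx.rightSMul_subset_succ hπ k))

/- The right-hand side depends on `c` only through the shape `x c (k + 1)` and the translation. -/
theorem IsTower.tilingRestrict_tiles [Infinite G] (hx : IsTower 𝒮 π x) (h𝒮 : ∀ k, (𝒮 k).Finite)
    (hπ : ∀ k, IsSubdivision (𝒮 k) (𝒮 (k + 1)) (π k)) (k : ℕ) (c : G) :
    tilingRestrict (tiles fun g => x g k) (rightTranslate (x c (k + 1)) c) =
      (rightTranslate · c) '' insert ∅
        ((fun d => ((π k (x c (k + 1) <• d⁻¹) <• d : Finset G) : Set G)) ''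
          (x c (k + 1) : Set G)) := by
  obtain ⟨D, hτ⟩ := (hx.isPointedTiling k).isTileMap (h𝒮 k)
  obtain ⟨D', hτ'⟩ := (hx.isPointedTiling (k + 1)).isTileMap (h𝒮 (k + 1))
  have hpiece : ∀ d ∈ x c (k + 1),
      x (d * c) k <• (d * c) = (π k (x c (k + 1) <• d⁻¹) <• d) <• c := fun d hd => by
    rw [hx.link, (hx.isPointedTiling (k + 1)).rightSMul c d hd, rightSMul_rightSMul]
  rw [rightTranslate_coe, tiles, hτ.tilingRestrict_range hτ' (hx.rightSMul_subset_succ hπ k),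
    ← rightTranslate_coe, rightTranslate, image_insert_eq, image_image, image_image]
  congr 1
  · exact (image_empty _).symm
  · refine image_congr fun d hd => ?_
    rw [rightTranslate_coe, hpiece d hd]

theorem IsTower.tilingRestrict_tiles_congr [Infinite G] (hx : IsTower 𝒮 π x)
    (h𝒮 : ∀ k, (𝒮 k).Finite) (hπ : ∀ k, IsSubdivision (𝒮 k) (𝒮 (k + 1)) (π k)) (k : ℕ)
    {S : Finset G} (h1 : 1 ∈ S) {c₁ c₂ : G}
    (h₁ : rightTranslate S c₁ ∈ tiles fun g => x g (k + 1))
    (h₂ : rightTranslate S c₂ ∈ tiles fun g => x g (k + 1)) :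
    tilingRestrict (tiles fun g => x g k) (rightTranslate S c₁) =
      (rightTranslate · (c₂⁻¹ * c₁)) ''
        tilingRestrict (tiles fun g => x g k) (rightTranslate S c₂) := by
  have hcenter := (hx.isPointedTiling (k + 1)).center_tiles h1
  have hS₁ : x c₁ (k + 1) = S := hcenter.subset h₁
  have hS₂ : x c₂ (k + 1) = S := hcenter.subset h₂
  have hr₁ := hx.tilingRestrict_tiles h𝒮 hπ k c₁
  have hr₂ := hx.tilingRestrict_tiles h𝒮 hπ k c₂
  rw [hS₁] at hr₁
  rw [hS₂] at hr₂
  simp only [hr₁, hr₂, image_image, rightTranslate_rightTranslate, mul_inv_cancel_left]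

end CongruentTilings

open Classical in
theorem IsFolner.exists_isTower {G ι : Type*} [Group G] [Infinite G] {l : Filter ι} [l.NeBot]
    {F : ι → Finset G} (hF : IsFolner l F) {K : ℕ → Finset G} (h1 : ∀ k, 1 ∈ K k) {ε : ℕ → ℝ}
    (hε : ∀ k, 0 < ε k) :
    ∃ 𝒮 π x, IsTower 𝒮 π x ∧ (∀ k, (𝒮 k).Finite) ∧
      (∀ k, IsSubdivision (𝒮 k) (𝒮 (k + 1)) (π k)) ∧
      (∀ k, ∀ S ∈ 𝒮 k, Invariant S (K k) (ε k)) ∧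
      (∀ k g, SyndeticSet {c | x c k = x g k}) ∧ ∀ k, K k ⊆ x 1 k := by
  obtain ⟨δ, hδ, hδsum⟩ := countable_univ.exists_pos_forall_sum_le (ι := ℕ) (one_half_pos (α := ℝ))
  obtain ⟨D, τ, hτ, hasym, hinv, hle⟩ :=
    hF.exists_seq_isTileMap_asymmetric K fun k => lt_min (hε k) (hδ k)
  choose π hπ using fun k => (hτ k).exists_isSubdivision (hτ (k + 1)) (hasym (k + 1)) (hle k)
  have hfin := fun k => (hτ k).finite_pointedShapes
  have hshape : ∀ k, ∀ S ∈ pointedShapes (τ k), Invariant S (K k) (min (ε k) (δ k)) :=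
    fun k => forall_mem_range.2 fun g => (hinv k g).rightSMul g⁻¹
  obtain ⟨x, hx, hsyn, hK⟩ := exists_isTower_syndetic hfin hπ
    (fun k => ⟨_, (hτ k).isPointedTiling⟩) h1
    (fun k S hS => (hshape k S hS).mono subset_rfl (min_le_right _ _))
    fun s => (hδsum s (subset_univ _)).trans_lt one_half_lt_one
  exact ⟨_, π, x, hx, hfin, hπ,
    fun k S hS => (hshape k S hS).mono subset_rfl (min_le_left _ _), hsyn, hK⟩

theorem exists_primely_congruent_syndetic_tilings_general (G : Type*) [Group G] [Countable G]
    [Infinite G] (hG : AmenableGroup G) (T : ℕ → Set G) (hTfin : ∀ k, (T k).Finite) (ε : ℕ → ℝ)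
    (hεpos : ∀ k, 0 < ε k) :
    ∃ (𝒯 : ℕ → Set (Set G)) (𝒮 : ℕ → Set (Set G)) (S1 : ℕ → Set G),
      (∀ k, IsTilingOf (𝒯 k)) ∧
      (∀ k, IsShapeSet (𝒯 k) (𝒮 k)) ∧
      (∀ k, ∀ S ∈ 𝒮 k, SyndeticSet (center (𝒯 k) S)) ∧
      (∀ k, ∀ T' ∈ 𝒯 (k + 1), T' = ⋃₀ {T'' ∈ 𝒯 k | T'' ⊆ T'}) ∧
      (∀ k, ∀ S ∈ 𝒮 (k + 1), ∀ c₁ c₂ : G,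
        rightTranslate S c₁ ∈ 𝒯 (k + 1) → rightTranslate S c₂ ∈ 𝒯 (k + 1) →
          tilingRestrict (𝒯 k) (rightTranslate S c₁) =
            (fun A => rightTranslate A (c₂⁻¹ * c₁)) ''
              tilingRestrict (𝒯 k) (rightTranslate S c₂)) ∧
      (∀ k, S1 k ∈ 𝒮 k) ∧
      (1 : G) ∈ S1 0 ∧ (∀ k, S1 k ⊆ S1 (k + 1)) ∧ (⋃ k, S1 k = Set.univ) ∧
      (∀ k, ∀ S ∈ 𝒮 k, IsInvariantSet S (T k) (ε k)) := by
  classical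
  obtain ⟨F, hF⟩ := hG.exists_isFolner
  obtain ⟨e, he⟩ := exists_surjective_nat G
  obtain ⟨𝒮, π, x, hx, h𝒮, hπ, hinv, hsyn, hK⟩ := hF.exists_isTower
    (K := fun k => insert 1 (insert (e k) (hTfin k).toFinset))
    (fun k => Finset.mem_insert_self _ _) hεpos
  have hpt := hx.isPointedTiling
  refine ⟨fun k => tiles fun g => x g k, fun k => range fun g => (x g k : Set G), fun k => x 1 k,
    fun k => ((hpt k).isTileMap (h𝒮 k)).choose_spec.isTilingOf,
    fun k => (hpt k).isShapeSet (h𝒮 k), ?syndetic, hx.eq_sUnion_tiles h𝒮 hπ, ?congruent,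
    fun k => mem_range_self 1, (hpt 0).one_mem 1, fun k => hx.subset_succ hπ k 1, ?exhaust,
    ?invariant⟩
  case syndetic =>
    exact fun k => forall_mem_range.2 fun g => ((hpt k).center_tiles ((hpt k).one_mem g)) ▸ hsyn k g
  case congruent =>
    exact fun k => forall_mem_range.2 fun g _ _ =>
      hx.tilingRestrict_tiles_congr h𝒮 hπ k ((hpt (k + 1)).one_mem g)
  case exhaust =>
    exact eq_univ_of_forall fun g => (he g).elim fun k hk =>
      mem_iUnion.2 ⟨k, hK k (by simp [hk])⟩
  case invariant =>
    refine fun k => forall_mem_range.2 fun g => ?_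
    rw [← (hTfin k).coe_toFinset, isInvariantSet_coe]
    refine (hinv k _ ((hpt k).mem g)).mono ?_ le_rfl
    exact (Finset.subset_insert _ _).trans (Finset.subset_insert _ _)

/-- **Theorem (Downarowicz–Huczek–Zhang; Dou).** For an infinite countable amenable group `G`,
an increasing exhausting sequence `T_k` of nonempty finite subsets and a decreasing null
sequence `ε_k > 0`, there is a primely congruent sequence `𝒯_k` of syndetic finite tilings of
`G`, with shape sets `𝒮_k` containing distinguished shapes `S1 k` (the shapes `S_{k,1}`), such
that `1 ∈ S1 0 ⊆ S1 1 ⊆ ⋯`, `⋃ k, S1 k = G`, and every shape of `𝒯_k` is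
`(T_k, ε_k)`-invariant. -/
theorem exists_primely_congruent_syndetic_tilings (G : Type*) [Group G] [Countable G]
    [Infinite G] (hG : AmenableGroup G)
    (T : ℕ → Set G) (hTfin : ∀ k, (T k).Finite) (hTne : ∀ k, (T k).Nonempty)
    (hTmono : ∀ k, T k ⊆ T (k + 1)) (hTexh : ⋃ k, T k = Set.univ)
    (ε : ℕ → ℝ) (hεpos : ∀ k, 0 < ε k) (hεanti : ∀ k, ε (k + 1) ≤ ε k)
    (hεlim : Tendsto ε atTop (nhds 0)) :
    ∃ (𝒯 : ℕ → Set (Set G)) (𝒮 : ℕ → Set (Set G)) (S1 : ℕ → Set G),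
      (∀ k, IsTilingOf (𝒯 k)) ∧
      (∀ k, IsShapeSet (𝒯 k) (𝒮 k)) ∧
      -- each tiling is syndetic
      (∀ k, ∀ S ∈ 𝒮 k, SyndeticSet (center (𝒯 k) S)) ∧
      -- the sequence is primely congruent: `𝒯_k` refines `𝒯_{k+1}` …
      (∀ k, ∀ T' ∈ 𝒯 (k + 1), T' = ⋃₀ {T'' ∈ 𝒯 k | T'' ⊆ T'}) ∧
      -- … and each shape of `𝒯_{k+1}` is partitioned by `𝒯_k` in a unique way
      (∀ k, ∀ S ∈ 𝒮 (k + 1), ∀ c₁ c₂ : G,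
        rightTranslate S c₁ ∈ 𝒯 (k + 1) → rightTranslate S c₂ ∈ 𝒯 (k + 1) →
          tilingRestrict (𝒯 k) (rightTranslate S c₁) =
            (fun A => rightTranslate A (c₂⁻¹ * c₁)) ''
              tilingRestrict (𝒯 k) (rightTranslate S c₂)) ∧
      -- the distinguished shapes `S_{k,1}`
      (∀ k, S1 k ∈ 𝒮 k) ∧
      (1 : G) ∈ S1 0 ∧ (∀ k, S1 k ⊆ S1 (k + 1)) ∧ (⋃ k, S1 k = Set.univ) ∧
      -- invariance of all shapes
      (∀ k, ∀ S ∈ 𝒮 k, IsInvariantSet S (T k) (ε k)) :=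
  exists_primely_congruent_syndetic_tilings_general G hG T hTfin ε hεpos
end

section
/- Let $G$ be an infinite countable discrete amenable group, $K$ a finite dimensional compact metric space, and $(X,\sigma)$ a subshift of the full $G$-shift on $K^G$ (i.e., $X$ is a closed shift-invariant subset of $K^G$). Then for any Følner sequence $\{F_n\}_{n=1}^\infty$ of $G$, $\mathrm{mdim}(X,\sigma) \le \liminf_{n\to\infty} \dim(\pi_{F_n}(X))/|F_n|$, where $\pi_{F_n}: K^G \to K^{F_n}$ is the canonical projection and $\dim$ denotes topological (covering) dimension. -/
open Set Filter Topology
open scoped ENNReal NNReal symmDiff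

/-!
Ostrand's theorem replaces covers of multiplicity `m + 1` by families of `k` colours, for every `k`,
that miss each point at most `m` times. In this form dimension at a given scale becomes an integer
that is at most the covering dimension, bounds the width dimension, and is subadditive when scales
are intersected.

Taking for the scale `δ`-closeness on the coordinates in a finite set `A ⊆ G`, this yields a
monotone, subadditive, right-invariant set function `a`, so by the Ornstein–Weiss lemma
`a A / |A|` converges to one limit `L` along all Følner sequences. Since `a A ≤ dim (π_A X)`, the lower
limit of `dim (π_A X) / |A|` is at least `L`. Since `ρ` is determined up to `ε` by finitely many
coordinates `T`, the width dimension for `ρ_A` is at most `a (T * A)`, and `T * A` exceeds `A` by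
a negligible proportion, so the upper limit of `Widim / |A|` is at most `L`.
-/

/-! ### Polyhedra from open covers -/

section Polyhedra

open Geometry

open scoped Classical in
/-- The `m`-skeleton of the standard simplex of `ι → ℝ`, whose vertices are the basis vectors:
the nerve of any `ι`-indexed cover of order at most `m + 1` is a subcomplex of it. -/
noncomputable def stdSkeleton (ι : Type*) [Finite ι] (m : ℕ) : SimplicialComplex ℝ (ι → ℝ) :=
  .ofAffineIndependent
    { faces := {s | s.Nonempty ∧ s.card ≤ m + 1 ∧ (s : Set (ι → ℝ)) ⊆ range (Pi.basisFun ℝ ι)}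
      isRelLowerSet_faces := fun _ hs => ⟨hs.1, fun _ hts ht =>
        ⟨ht, (Finset.card_le_card hts).trans hs.2.1, (Finset.coe_subset.2 hts).trans hs.2.2⟩⟩ }
    ((Pi.basisFun ℝ ι).linearIndependent.affineIndependent.range.mono <|
      iUnion₂_subset fun _ hs => hs.2.2)

variable {ι : Type*} {m : ℕ}

lemma finite_faces_stdSkeleton [Finite ι] : (stdSkeleton ι m).faces.Finite :=
  ((finite_range _).finite_subsets.preimage Finset.coe_injective.injOn).subset
    fun _ hs => hs.2.2

lemma mem_space_stdSkeleton [Fintype ι] {x : ι → ℝ} (hx : x ∈ stdSimplex ℝ ι)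
    (hm : x.support.ncard ≤ m + 1) : x ∈ (stdSkeleton ι m).space := by
  classical
  set S : Finset ι := x.support.toFinite.toFinset with hS
  set b := Pi.basisFun ℝ ι
  have hsum : ∑ i ∈ S, x i = 1 :=
    (Finset.sum_subset S.subset_univ fun i _ hi => by simpa [hS] using hi).trans hx.2
  have hrepr : ∑ i ∈ S, x i • b i = x :=
    (Finset.sum_subset S.subset_univ fun i _ hi => by
      rw [show x i = 0 by simpa [hS] using hi, zero_smul]).trans (b.sum_repr x)
  have hne : S.Nonempty := Finset.nonempty_of_sum_ne_zero (hsum.trans_ne one_ne_zero)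
  have hcard : (S.image b).card ≤ m + 1 :=
    Finset.card_image_le.trans (ncard_eq_toFinset_card _ x.support.toFinite ▸ hm)
  refine SimplicialComplex.mem_space_iff.2 ⟨S.image b, ⟨hne.image _, hcard, by
    simpa only [Finset.coe_image] using image_subset_range b _⟩, ?_⟩
  rw [← hrepr]
  refine (convex_convexHull ℝ _).sum_mem (fun i _ => hx.1 i) hsum fun i hi => ?_
  exact subset_convexHull ℝ _ (Finset.mem_image_of_mem b hi)

variable {X : Type*} [TopologicalSpace X]

lemma widimLE_of_partitionOfUnity {N : ℕ} (f : PartitionOfUnity (Fin N) X)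
    (hf : ∀ x, {i | f i x ≠ 0}.ncard ≤ m + 1) {ρ : X → X → ℝ} {ε : ℝ}
    (hρ : ∀ i x y, f i x ≠ 0 → f i y ≠ 0 → ρ x y < ε) : WidimLE X ρ ε m := by
  have hmem (x : X) : (fun i => f i x) ∈ (stdSkeleton (Fin N) m).space :=
    mem_space_stdSkeleton ⟨fun i => f.nonneg i x, by
      rw [← f.sum_eq_one (mem_univ x), finsum_eq_sum_of_fintype]⟩ (hf x)
  refine ⟨N, stdSkeleton (Fin N) m, finite_faces_stdSkeleton, fun s hs => hs.2.1,
    fun x => ⟨fun i => f i x, hmem x⟩,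
    .subtype_mk (continuous_pi fun i => (f i).continuous) _, fun x y hxy => ?_⟩
  obtain ⟨i, hi⟩ := f.exists_pos (mem_univ x)
  have hxy : f i x = f i y := congrFun (congrArg Subtype.val hxy) i
  exact hρ i x y hi.ne' (hxy ▸ hi.ne')

lemma widimLE_of_openCover [CompactSpace X] [NormalSpace X] [Finite ι] {U : ι → Set X}
    (hUo : ∀ i, IsOpen (U i)) (hU : ⋃ i, U i = univ) (hm : ∀ x, {i | x ∈ U i}.ncard ≤ m + 1)
    {ρ : X → X → ℝ} {ε : ℝ} (hρ : ∀ i, ∀ x ∈ U i, ∀ y ∈ U i, ρ x y < ε) : WidimLE X ρ ε m := by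
  obtain ⟨N, ⟨e⟩⟩ := Finite.exists_equiv_fin ι
  obtain ⟨f, hf⟩ := PartitionOfUnity.exists_isSubordinate isClosed_univ (U ∘ e.symm)
    (fun i => hUo _) (by simp [e.symm.surjective.iUnion_comp U, hU])
  have hfU {i x} (hx : f i x ≠ 0) : x ∈ U (e.symm i) := hf i (subset_tsupport _ hx)
  refine widimLE_of_partitionOfUnity f (fun x => ?_) fun i x y hx hy =>
    hρ _ x (hfU hx) y (hfU hy)
  exact (ncard_le_ncard_of_injOn e.symm (fun i hi => hfU hi) e.symm.injective.injOn).trans (hm x)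

end Polyhedra

/-! ### Coloured dimension -/

section ColoredDimension

open scoped Function Uniformity

/-- Ostrand's form of the statement `dim X ≤ m` at the scale `E`: for every number `k` of colours
there are `k` finite families of pairwise disjoint `E`-small open sets such that every point is
missed by at most `m` of the families. -/
def ColoredDimLE (X : Type*) [TopologicalSpace X] (E : SetRel X X) (m : ℕ) : Prop :=
  ∀ k : ℕ, ∃ (ι : Type) (_ : Finite ι) (W : Fin k → ι → Set X),
    (∀ c i, IsOpen (W c i)) ∧ (∀ c, Pairwise (Disjoint on W c)) ∧
      (∀ c i, W c i ×ˢ W c i ⊆ E) ∧ ∀ x, {c | ∀ i, x ∉ W c i}.ncard ≤ m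

namespace ColoredDimLE

variable {X Y : Type*} [TopologicalSpace X] [TopologicalSpace Y] {E E' : SetRel X X} {m m' : ℕ}

lemma mono (h : ColoredDimLE X E m) (hE : E ⊆ E') : ColoredDimLE X E' m := fun k =>
  let ⟨ι, hι, W, hWo, hWd, hWE, hWm⟩ := h k
  ⟨ι, hι, W, hWo, hWd, fun c i => (hWE c i).trans hE, hWm⟩

variable (X) in
lemma univ : ColoredDimLE X univ 0 := fun _ =>
  ⟨Unit, inferInstance, fun _ _ => Set.univ, fun _ _ => isOpen_univ,
    fun _ => Subsingleton.pairwise, fun _ _ => subset_univ _, by simp⟩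

lemma preimage {E : SetRel Y Y} (h : ColoredDimLE Y E m) {f : X → Y} (hf : Continuous f) :
    ColoredDimLE X (Prod.map f f ⁻¹' E) m := fun k =>
  let ⟨ι, hι, W, hWo, hWd, hWE, hWm⟩ := h k
  ⟨ι, hι, fun c i => f ⁻¹' W c i, fun c i => (hWo c i).preimage hf,
    fun c _ _ hij => (hWd c hij).preimage f, fun c i _ hp => hWE c i hp, fun x => hWm (f x)⟩

lemma inter (h : ColoredDimLE X E m) (h' : ColoredDimLE X E' m') :
    ColoredDimLE X (E ∩ E') (m + m') := by
  intro k
  obtain ⟨ι, _, W, hWo, hWd, hWE, hWm⟩ := h k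
  obtain ⟨ι', _, W', hWo', hWd', hWE', hWm'⟩ := h' k
  refine ⟨ι × ι', inferInstance, fun c i => W c i.1 ∩ W' c i.2,
    fun c i => (hWo c _).inter (hWo' c _), fun c i j hij => ?_,
    fun c i p hp => ⟨hWE c _ ⟨hp.1.1, hp.2.1⟩, hWE' c _ ⟨hp.1.2, hp.2.2⟩⟩, fun x => ?_⟩
  · rcases not_and_or.1 (mt Prod.ext_iff.2 hij) with h₁ | h₂
    · exact (hWd c h₁).mono inter_subset_left inter_subset_left
    · exact (hWd' c h₂).mono inter_subset_right inter_subset_right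
  · have hsub : {c | ∀ i : ι × ι', x ∉ W c i.1 ∩ W' c i.2} ⊆
        {c | ∀ i, x ∉ W c i} ∪ {c | ∀ i, x ∉ W' c i} := by
      intro c hc
      by_contra! hcon
      simp only [mem_union, mem_ofPred_eq, not_or, not_forall, not_not] at hcon
      obtain ⟨⟨i, hi⟩, i', hi'⟩ := hcon
      exact hc (i, i') ⟨hi, hi'⟩
    exact (ncard_le_ncard hsub).trans
      ((ncard_union_le _ _).trans (add_le_add (hWm x) (hWm' x)))

/-- With `m + 1` colours every point is covered, and by disjointness at most once per colour. -/
lemma widimLE [CompactSpace X] [NormalSpace X] (h : ColoredDimLE X E m) {ρ : X → X → ℝ} {ε : ℝ}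
    (hρ : ∀ p ∈ E, ρ p.1 p.2 < ε) : WidimLE X ρ ε m := by
  obtain ⟨ι, _, W, hWo, hWd, hWE, hWm⟩ := h (m + 1)
  refine widimLE_of_openCover (U := fun p : Fin (m + 1) × ι => W p.1 p.2) (fun p => hWo _ _)
    (eq_univ_of_forall fun x => ?_) (fun x => ?_)
    fun p x hx y hy => hρ (x, y) (hWE _ _ ⟨hx, hy⟩)
  · by_contra hx
    have hmissed : {c | ∀ i, x ∉ W c i} = Set.univ :=
      eq_univ_of_forall fun c i hi => hx (mem_iUnion.2 ⟨(c, i), hi⟩)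
    have := hWm x
    simp [hmissed, ncard_univ] at this
  · have hinj : InjOn Prod.fst {p : Fin (m + 1) × ι | x ∈ W p.1 p.2} := by
      rintro ⟨c, i⟩ hi ⟨_, j⟩ hj rfl
      by_contra hij
      exact disjoint_left.1 (hWd c fun h => hij (congrArg (Prod.mk c) h)) hi hj
    exact hinj.ncard_image.symm.trans_le ((ncard_le_card _).trans_eq (Nat.card_fin _))

end ColoredDimLE

section LevelCell

variable {X ι : Type*}

/-- The set of points at which exactly the functions `f i` with `i ∈ S` exceed the level `c`, and
none of them takes the value `c`. -/
def levelCell (f : ι → X → ℝ) (c : ℝ) (S : Set ι) : Set X :=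
  {x | (∀ i ∈ S, c < f i x) ∧ ∀ i ∉ S, f i x < c}

variable {f : ι → X → ℝ} {c : ℝ} {S : Set ι} {x : X}

lemma isOpen_levelCell [TopologicalSpace X] [Finite ι] (hf : ∀ i, Continuous (f i)) :
    IsOpen (levelCell f c S) := by
  simp only [levelCell, ofPred_and, ofPred_forall]
  exact (S.toFinite.isOpen_biInter fun i _ => isOpen_lt continuous_const (hf i)).inter
    (Sᶜ.toFinite.isOpen_biInter fun i _ => isOpen_lt (hf i) continuous_const)

lemma eq_setOf_lt_of_mem_levelCell (hx : x ∈ levelCell f c S) : S = {i | c < f i x} :=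
  Subset.antisymm (fun i hi => hx.1 i hi) fun i hi => by_contra fun h => (hx.2 i h).asymm hi

lemma pairwise_disjoint_levelCell : Pairwise (Disjoint on levelCell f c) := fun _ _ hST =>
  disjoint_left.2 fun _ hS hT =>
    hST ((eq_setOf_lt_of_mem_levelCell hS).trans (eq_setOf_lt_of_mem_levelCell hT).symm)

lemma exists_eq_of_forall_notMem_levelCell (hx : ∀ S, x ∉ levelCell f c S) : ∃ i, f i x = c := by
  by_contra! h
  exact hx {i | c < f i x} ⟨fun i hi => hi, fun i hi => (not_lt.1 hi).lt_of_ne (h i)⟩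

end LevelCell

section PartitionOfUnity

variable {X : Type*} [TopologicalSpace X] {m : ℕ}

lemma DimLE.exists_partitionOfUnity [CompactSpace X] [NormalSpace X] (h : DimLE X m)
    {𝒰 : Set (Set X)} (ho : ∀ U ∈ 𝒰, IsOpen U) (hc : ⋃₀ 𝒰 = univ) :
    ∃ (N : ℕ) (f : PartitionOfUnity (Fin N) X),
      (∀ x, {i | f i x ≠ 0}.ncard ≤ m + 1) ∧ ∀ i, ∃ U ∈ 𝒰, (f i : X → ℝ).support ⊆ U := by
  obtain ⟨𝒱, hVo, hVc, hVU, hVm⟩ := h 𝒰 ho hc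
  obtain ⟨t, ht⟩ := isCompact_univ.elim_finite_subcover (fun V : 𝒱 => (V : Set X))
    (fun V => hVo V V.2) (by rw [← sUnion_eq_iUnion, hVc])
  let V (i : Fin t.card) : Set X := (t.equivFin.symm i : 𝒱)
  have hV : univ ⊆ ⋃ i, V i := fun x hx => by
    obtain ⟨v, hv, hxv⟩ := mem_iUnion₂.1 (ht hx)
    exact mem_iUnion.2 ⟨t.equivFin ⟨v, hv⟩, by simpa [V] using hxv⟩
  have hVinj : V.Injective := (Subtype.val_injective.comp Subtype.val_injective).comp
    t.equivFin.symm.injective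
  have hVmem (i) : V i ∈ 𝒱 := (t.equivFin.symm i : 𝒱).2
  obtain ⟨f, hf⟩ := PartitionOfUnity.exists_isSubordinate isClosed_univ V
    (fun i => hVo _ (hVmem i)) hV
  have hfV (i) : (f i : X → ℝ).support ⊆ V i := (subset_tsupport _).trans (hf i)
  refine ⟨t.card, f, fun x => ?_, fun i => ?_⟩
  · exact (ncard_le_ncard_of_injOn (t := {U ∈ 𝒱 | x ∈ U}) V (fun i hi => ⟨hVmem i, hfV i hi⟩)
      hVinj.injOn (hVm x).1).trans (hVm x).2
  · obtain ⟨U, hU, hVU⟩ := hVU _ (hVmem i)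
    exact ⟨U, hU, (hfV i).trans hVU⟩

lemma exists_pos_forall_exists_lt_partitionOfUnity {ι : Type*} [Finite ι]
    (f : PartitionOfUnity ι X) : ∃ c > 0, ∀ x, ∃ i, c < f i x := by
  cases nonempty_fintype ι
  refine ⟨1 / (Fintype.card ι + 1), by positivity, fun x => ?_⟩
  by_contra! hle
  have hsum : ∑ i, f i x = 1 := by
    rw [← finsum_eq_sum_of_fintype, f.sum_eq_one (mem_univ x)]
  have hsum_le : ∑ i, f i x ≤ Fintype.card ι * (1 / (Fintype.card ι + 1)) := by
    simpa using Finset.sum_le_card_nsmul Finset.univ (f · x) _ fun i _ => hle i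
  rw [hsum, mul_one_div, one_le_div (by positivity)] at hsum_le
  linarith

/-- The cells of `k` distinct low levels serve as the `k` colours. A point is missed by a colour
only if some `f i` takes the corresponding level there, which happens for at most one colour per
`i`, and for none if `i` maximizes `f i`. -/
lemma coloredDimLE_of_partitionOfUnity {ι : Type} [Finite ι] (f : PartitionOfUnity ι X)
    (hf : ∀ x, {i | f i x ≠ 0}.ncard ≤ m + 1) {E : SetRel X X}
    (hE : ∀ i, (f i : X → ℝ).support ×ˢ (f i : X → ℝ).support ⊆ E) : ColoredDimLE X E m := by
  obtain ⟨c, hc, hcf⟩ := exists_pos_forall_exists_lt_partitionOfUnity f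
  intro k
  let e := (Ioo_infinite hc).natEmbedding
  let level (j : Fin k) : ℝ := e j
  have hlevel (j) : 0 < level j ∧ level j < c := (e j).2
  have hinj : level.Injective := (Subtype.val_injective.comp e.injective).comp Fin.val_injective
  refine ⟨Set ι, inferInstance, fun j => levelCell (fun i => f i) (level j),
    fun _ _ => isOpen_levelCell fun i => (f i).continuous, fun _ => pairwise_disjoint_levelCell,
    fun j S p hp => ?_, fun x => ?_⟩
  · obtain ⟨i, hi⟩ := hcf p.1
    have hiS : i ∈ S := by
      rw [eq_setOf_lt_of_mem_levelCell hp.1]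
      exact (hlevel j).2.trans hi
    have hpos {y} (hy : y ∈ levelCell (fun i => f i) (level j) S) : f i y ≠ 0 :=
      ((hlevel j).1.trans (hy.1 i hiS)).ne'
    exact hE i ⟨hpos hp.1, hpos hp.2⟩
  · obtain ⟨i₀, hi₀⟩ := hcf x
    have hmissed : {j | ∀ S, x ∉ levelCell (fun i => f i) (level j) S} ⊆
        level ⁻¹' ((f · x) '' ({i | f i x ≠ 0} \ {i₀})) := by
      intro j hj
      obtain ⟨i, hi⟩ := exists_eq_of_forall_notMem_levelCell hj
      refine ⟨i, ⟨hi.trans_ne (hlevel j).1.ne', ?_⟩, hi⟩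
      rintro rfl
      exact (hlevel j).2.not_gt (hi ▸ hi₀)
    have hpos : i₀ ∈ {i | f i x ≠ 0} := (hc.trans hi₀).ne'
    calc {j | ∀ S, x ∉ levelCell (fun i => f i) (level j) S}.ncard
      _ ≤ ((f · x) '' ({i | f i x ≠ 0} \ {i₀})).ncard :=
        ncard_le_ncard_of_injOn level (fun _ hj => hmissed hj) hinj.injOn
          ((toFinite _).image _)
      _ ≤ ({i | f i x ≠ 0} \ {i₀}).ncard := ncard_image_le
      _ ≤ m := by
        rw [ncard_sdiff_singleton_of_mem hpos]
        exact Nat.sub_le_of_le_add (hf x)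

end PartitionOfUnity

lemma DimLE.coloredDimLE {X : Type*} [UniformSpace X] [CompactSpace X] {m : ℕ}
    (h : DimLE X m) {E : SetRel X X} (hE : E ∈ 𝓤 X) : ColoredDimLE X E m := by
  have hcover : ⋃₀ {U : Set X | IsOpen U ∧ U ×ˢ U ⊆ E} = univ := by
    obtain ⟨V, hV, hVo, hVsymm, hVE⟩ := comp_open_symm_mem_uniformity_sets hE
    refine eq_univ_of_forall fun x => ⟨UniformSpace.ball x V,
      ⟨UniformSpace.isOpen_ball x hVo, fun p hp => hVE ?_⟩, UniformSpace.mem_ball_self x hV⟩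
    exact UniformSpace.mem_comp_of_mem_ball hp.1 hp.2
  obtain ⟨N, f, hfm, hfU⟩ := h.exists_partitionOfUnity (fun U hU => hU.1) hcover
  refine coloredDimLE_of_partitionOfUnity f hfm fun i => ?_
  obtain ⟨U, hU, hUf⟩ := hfU i
  exact (prod_mono hUf hUf).trans hU.2

end ColoredDimension

/-! ### The Ornstein–Weiss lemma -/

section FolnerFilter

open scoped Finset Pointwise

variable {G : Type*} [Group G] [DecidableEq G] {T T' A B K R I : Finset G} {t : G} {τ τ' ε : ℝ}

/-- Every `t ∈ T` moves at most the proportion `τ` of the points of the nonempty set `A` out of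
`A`. -/
def IsAlmostInvariant (T : Finset G) (τ : ℝ) (A : Finset G) : Prop :=
  A.Nonempty ∧ ∀ t ∈ T, (#(t • A \ A) : ℝ) ≤ τ * #A

lemma IsAlmostInvariant.mono (h : IsAlmostInvariant T τ A) (hT : T' ⊆ T) (hτ : τ ≤ τ') :
    IsAlmostInvariant T' τ' A :=
  ⟨h.1, fun t ht => (h.2 t (hT ht)).trans <| by gcongr⟩

/-- The filter of increasingly invariant nonempty finite subsets of `G`; Følner sequences are the
sequences of sets converging along it. -/
def folnerFilter (G : Type*) [Group G] [DecidableEq G] : Filter (Finset G) where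
  sets := {s | ∃ T τ, 0 < τ ∧ ∀ A, IsAlmostInvariant T τ A → A ∈ s}
  univ_sets := ⟨∅, 1, one_pos, fun _ _ => mem_univ _⟩
  sets_of_superset := fun ⟨T, τ, hτ, h⟩ hs => ⟨T, τ, hτ, fun A hA => hs (h A hA)⟩
  inter_sets := fun ⟨T, τ, hτ, h⟩ ⟨T', τ', hτ', h'⟩ => ⟨T ∪ T', min τ τ', lt_min hτ hτ', fun A hA =>
    ⟨h A (hA.mono Finset.subset_union_left (min_le_left _ _)),
      h' A (hA.mono Finset.subset_union_right (min_le_right _ _))⟩⟩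

lemma mem_folnerFilter {s : Set (Finset G)} :
    s ∈ folnerFilter G ↔ ∃ T τ, 0 < τ ∧ ∀ A, IsAlmostInvariant T τ A → A ∈ s :=
  Iff.rfl

lemma eventually_isAlmostInvariant (T : Finset G) (hτ : 0 < τ) :
    ∀ᶠ A in folnerFilter G, IsAlmostInvariant T τ A :=
  ⟨T, τ, hτ, fun _ => id⟩

lemma eventually_nonempty_folnerFilter : ∀ᶠ A in folnerFilter G, A.Nonempty :=
  (eventually_isAlmostInvariant ∅ one_pos).mono fun _ hA => hA.1

lemma tendsto_card_smul_sdiff_div (t : G) :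
    Tendsto (fun A : Finset G => (#(t • A \ A) : ℝ) / #A) (folnerFilter G) (𝓝 0) := by
  refine tendsto_order.2 ⟨fun b hb => .of_forall fun A => hb.trans_le (by positivity),
    fun b hb => ?_⟩
  filter_upwards [eventually_isAlmostInvariant {t} (half_pos hb)] with A hA
  exact (div_le_of_le_mul₀ (by positivity) (half_pos hb).le
    (hA.2 t (Finset.mem_singleton_self t))).trans_lt (half_lt_self hb)

lemma card_mul_sdiff_le : #((T * A) \ A) ≤ ∑ t ∈ T, #(t • A \ A) := by
  have hunion : (T * A) \ A = T.biUnion fun t => t • A \ A := by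
    ext g
    simp [← smul_eq_mul, ← Finset.biUnion_smul_finset, ← exists_and_right, and_assoc]
  exact hunion ▸ Finset.card_biUnion_le

lemma tendsto_card_mul_sdiff_div (T : Finset G) :
    Tendsto (fun A : Finset G => (#((T * A) \ A) : ℝ) / #A) (folnerFilter G) (𝓝 0) := by
  have hsum : Tendsto (fun A : Finset G => ∑ t ∈ T, (#(t • A \ A) : ℝ) / #A) (folnerFilter G)
      (𝓝 0) := by
    simpa using tendsto_finsetSum T fun t _ => tendsto_card_smul_sdiff_div t
  refine squeeze_zero (fun A => by positivity) (fun A => ?_) hsum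
  rw [← Finset.sum_div]
  gcongr
  exact_mod_cast card_mul_sdiff_le

lemma card_le_card_interior_add_sum :
    #A ≤ #{g ∈ A | ∀ k ∈ K, k * g ∈ A} + ∑ k ∈ K, #(k • A \ A) := by
  have hsub : A ⊆ {g ∈ A | ∀ k ∈ K, k * g ∈ A} ∪ K.biUnion fun k => k⁻¹ • (k • A \ A) := by
    intro g hg
    by_cases hgK : ∀ k ∈ K, k * g ∈ A
    · exact Finset.mem_union_left _ (Finset.mem_filter.2 ⟨hg, hgK⟩)
    · push Not at hgK
      obtain ⟨k, hk, hkg⟩ := hgK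
      refine Finset.mem_union_right _ (Finset.mem_biUnion.2
        ⟨k, hk, Finset.mem_inv_smul_finset_iff.2 ?_⟩)
      exact Finset.mem_sdiff.2 ⟨Finset.smul_mem_smul_finset hg, hkg⟩
  refine (Finset.card_le_card hsub).trans ((Finset.card_union_le _ _).trans ?_)
  gcongr
  simpa using Finset.card_biUnion_le (s := K) (t := fun k => k⁻¹ • (k • A \ A))

lemma eventually_half_card_le_card_interior (K : Finset G) :
    ∀ᶠ A : Finset G in folnerFilter G, (#A : ℝ) / 2 ≤ #{g ∈ A | ∀ k ∈ K, k * g ∈ A} := by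
  have hsum : Tendsto (fun A : Finset G => ∑ k ∈ K, (#(k • A \ A) : ℝ) / #A) (folnerFilter G)
      (𝓝 0) := by
    simpa using tendsto_finsetSum K fun k _ => tendsto_card_smul_sdiff_div k
  filter_upwards [hsum.eventually_le_const one_half_pos, eventually_nonempty_folnerFilter]
    with A hA hne
  rw [← Finset.sum_div, div_le_iff₀ (by exact_mod_cast hne.card_pos)] at hA
  have hcard : (#A : ℝ) ≤ #{g ∈ A | ∀ k ∈ K, k * g ∈ A} + ∑ k ∈ K, (#(k • A \ A) : ℝ) := by
    exact_mod_cast card_le_card_interior_add_sum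
  linarith

lemma card_smul_mul_sdiff_le : #(t • (K * R) \ (K * R)) ≤ #(t • K \ K) * #R := by
  refine (Finset.card_le_card ?_).trans Finset.card_mul_le
  rw [← smul_mul_assoc]
  rintro _ hx
  obtain ⟨hx, hxn⟩ := Finset.mem_sdiff.1 hx
  obtain ⟨k, hk, r, hr, rfl⟩ := Finset.mem_mul.1 hx
  exact Finset.mul_mem_mul (Finset.mem_sdiff.2 ⟨hk, fun hkK => hxn (Finset.mul_mem_mul hkK hr)⟩) hr

lemma card_smul_sdiff_sdiff_le :
    #(t • (A \ B) \ (A \ B)) ≤ #(t • A \ A) + #(t • B \ B) := by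
  have hsub : t • (A \ B) \ (A \ B) ⊆ (t • A \ A) ∪ (B \ t • B) := by
    rw [Finset.smul_finset_sdiff]
    intro x hx
    simp only [Finset.mem_sdiff, Finset.mem_union] at hx ⊢
    tauto
  calc #(t • (A \ B) \ (A \ B)) ≤ #(t • A \ A) + #(B \ t • B) :=
        (Finset.card_le_card hsub).trans (Finset.card_union_le _ _)
    _ = #(t • A \ A) + #(t • B \ B) := by
      rw [Finset.card_sdiff_comm (Finset.card_smul_finset t B).symm]

lemma IsAlmostInvariant.sdiff (hA : IsAlmostInvariant T τ A) (hB : IsAlmostInvariant T τ B)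
    (hBA : B ⊆ A) (hτ : 0 ≤ τ) (hε : 0 < ε) (h : ε * #A < #(A \ B)) :
    IsAlmostInvariant T (2 * τ / ε) (A \ B) := by
  have hpos : (0 : ℝ) < #(A \ B) := h.trans_le' (by positivity)
  refine ⟨Finset.card_pos.1 (by exact_mod_cast hpos), fun t ht => ?_⟩
  calc (#(t • (A \ B) \ (A \ B)) : ℝ) ≤ #(t • A \ A) + #(t • B \ B) := by
        exact_mod_cast card_smul_sdiff_sdiff_le
    _ ≤ τ * #A + τ * #B := add_le_add (hA.2 t ht) (hB.2 t ht)
    _ ≤ τ * #A + τ * #A := by gcongr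
    _ = 2 * τ / ε * (ε * #A) := by field_simp; ring
    _ ≤ 2 * τ / ε * #(A \ B) := by gcongr

/-- By maximality, no further translate of `K` can be added that overlaps the previous ones in
proportion less than `ε`. -/
lemma exists_maximal_quasitiling (K I : Finset G) (hε : ε ≤ 1) :
    ∃ R ⊆ I, (1 - ε) * (#K * #R) ≤ #(K * R) ∧ ∀ g ∈ I, ε * #K ≤ #(K * {g} ∩ (K * R)) := by
  classical
  obtain ⟨R, hR⟩ := Finset.exists_maximal
    (s := {R ∈ I.powerset | (1 - ε) * (#K * #R) ≤ (#(K * R) : ℝ)}) ⟨∅, by simp⟩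
  simp only [Finset.mem_filter, Finset.mem_powerset] at hR
  refine ⟨R, hR.prop.1, hR.prop.2, fun g hg => ?_⟩
  by_contra! hlt
  have hcard : (#(K * insert g R) : ℝ) = #K + #(K * R) - #(K * {g} ∩ (K * R)) := by
    rw [Finset.insert_eq, Finset.mul_union, eq_sub_iff_add_eq, ← Finset.card_mul_singleton K g]
    exact_mod_cast Finset.card_union_add_card_inter _ _
  have hgR : g ∈ R := by
    refine hR.le_of_ge ⟨Finset.insert_subset hg hR.prop.1, ?_⟩ (Finset.subset_insert g R)
      (Finset.mem_insert_self g R)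
    calc (1 - ε) * (#K * #(insert g R)) ≤ (1 - ε) * (#K * (#R + 1)) := by
          have := sub_nonneg.2 hε
          gcongr
          exact_mod_cast Finset.card_insert_le g R
      _ ≤ #(K * insert g R) := by linarith [hR.prop.2]
  have hinter : K * {g} ∩ (K * R) = K * {g} :=
    Finset.inter_eq_left.2 (Finset.mul_subset_mul_left (Finset.singleton_subset_iff.2 hgR))
  rw [hinter, Finset.card_mul_singleton] at hlt
  exact hlt.not_ge (mul_le_of_le_one_left (by positivity) hε)

lemma card_mul_le_of_forall_le_card_inter {c : ℝ} (h : ∀ g ∈ I, c ≤ #(K * {g} ∩ B)) :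
    #I * c ≤ #B * #K := by
  have hbelow (y : G) : #(I.bipartiteBelow (fun g y => y ∈ K * {g}) y) ≤ #K := by
    rw [← Finset.card_inv K, ← Finset.card_mul_singleton K⁻¹ y]
    refine Finset.card_le_card fun g hg => ?_
    obtain ⟨k, hk, _, hg', rfl⟩ := Finset.mem_mul.1 ((Finset.mem_bipartiteBelow _).1 hg).2
    rw [Finset.mem_singleton.1 hg']
    exact Finset.mem_mul.2 ⟨k⁻¹, Finset.inv_mem_inv hk, k * g, by simp, by group⟩
  simpa using Finset.card_nsmul_le_card_nsmul (t := B) (fun g y => y ∈ K * {g})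
    (fun g hg => (h g hg).trans_eq (by
      rw [Finset.inter_comm, Finset.bipartiteAbove, Finset.filter_mem_eq_inter]))
    (n := (#K : ℝ)) fun y _ => mod_cast hbelow y

lemma exists_quasitiling (hK : K.Nonempty) (I : Finset G) (hε : ε ≤ 1) :
    ∃ R ⊆ I, (1 - ε) * (#K * #R) ≤ #(K * R) ∧ ε * #I ≤ #(K * R) := by
  obtain ⟨R, hRI, hR, hmax⟩ := exists_maximal_quasitiling K I hε
  have hK₀ : (0 : ℝ) < #K := by exact_mod_cast hK.card_pos
  have hcount := card_mul_le_of_forall_le_card_inter hmax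
  exact ⟨R, hRI, hR, le_of_mul_le_mul_right (by linarith) hK₀⟩

end FolnerFilter

section OrnsteinWeiss

open scoped Finset Pointwise

variable {G : Type*} [Group G] [DecidableEq G]

/-- The hypotheses on a set function `a` under which the Ornstein–Weiss lemma yields the
convergence of `a A / #A`. -/
structure IsInvariantSubadditive (a : Finset G → ℝ) : Prop where
  map_empty : a ∅ = 0
  mono : Monotone a
  union_le : ∀ A B, a (A ∪ B) ≤ a A + a B
  mul_singleton_le : ∀ A g, a (A * {g}) ≤ a A

namespace IsInvariantSubadditive

variable {a : Finset G → ℝ} (ha : IsInvariantSubadditive a) {c c' ε θ : ℝ}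

include ha

lemma nonneg (A : Finset G) : 0 ≤ a A :=
  ha.map_empty.symm.trans_le (ha.mono A.empty_subset)

lemma mul_le (K R : Finset G) : a (K * R) ≤ #R * a K := by
  induction R using Finset.induction_on with
  | empty => simp [ha.map_empty]
  | insert g R hg ih =>
    rw [Finset.insert_eq, Finset.mul_union, ← Finset.insert_eq, Finset.card_insert_of_notMem hg]
    push_cast
    linarith [ha.union_le (K * {g}) (K * R), ha.mul_singleton_le K g]

lemma le_mul_card (A : Finset G) : a A ≤ a {1} * #A := by
  simpa [Finset.singleton_mul, mul_comm] using ha.mul_le {1} A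

lemma mul_le_add (T : Finset G) (A : Finset G) : a (T * A) ≤ a A + a {1} * #((T * A) \ A) :=
  calc a (T * A) ≤ a (A ∪ (T * A) \ A) := ha.mono (by simp)
    _ ≤ a A + a {1} * #((T * A) \ A) :=
      (ha.union_le _ _).trans (by gcongr; exact ha.le_mul_card _)

lemma nonneg_of_frequently_le (hc : ∃ᶠ K in folnerFilter G, a K ≤ c * #K) : 0 ≤ c := by
  obtain ⟨K, hKc, hK⟩ := (hc.and_eventually eventually_nonempty_folnerFilter).exists
  exact nonneg_of_mul_nonneg_left ((ha.nonneg K).trans hKc) (by exact_mod_cast hK.card_pos)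

lemma eventually_exists_quasitiled_subset (T : Finset G) {τ : ℝ} (hτ : 0 < τ) (hε : 0 < ε)
    (hε' : ε ≤ 1 / 2) (hc : ∃ᶠ K in folnerFilter G, a K ≤ c * #K) :
    ∀ᶠ A in folnerFilter G, ∃ B ⊆ A,
      IsAlmostInvariant T τ B ∧ ε / 2 * #A ≤ #B ∧ a B ≤ c / (1 - ε) * #B := by
  obtain ⟨K, hKc, hK, hKτ⟩ :=
    (hc.and_eventually (eventually_isAlmostInvariant T (half_pos hτ))).exists
  have hc₀ := ha.nonneg_of_frequently_le hc
  have hε₁ : 0 < 1 - ε := by linarith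
  filter_upwards [eventually_half_card_le_card_interior K, eventually_nonempty_folnerFilter]
    with A hAI hA
  obtain ⟨R, hRI, hKR, hIR⟩ := exists_quasitiling hK {g ∈ A | ∀ k ∈ K, k * g ∈ A}
    (hε'.trans one_half_lt_one.le)
  have hcard : ε / 2 * #A ≤ #(K * R) := by nlinarith
  have hpos : (0 : ℝ) < #(K * R) := hcard.trans_lt' <| by
    have : (0 : ℝ) < #A := by exact_mod_cast hA.card_pos
    positivity
  have hKR₂ : (#K : ℝ) * #R ≤ 2 * #(K * R) := by
    have : (0 : ℝ) ≤ #K * #R := by positivity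
    nlinarith
  have hKR' : (#K : ℝ) * #R ≤ #(K * R) / (1 - ε) := by rwa [le_div_iff₀' hε₁]
  refine ⟨K * R, ?_, ⟨Finset.card_pos.1 (by exact_mod_cast hpos), fun t ht => ?_⟩, hcard, ?_⟩
  · rintro _ hx
    obtain ⟨k, hk, g, hg, rfl⟩ := Finset.mem_mul.1 hx
    exact (Finset.mem_filter.1 (hRI hg)).2 k hk
  · calc (#(t • (K * R) \ (K * R)) : ℝ) ≤ #(t • K \ K) * #R := by
          exact_mod_cast card_smul_mul_sdiff_le
      _ ≤ τ / 2 * #K * #R := by gcongr; exact hKτ t ht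
      _ = τ / 2 * (#K * #R) := mul_assoc _ _ _
      _ ≤ τ / 2 * (2 * #(K * R)) := mul_le_mul_of_nonneg_left hKR₂ (half_pos hτ).le
      _ = τ * #(K * R) := by ring
  · calc a (K * R) ≤ #R * a K := ha.mul_le K R
      _ ≤ #R * (c * #K) := by gcongr
      _ = c * (#K * #R) := by ring
      _ ≤ c * (#(K * R) / (1 - ε)) := by gcongr
      _ = c / (1 - ε) * #(K * R) := by ring

/-- A definite proportion of any sufficiently invariant set `A` is efficiently quasi-tiled; the
rest of `A` is either negligible or invariant enough for `h` to apply. -/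
lemma eventually_le_of_frequently_of_eventually (hε : 0 < ε) (hε' : ε ≤ 1 / 2) (hθ : 0 ≤ θ)
    (hc : ∃ᶠ K in folnerFilter G, a K ≤ c * #K)
    (h : ∀ᶠ A in folnerFilter G, a A ≤ (c / (1 - ε) + θ) * #A) :
    ∀ᶠ A in folnerFilter G,
      a A ≤ (c / (1 - ε) + max (a {1} * ε) ((1 - ε / 2) * θ)) * #A := by
  obtain ⟨T, τ, hτ, hT⟩ := mem_folnerFilter.1 h
  have hτ' : 0 < ε * τ / 2 := by positivity
  filter_upwards [ha.eventually_exists_quasitiled_subset T hτ' hε hε' hc,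
    eventually_isAlmostInvariant T hτ'] with A ⟨B, hBA, hB, hBcard, haB⟩ hA
  have hcard : (#A : ℝ) = #B + #(A \ B) := by
    rw [← Finset.card_sdiff_add_card_eq_card hBA, Nat.cast_add, add_comm]
  suffices a (A \ B) ≤
      c / (1 - ε) * #(A \ B) + max (a {1} * ε) ((1 - ε / 2) * θ) * #A by
    have haA : a A ≤ a B + a (A \ B) := by
      simpa [Finset.union_eq_right.2 hBA] using ha.union_le B (A \ B)
    calc a A ≤ c / (1 - ε) * #B +
          (c / (1 - ε) * #(A \ B) + max (a {1} * ε) ((1 - ε / 2) * θ) * #A) := by linarith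
      _ = (c / (1 - ε) + max (a {1} * ε) ((1 - ε / 2) * θ)) * #A := by rw [hcard]; ring
  obtain hsmall | hlarge := le_or_gt (#(A \ B) : ℝ) (ε * #A)
  · have hc₀ : 0 ≤ c / (1 - ε) * #(A \ B) :=
      mul_nonneg (div_nonneg (ha.nonneg_of_frequently_le hc) (by linarith)) (by positivity)
    calc a (A \ B) ≤ a {1} * #(A \ B) := ha.le_mul_card _
      _ ≤ a {1} * (ε * #A) := by
          have := ha.nonneg {1}
          gcongr
      _ = a {1} * ε * #A := (mul_assoc _ _ _).symm
      _ ≤ max (a {1} * ε) ((1 - ε / 2) * θ) * #A := by gcongr; exact le_max_left _ _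
      _ ≤ _ := le_add_of_nonneg_left hc₀
  · have hinv : IsAlmostInvariant T τ (A \ B) :=
      (hA.sdiff hB hBA hτ'.le hε hlarge).mono subset_rfl (by field_simp; rfl)
    calc a (A \ B) ≤ c / (1 - ε) * #(A \ B) + θ * #(A \ B) := by
          rw [← add_mul]
          exact hT _ hinv
      _ ≤ c / (1 - ε) * #(A \ B) + θ * ((1 - ε / 2) * #A) := by
          gcongr
          linarith
      _ = c / (1 - ε) * #(A \ B) + (1 - ε / 2) * θ * #A := by ring
      _ ≤ _ := by gcongr; exact le_max_right _ _

lemma eventually_le_of_frequently_le (hε : 0 < ε) (hε' : ε ≤ 1 / 2)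
    (hc : ∃ᶠ K in folnerFilter G, a K ≤ c * #K) :
    ∀ᶠ A in folnerFilter G, a A ≤ (c / (1 - ε) + a {1} * ε) * #A := by
  have hD := ha.nonneg {1}
  set q := 1 - ε / 2 with hq
  have hq₀ : 0 ≤ q := by linarith
  have hq₁ : q < 1 := by linarith
  have hiter (n : ℕ) : ∀ᶠ A in folnerFilter G,
      a A ≤ (c / (1 - ε) + max (a {1} * ε) (q ^ n * a {1})) * #A := by
    induction n with
    | zero =>
      have hc₀ : 0 ≤ c / (1 - ε) := div_nonneg (ha.nonneg_of_frequently_le hc) (by linarith)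
      refine .of_forall fun A => (ha.le_mul_card A).trans ?_
      gcongr
      simpa using (le_max_right _ _).trans (le_add_of_nonneg_left hc₀)
    | succ n ih =>
      have hmax : max (a {1} * ε) (q * max (a {1} * ε) (q ^ n * a {1})) ≤
          max (a {1} * ε) (q ^ (n + 1) * a {1}) := by
        rw [mul_max_of_nonneg _ _ hq₀, ← mul_assoc q (q ^ n), ← pow_succ']
        exact max_le (le_max_left _ _)
          (max_le_max_right _ (mul_le_of_le_one_left (by positivity) hq₁.le))
      exact (ha.eventually_le_of_frequently_of_eventually hε hε'
        (le_max_of_le_left (by positivity)) hc ih).mono fun A hA => hA.trans <| by gcongr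
  obtain ⟨n, hn⟩ := exists_pow_lt_of_lt_one hε hq₁
  have hmax : max (a {1} * ε) (q ^ n * a {1}) = a {1} * ε :=
    max_eq_left (by rw [mul_comm]; gcongr)
  simpa only [hmax] using hiter n

lemma eventually_le_of_frequently_le_of_lt (hcc' : c < c')
    (hc : ∃ᶠ K in folnerFilter G, a K ≤ c * #K) :
    ∀ᶠ A in folnerFilter G, a A ≤ c' * #A := by
  have hlim : Tendsto (fun ε : ℝ => c / (1 - ε) + a {1} * ε) (𝓝[>] 0) (𝓝 c) := by
    have : ContinuousAt (fun ε : ℝ => c / (1 - ε) + a {1} * ε) 0 := by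
      fun_prop (disch := norm_num)
    simpa [ContinuousAt] using this.mono_left nhdsWithin_le_nhds
  obtain ⟨ε, hεc, hε, hε'⟩ := ((hlim.eventually_le_const hcc').and
    (Ioc_mem_nhdsGT one_half_pos)).exists
  exact (ha.eventually_le_of_frequently_le hε hε' hc).mono fun A hA => hA.trans <| by gcongr

theorem exists_tendsto_div_card :
    ∃ L, Tendsto (fun A => a A / #A) (folnerFilter G) (𝓝 L) := by
  refine tendsto_of_no_upcrossings dense_univ ?_ ?_ ?_
  · rintro c - c' - hcc' ⟨hlt, hgt⟩
    obtain ⟨d, hcd, hdc'⟩ := exists_between hcc'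
    have hfreq : ∃ᶠ K in folnerFilter G, a K ≤ c * #K :=
      (hlt.and_eventually eventually_nonempty_folnerFilter).mono fun K hK =>
        ((div_lt_iff₀ (by exact_mod_cast hK.2.card_pos)).1 hK.1).le
    have hev := ha.eventually_le_of_frequently_le_of_lt hcd hfreq
    obtain ⟨A, hA, hne, hle⟩ :=
      (hgt.and_eventually (eventually_nonempty_folnerFilter.and hev)).exists
    exact hA.not_ge (((div_le_iff₀ (by exact_mod_cast hne.card_pos)).2 hle).trans hdc'.le)
  · exact isBoundedUnder_of ⟨a {1}, fun A =>
      div_le_of_le_mul₀ (by positivity) (ha.nonneg _) (ha.le_mul_card A)⟩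
  · exact isBoundedUnder_of ⟨0, fun A => div_nonneg (ha.nonneg A) (by positivity)⟩

end IsInvariantSubadditive

end OrnsteinWeiss

/-! ### Subshifts -/

section Subshift

open scoped Finset Pointwise Uniformity

lemma IsFolnerSeq.tendsto_folnerFilter {G : Type*} [Group G] [DecidableEq G] {Φ : ℕ → Finset G}
    (hΦ : IsFolnerSeq fun n => (Φ n : Set G)) : Tendsto Φ atTop (folnerFilter G) := by
  rintro s ⟨T, τ, hτ, hs⟩
  have hT : ∀ᶠ n in atTop, ∀ t ∈ T, (#(t • Φ n \ Φ n) : ℝ) ≤ τ * #(Φ n) := by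
    refine (eventually_all_finset T).2 fun t _ => ?_
    filter_upwards [(hΦ.2 t).eventually_le_const hτ] with n hn
    have hpos : (0 : ℝ) < #(Φ n) := by exact_mod_cast (Finset.coe_nonempty.1 (hΦ.1 n).2).card_pos
    rw [ncard_coe_finset, div_le_iff₀ hpos] at hn
    refine le_trans (Nat.cast_le.2 ?_) hn
    rw [← ncard_coe_finset, Finset.coe_sdiff, Finset.coe_smul_finset]
    exact ncard_le_ncard subset_union_right
      (((hΦ.1 n).1.sdiff).union (((hΦ.1 n).1.image _).sdiff))
  exact hT.mono fun n hn => hs _ ⟨Finset.coe_nonempty.1 (hΦ.1 n).2, hn⟩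

lemma covDim_eq_top_iff {Y : Type*} [TopologicalSpace Y] : covDim Y = ⊤ ↔ ∀ m, ¬ DimLE Y m := by
  refine sInf_eq_top.trans ⟨fun h m hm => ENat.natCast_ne_top m (h _ ⟨m, rfl, hm⟩), fun h => ?_⟩
  rintro _ ⟨m, rfl, hm⟩
  exact (h m hm).elim

section Close

variable {G K : Type*} [PseudoMetricSpace K] {X : Set (G → K)} {A B : Finset G} {δ ε : ℝ} {m : ℕ}

/-- The relation on `X ⊆ K^G` of being `δ`-close at each of the coordinates in `A`. -/
def closeOn (X : Set (G → K)) (A : Finset G) (δ : ℝ) : SetRel X X :=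
  {p | ∀ g ∈ A, dist (p.1.1 g) (p.2.1 g) < δ}

/-- The coloured dimension of `X` at the scale `closeOn X A δ`, with junk value `0` when it is
infinite. -/
noncomputable def colNum (X : Set (G → K)) (δ : ℝ) (A : Finset G) : ℕ :=
  sInf {m | ColoredDimLE X (closeOn X A δ) m}

lemma coloredDimLE_colNum (h : ∃ m, ColoredDimLE X (closeOn X A δ) m) :
    ColoredDimLE X (closeOn X A δ) (colNum X δ A) :=
  Nat.sInf_mem h

lemma colNum_le (h : ColoredDimLE X (closeOn X A δ) m) : colNum X δ A ≤ m :=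
  Nat.sInf_le h

@[simp]
lemma closeOn_empty : closeOn X ∅ δ = univ := by
  simp [closeOn]

lemma closeOn_anti (h : A ⊆ B) : closeOn X B δ ⊆ closeOn X A δ :=
  fun _ hp g hg => hp g (h hg)

lemma closeOn_union [DecidableEq G] :
    closeOn X (A ∪ B) δ = closeOn X A δ ∩ closeOn X B δ := by
  ext p
  simp only [closeOn, mem_inter_iff, mem_ofPred_eq, Finset.forall_mem_union]

lemma coloredDimLE_closeOn_of_dimLE (hX : IsCompact X) (hδ : 0 < δ)
    (h : DimLE ↥(projTo (A : Set G) '' X) m) : ColoredDimLE X (closeOn X A δ) m := by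
  have hproj : Continuous (projTo (K := K) (A : Set G)) := by unfold projTo; fun_prop
  have := isCompact_iff_compactSpace.1 (hX.image hproj)
  have hcover := h.coloredDimLE (Metric.dist_mem_uniformity hδ)
  refine (hcover.preimage (hproj.restrict (mapsTo_image _ X))).mono fun p hp g hg => ?_
  exact (dist_le_pi_dist (projTo A p.1.1) (projTo A p.2.1) ⟨g, hg⟩).trans_lt hp

lemma coe_colNum_le_covDim (hX : IsCompact X) (hδ : 0 < δ) (A : Finset G) :
    (colNum X δ A : ℕ∞) ≤ covDim ↥(projTo (A : Set G) '' X) := by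
  refine le_sInf ?_
  rintro _ ⟨m, rfl, hm⟩
  exact_mod_cast colNum_le (coloredDimLE_closeOn_of_dimLE hX hδ hm)

lemma exists_forall_dist_lt_imp_mem_of_mem_uniformity {E : SetRel (G → K) (G → K)}
    (hE : E ∈ 𝓤 (G → K)) :
    ∃ (T : Finset G) (δ : ℝ), 0 < δ ∧ ∀ x y, (∀ t ∈ T, dist (x t) (y t) < δ) → (x, y) ∈ E := by
  rw [Pi.uniformity, (HasBasis.iInf' fun _ => Metric.uniformity_basis_dist.comap _).mem_iff] at hE
  obtain ⟨⟨T, r⟩, ⟨hT, hr⟩, hsub⟩ := hE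
  obtain ⟨δ, hδr, hδ⟩ := (((eventually_all_finite hT).2 fun t ht =>
    eventually_nhdsWithin_of_eventually_nhds (eventually_lt_nhds (hr t ht))).and
      (eventually_mem_nhdsWithin (a := (0 : ℝ)) (s := Ioi 0))).exists
  refine ⟨hT.toFinset, δ, hδ, fun x y hxy => hsub (mem_iInter₂.2 fun t ht => ?_)⟩
  exact (hxy t (hT.mem_toFinset.2 ht)).trans (hδr t ht)

end Close

variable {G K : Type*} [Group G] [PseudoMetricSpace K] {X : Set (G → K)} {A B : Finset G}
  {δ ε : ℝ} {m : ℕ} {α : G → ℝ}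

section

variable [CompactSpace K]

lemma continuous_rhoMetric (hα : Summable α) :
    Continuous fun p : (G → K) × (G → K) => rhoMetric α p.1 p.2 := by
  refine continuous_tsum (fun g => by fun_prop) (hα.abs.mul_right (Metric.diam (univ : Set K)))
    fun g p => ?_
  rw [norm_mul, Real.norm_eq_abs, Real.norm_of_nonneg dist_nonneg]
  gcongr
  exact Metric.dist_le_diam_of_mem isCompact_univ.isBounded (mem_univ _) (mem_univ _)

lemma exists_forall_dist_lt_imp_rhoMetric_lt (hα : Summable α) (hε : 0 < ε) :
    ∃ (T : Finset G) (δ : ℝ), 0 < δ ∧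
      ∀ x y : G → K, (∀ t ∈ T, dist (x t) (y t) < δ) → rhoMetric α x y < ε := by
  refine exists_forall_dist_lt_imp_mem_of_mem_uniformity (E := {p | rhoMetric α p.1 p.2 < ε}) ?_
  rw [← nhdsSet_diagonal_eq_uniformity]
  refine (isOpen_lt (continuous_rhoMetric hα) continuous_const).mem_nhdsSet.2 ?_
  rintro ⟨x, y⟩ (rfl : x = y)
  simpa [rhoMetric] using hε

end

variable [DecidableEq G]

lemma rhoMetricF_lt_of_mem_closeOn {T : Finset G} (hA : A.Nonempty)
    (hT : ∀ x y : G → K, (∀ t ∈ T, dist (x t) (y t) < δ) → rhoMetric α x y < ε) {p : X × X}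
    (hp : p ∈ closeOn X (T * A) δ) : rhoMetricF α A p.1.1 p.2.1 < ε := by
  refine ((A.finite_toSet.image _).csSup_lt_iff (hA.to_set.image _)).2 ?_
  rintro _ ⟨g, hg, rfl⟩
  exact hT _ _ fun t ht => hp _ (Finset.mul_mem_mul ht hg)

namespace IsSubshift

lemma coloredDimLE_closeOn_mul_singleton (hX : IsSubshift K X)
    (h : ColoredDimLE X (closeOn X A δ) m) (g : G) :
    ColoredDimLE X (closeOn X (A * {g}) δ) m := by
  have hshift : Continuous (shift g : (G → K) → G → K) := by unfold shift; fun_prop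
  refine (h.preimage (hshift.restrict (hX.2 g))).mono fun p hp k hk => ?_
  obtain ⟨a, ha, _, hg, rfl⟩ := Finset.mem_mul.1 hk
  obtain rfl := Finset.mem_singleton.1 hg
  exact hp a ha

omit [DecidableEq G] in
lemma exists_coloredDimLE_closeOn (hX : IsSubshift K X) (hB : B.Nonempty)
    (h : ColoredDimLE X (closeOn X B δ) m) (A : Finset G) :
    ∃ m, ColoredDimLE X (closeOn X A δ) m := by
  classical
  obtain ⟨b, hb⟩ := hB
  have hone (g : G) : ColoredDimLE X (closeOn X {g} δ) m := by
    simpa using hX.coloredDimLE_closeOn_mul_singleton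
      (h.mono (closeOn_anti (Finset.singleton_subset_iff.2 hb))) (b⁻¹ * g)
  induction A using Finset.induction_on with
  | empty => exact ⟨0, by simpa using ColoredDimLE.univ X⟩
  | insert g A _ ih =>
    obtain ⟨n, hn⟩ := ih
    exact ⟨m + n, by simpa only [Finset.insert_eq, closeOn_union] using (hone g).inter hn⟩

lemma isInvariantSubadditive_colNum (hX : IsSubshift K X)
    (h : ∀ A, ∃ m, ColoredDimLE X (closeOn X A δ) m) :
    IsInvariantSubadditive fun A => (colNum X δ A : ℝ) where
  map_empty := by
    have hempty : ColoredDimLE X (closeOn X (∅ : Finset G) δ) 0 := by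
      simpa using ColoredDimLE.univ X
    exact_mod_cast Nat.le_zero.1 (colNum_le hempty)
  mono A B hAB := Nat.cast_le.2 <|
    colNum_le ((coloredDimLE_colNum (h B)).mono (closeOn_anti hAB))
  union_le A B := by
    have hunion := (coloredDimLE_colNum (h A)).inter (coloredDimLE_colNum (h B))
    rw [← closeOn_union] at hunion
    exact_mod_cast colNum_le hunion
  mul_singleton_le A g := by
    exact_mod_cast colNum_le
      (hX.coloredDimLE_closeOn_mul_singleton (coloredDimLE_colNum (h A)) g)

end IsSubshift

variable [NeBot (folnerFilter G)] {L : ℝ}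

lemma ofReal_le_liminf_covDim_div_card (hX : IsCompact X) (hδ : 0 < δ)
    (hL : Tendsto (fun A => (colNum X δ A : ℝ) / #A) (folnerFilter G) (𝓝 L)) :
    ENNReal.ofReal L ≤ liminf (fun A : Finset G =>
      ((covDim ↥(projTo (A : Set G) '' X) : ℕ∞) : ℝ≥0∞) / (#A : ℝ≥0∞)) (folnerFilter G) := by
  rw [← (ENNReal.tendsto_ofReal hL).liminf_eq]
  refine liminf_le_liminf (eventually_nonempty_folnerFilter.mono fun A hA => ?_)
  rw [ENNReal.ofReal_div_of_pos (by exact_mod_cast hA.card_pos), ENNReal.ofReal_natCast,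
    ENNReal.ofReal_natCast]
  gcongr
  exact_mod_cast ENat.toENNReal_le.2 (coe_colNum_le_covDim hX hδ A)

variable [CompactSpace K]

lemma limsup_widim_div_card_le_ofReal {T : Finset G} (hX : IsSubshift K X)
    (h : ∀ A, ∃ m, ColoredDimLE X (closeOn X A δ) m)
    (hT : ∀ x y : G → K, (∀ t ∈ T, dist (x t) (y t) < δ) → rhoMetric α x y < ε)
    (hL : Tendsto (fun A => (colNum X δ A : ℝ) / #A) (folnerFilter G) (𝓝 L)) :
    limsup (fun A : Finset G =>
      ((widim X (fun x y : X => rhoMetricF α A x.1 y.1) ε : ℕ∞) : ℝ≥0∞) / (#A : ℝ≥0∞))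
      (folnerFilter G) ≤ ENNReal.ofReal L := by
  have := isCompact_iff_compactSpace.1 hX.1.isCompact
  have hlim := hL.add ((tendsto_card_mul_sdiff_div T).const_mul (colNum X δ {1} : ℝ))
  rw [mul_zero, add_zero] at hlim
  rw [← (ENNReal.tendsto_ofReal hlim).limsup_eq]
  refine limsup_le_limsup (eventually_nonempty_folnerFilter.mono fun A hA => ?_)
  have hA' : (0 : ℝ) < #A := by exact_mod_cast hA.card_pos
  have hwidim : widim X (fun x y : X => rhoMetricF α A x.1 y.1) ε ≤ colNum X δ (T * A) :=
    sInf_le ⟨_, rfl, (coloredDimLE_colNum (h _)).widimLE fun _ hp =>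
      rhoMetricF_lt_of_mem_closeOn hA hT hp⟩
  calc ((widim X (fun x y : X => rhoMetricF α A x.1 y.1) ε : ℕ∞) : ℝ≥0∞) / (#A : ℝ≥0∞)
    _ ≤ (colNum X δ (T * A) : ℝ≥0∞) / (#A : ℝ≥0∞) := by
      gcongr
      exact_mod_cast ENat.toENNReal_le.2 hwidim
    _ = ENNReal.ofReal (colNum X δ (T * A) / #A) := by
      rw [ENNReal.ofReal_div_of_pos hA', ENNReal.ofReal_natCast, ENNReal.ofReal_natCast]
    _ ≤ ENNReal.ofReal (colNum X δ A / #A + colNum X δ {1} * (#((T * A) \ A) / #A)) := by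
      rw [mul_div_assoc', ← add_div]
      gcongr
      exact (hX.isInvariantSubadditive_colNum h).mul_le_add T A

lemma limsup_widim_div_card_le_liminf_covDim_div_card (hX : IsSubshift K X) (hα : Summable α)
    (hε : 0 < ε) :
    limsup (fun A : Finset G =>
        ((widim X (fun x y : X => rhoMetricF α A x.1 y.1) ε : ℕ∞) : ℝ≥0∞) / (#A : ℝ≥0∞))
        (folnerFilter G) ≤
      liminf (fun A : Finset G =>
        ((covDim ↥(projTo (A : Set G) '' X) : ℕ∞) : ℝ≥0∞) / (#A : ℝ≥0∞)) (folnerFilter G) := by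
  obtain ⟨T, δ, hδ, hT⟩ := exists_forall_dist_lt_imp_rhoMetric_lt (K := K) hα hε
  by_cases hdim : ∃ A : Finset G, A.Nonempty ∧ ∃ m, DimLE ↥(projTo (A : Set G) '' X) m
  · obtain ⟨B, hB, m, hm⟩ := hdim
    have h := hX.exists_coloredDimLE_closeOn hB
      (coloredDimLE_closeOn_of_dimLE hX.1.isCompact hδ hm)
    obtain ⟨L, hL⟩ := (hX.isInvariantSubadditive_colNum h).exists_tendsto_div_card
    exact (limsup_widim_div_card_le_ofReal hX h hT hL).trans
      (ofReal_le_liminf_covDim_div_card hX.1.isCompact hδ hL)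
  · push Not at hdim
    have htop : ∀ᶠ A : Finset G in folnerFilter G,
        ((covDim ↥(projTo (A : Set G) '' X) : ℕ∞) : ℝ≥0∞) / (#A : ℝ≥0∞) = ⊤ :=
      eventually_nonempty_folnerFilter.mono fun A hA => by
        simp [covDim_eq_top_iff.2 (hdim A hA), ENNReal.top_div]
    simp [liminf_congr htop]

end Subshift

theorem mdim_subshift_le_liminf_dim_proj_general {G : Type*} [Group G] {K : Type*}
    [PseudoMetricSpace K] [CompactSpace K] {X : Set (G → K)} (hX : IsSubshift K X) {α : G → ℝ}
    (hα : Summable α) {F F' : ℕ → Set G} (hF : IsFolnerSeq F) (hF' : IsFolnerSeq F') :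
    mdimSubshift α X F ≤
      liminf (fun n => ((covDim ↥(projTo (F' n) '' X) : ℕ∞) : ℝ≥0∞) / ((F' n).ncard : ℝ≥0∞))
        atTop := by
  classical
  lift F to ℕ → Finset G using fun n => (hF.1 n).1
  lift F' to ℕ → Finset G using fun n => (hF'.1 n).1
  have hΦ := hF.tendsto_folnerFilter
  have hΦ' := hF'.tendsto_folnerFilter
  have := hΦ.neBot
  simp only [mdimSubshift, ncard_coe_finset]
  exact iSup_le fun ⟨ε, hε⟩ => (limsup_le_limsup_of_le hΦ).trans <|
    (limsup_widim_div_card_le_liminf_covDim_div_card hX hα hε).trans (liminf_le_liminf_of_le hΦ')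

/-- **Proposition.** For a subshift `X` of `K^G` with `K` a finite dimensional compact metric
space, `mdim(X,σ) ≤ liminf_n dim(π_{F_n}(X)) / |F_n|` for any Følner sequence `{F_n}` of `G`. -/
theorem mdim_subshift_le_liminf_dim_proj (G : Type*) [Group G] [Countable G] [Infinite G]
    (hG : AmenableGroup G) (K : Type*) [MetricSpace K] [CompactSpace K]
    (hK : covDim K ≠ ⊤) (X : Set (G → K)) (hX : IsSubshift K X)
    (α : G → ℝ) (hα : IsGoodWeight α) (F : ℕ → Set G) (hF : IsFolnerSeq F) :
    mdimSubshift α X F ≤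
      Filter.liminf
        (fun n => ((covDim ↥(projTo (F n) '' X) : ℕ∞) : ℝ≥0∞) / ((F n).ncard : ℝ≥0∞))
        atTop :=
  mdim_subshift_le_liminf_dim_proj_general hX hα.2.2 hF hF
end
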